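/- arXiv:1906.05598 — 3 statements merged into one kernel-verified Lean document; each statement's English description precedes it below -/
import Mathlib

section
/- Let P be a set of 2n points in regular wheel configuration, n ≥ 2, and let T_1, ..., T_n be a partition of the edges of the complete geometric graph on P into plane spanning trees. Then there is a unique tree T among T_1, ..., T_n such that: (i) T has exactly one boundary edge and exactly n radial edges, which go to consecutive circle points; and (ii) every other tree T_i ≠ T has exactly two boundary edges and exactly one radial edge. -/
open scoped Real

namespace WheelCfg

/-- Vertex type of the wheel on `2n` points: `none` is the center,
`some i` is the `i`-th of the `2n-1` regularly spaced circle points. -/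
abbrev WV (n : ℕ) := Option (Fin (2*n-1))

/-- Positions of the points of a regular wheel configuration with center `c`,
radius `R` and initial angle `θ`. -/
noncomputable def wpos (n : ℕ) (c : ℝ × ℝ) (R θ : ℝ) : WV n → ℝ × ℝ
  | none => c
  | some i => (c.1 + R * Real.cos (θ + 2*π*i.val/(2*n-1)),
               c.2 + R * Real.sin (θ + 2*π*i.val/(2*n-1)))

/-- A radial edge: one endpoint is the center. -/
def Radial {n : ℕ} : WV n → WV n → Prop
  | none, _ => True
  | _, none => True
  | some _, some _ => False

/-- A boundary edge: joins two cyclically consecutive circle points. -/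
def Boundary {n : ℕ} : WV n → WV n → Prop
  | some i, some j => (i.val + 1) % (2*n-1) = j.val ∨ (j.val + 1) % (2*n-1) = i.val
  | _, _ => False

/-- Non-crossing: distinct edges have disjoint open segments. -/
def NonCrossing {n : ℕ} (pos : WV n → ℝ × ℝ) (T : SimpleGraph (WV n)) : Prop :=
  ∀ a b c d : WV n, T.Adj a b → T.Adj c d → s(a,b) ≠ s(c,d) →
    Disjoint (openSegment ℝ (pos a) (pos b)) (openSegment ℝ (pos c) (pos d))

/-- A plane spanning tree of the wheel configuration. -/
def PlaneSpanningTree {n : ℕ} (pos : WV n → ℝ × ℝ) (T : SimpleGraph (WV n)) : Prop :=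
  T.IsTree ∧ NonCrossing pos T

/-- A partition of the edge set of the complete geometric graph into `n` graphs. -/
def IsPartition {n : ℕ} (T : Fin n → SimpleGraph (WV n)) : Prop :=
  ∀ a b : WV n, a ≠ b → ∃! i : Fin n, (T i).Adj a b

/-- The cyclic successor of a circle point. -/
def nxt {m : ℕ} (k : Fin m) : Fin m := ⟨(k.val + 1) % m, Nat.mod_lt _ k.pos⟩

/-- The number of boundary edges of `T`. -/
noncomputable def boundaryCount {n : ℕ} (T : SimpleGraph (WV n)) : ℕ :=
  Set.ncard {k : Fin (2*n-1) | T.Adj (some k) (some (nxt k))}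

/-- The number of radial edges of `T`. -/
noncomputable def radialCount {n : ℕ} (T : SimpleGraph (WV n)) : ℕ :=
  Set.ncard {k : Fin (2*n-1) | T.Adj none (some k)}

/-- The circle point with index `k` (mod `2n-1`). -/
def cir (n : ℕ) (h : 0 < 2*n-1) (k : ℕ) : WV n := some ⟨k % (2*n-1), Nat.mod_lt _ h⟩

/-- Signed side of point `p` with respect to the oriented line through `u`, `v`. -/
def sideVal (u v p : ℝ × ℝ) : ℝ :=
  (v.1 - u.1) * (p.2 - u.2) - (v.2 - u.2) * (p.1 - u.1)

end WheelCfg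

namespace WheelCfg

/-- Opposite sides imply that the open segments intersect. -/
lemma seg_cross (a b c d : ℝ × ℝ) (h1 : sideVal a b c < 0) (h2 : 0 < sideVal a b d)
    (h3 : 0 < sideVal c d a) (h4 : sideVal c d b < 0) :
    ¬ Disjoint (openSegment ℝ a b) (openSegment ℝ c d) := by
  rw [Set.not_disjoint_iff]
  have hD : sideVal a b d - sideVal a b c = sideVal c d a - sideVal c d b := by
    unfold sideVal; ring
  have hD0 : 0 < sideVal c d a - sideVal c d b := by linarith
  have hD0' : sideVal c d a - sideVal c d b ≠ 0 := hD0.ne'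
  refine ⟨(-sideVal c d b / (sideVal c d a - sideVal c d b)) • a
    + (sideVal c d a / (sideVal c d a - sideVal c d b)) • b,
    ⟨_, _, div_pos (by linarith) hD0, div_pos h3 hD0, by field_simp; ring, rfl⟩,
    ⟨sideVal a b d / (sideVal c d a - sideVal c d b),
     -sideVal a b c / (sideVal c d a - sideVal c d b),
     div_pos h2 hD0, div_pos (by linarith) hD0, ?_, ?_⟩⟩
  · rw [← add_div, ← sub_eq_add_neg, hD, div_self hD0']
  · ext
    · simp only [Prod.fst_add, Prod.smul_fst, smul_eq_mul]
      field_simp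
      unfold sideVal; ring
    · simp only [Prod.snd_add, Prod.smul_snd, smul_eq_mul]
      field_simp
      unfold sideVal; ring

/-- The circle point at angle `φ`. -/
noncomputable def pt (c : ℝ × ℝ) (R φ : ℝ) : ℝ × ℝ := (c.1 + R * Real.cos φ, c.2 + R * Real.sin φ)

lemma side_pt (c : ℝ × ℝ) (R x y z : ℝ) : sideVal (pt c R x) (pt c R y) (pt c R z) =
    4 * R^2 * (Real.sin ((y-x)/2) * Real.sin ((z-y)/2) * Real.sin ((z-x)/2)) := by
  have e : Real.sin ((z-y)/2) = Real.sin ((z+x)/2 - (y+x)/2) := by congr 1; ring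
  rw [e, Real.sin_sub]
  have h1 := Real.cos_sub_cos y x
  have h2 := Real.sin_sub_sin y x
  have h3 := Real.cos_sub_cos z x
  have h4 := Real.sin_sub_sin z x
  have : sideVal (pt c R x) (pt c R y) (pt c R z) =
    R^2 * ((Real.cos y - Real.cos x) * (Real.sin z - Real.sin x)
     - (Real.sin y - Real.sin x) * (Real.cos z - Real.cos x)) := by
    simp only [sideVal, pt]; ring
  rw [this, h1, h2, h3, h4]; ring

lemma cross_chords (c : ℝ × ℝ) (R u a v b : ℝ) (hR : 0 < R) (h1 : u < a) (h2 : a < v) (h3 : v < b)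
    (h4 : b < u + 2 * π) :
    ¬ Disjoint (openSegment ℝ (pt c R u) (pt c R v)) (openSegment ℝ (pt c R a) (pt c R b)) := by
  have pos : ∀ x y : ℝ, x < y → y < x + 2 * π → 0 < Real.sin ((y - x)/2) := fun x y h h' =>
    Real.sin_pos_of_pos_of_lt_pi (by linarith) (by linarith)
  have neg : ∀ x y : ℝ, x < y → y < x + 2 * π → Real.sin ((x - y)/2) < 0 := fun x y h h' =>
    Real.sin_neg_of_neg_of_neg_pi_lt (by linarith) (by linarith)
  have hR2 : 0 < 4 * R^2 := by positivity
  apply seg_cross <;> rw [side_pt]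
  · exact mul_neg_of_pos_of_neg hR2 (mul_neg_of_neg_of_pos (mul_neg_of_pos_of_neg
      (pos _ _ (by linarith) (by linarith)) (neg _ _ (by linarith) (by linarith)))
      (pos _ _ (by linarith) (by linarith)))
  · exact mul_pos hR2 (mul_pos (mul_pos
      (pos _ _ (by linarith) (by linarith)) (pos _ _ (by linarith) (by linarith)))
      (pos _ _ (by linarith) (by linarith)))
  · exact mul_pos hR2 (mul_pos_of_neg_of_neg (mul_neg_of_pos_of_neg
      (pos _ _ (by linarith) (by linarith)) (neg _ _ (by linarith) (by linarith)))
      (neg _ _ (by linarith) (by linarith)))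
  · exact mul_neg_of_pos_of_neg hR2 (mul_neg_of_neg_of_pos (mul_neg_of_pos_of_neg
      (pos _ _ (by linarith) (by linarith)) (neg _ _ (by linarith) (by linarith)))
      (pos _ _ (by linarith) (by linarith)))

lemma cross_radial (c : ℝ × ℝ) (R u a v : ℝ) (hR : 0 < R) (h1 : u < a) (h2 : a < v)
    (h4 : v < u + π) :
    ¬ Disjoint (openSegment ℝ (pt c R u) (pt c R v)) (openSegment ℝ (pt c R a) c) := by
  have pos : ∀ x y : ℝ, x < y → y < x + π → 0 < Real.sin (y - x) := fun x y h h' =>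
    Real.sin_pos_of_pos_of_lt_pi (by linarith) (by linarith)
  have hR2 : 0 < R^2 := by positivity
  apply seg_cross
  · rw [side_pt]
    exact mul_neg_of_pos_of_neg (by positivity) (mul_neg_of_neg_of_pos (mul_neg_of_pos_of_neg
      (Real.sin_pos_of_pos_of_lt_pi (by linarith) (by linarith))
      (Real.sin_neg_of_neg_of_neg_pi_lt (by linarith) (by linarith)))
      (Real.sin_pos_of_pos_of_lt_pi (by linarith) (by linarith)))
  · have : sideVal (pt c R u) (pt c R v) c = R^2 * Real.sin (v - u) := by
      rw [Real.sin_sub]; simp only [sideVal, pt]; ring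
    rw [this]; exact mul_pos hR2 (pos _ _ (by linarith) (by linarith))
  · have : sideVal (pt c R a) c (pt c R u) = R^2 * Real.sin (a - u) := by
      rw [Real.sin_sub]; simp only [sideVal, pt]; ring
    rw [this]; exact mul_pos hR2 (pos _ _ (by linarith) (by linarith))
  · have : sideVal (pt c R a) c (pt c R v) = - (R^2 * Real.sin (v - a)) := by
      rw [Real.sin_sub]; simp only [sideVal, pt]; ring
    rw [this]; exact neg_neg_of_pos (mul_pos hR2 (pos _ _ (by linarith) (by linarith)))

/-- Residue of an integer as an index of a circle point. -/
def q (n : ℕ) (hn : 2 ≤ n) (k : ℤ) : Fin (2*n-1) :=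
  ⟨(k % (2*n-1 : ℤ)).toNat, by
    have h1 := Int.emod_nonneg k (show (2*n-1 : ℤ) ≠ 0 by omega)
    have h2 := Int.emod_lt_of_pos k (show 0 < (2*n-1 : ℤ) by omega)
    omega⟩

lemma q_val (n : ℕ) (hn : 2 ≤ n) (k : ℤ) : ((q n hn k).val : ℤ) = k % (2*n-1 : ℤ) :=
  Int.toNat_of_nonneg (Int.emod_nonneg k (show (2*n-1 : ℤ) ≠ 0 by omega))

lemma q_eq (n : ℕ) (hn : 2 ≤ n) (j k : ℤ) :
    q n hn j = q n hn k ↔ ∃ t : ℤ, k = j + (2*n-1 : ℤ) * t := by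
  rw [Fin.ext_iff, ← Int.natCast_inj, q_val, q_val, eq_comm, Int.emod_eq_emod_iff_emod_sub_eq_zero,
    ← Int.dvd_iff_emod_eq_zero]
  constructor
  · rintro ⟨t, ht⟩; exact ⟨t, by linarith⟩
  · rintro ⟨t, ht⟩; exact ⟨t, by linarith⟩

lemma q_ne (n : ℕ) (hn : 2 ≤ n) (j k : ℤ) (h : j < k) (h' : k < j + (2*n-1)) :
    q n hn j ≠ q n hn k := by
  rw [Ne, q_eq]
  rintro ⟨t, ht⟩
  have h1 : 0 < t := by
    by_contra hh
    have : (2*n-1 : ℤ) * t ≤ 0 := mul_nonpos_of_nonneg_of_nonpos (by omega) (by omega)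
    omega
  have : (2*n-1 : ℤ) * 1 ≤ (2*n-1 : ℤ) * t := mul_le_mul_of_nonneg_left (by omega) (by omega)
  omega

/-- Two integers in a common window with the same residue agree. -/
lemma q_inj (n : ℕ) (hn : 2 ≤ n) (j k : ℤ) (h : j < k + (2*n-1)) (h' : k < j + (2*n-1))
    (e : q n hn j = q n hn k) : j = k := by
  rcases lt_trichotomy j k with h0 | h0 | h0
  · exact absurd e (q_ne n hn j k h0 h')
  · exact h0
  · exact absurd e.symm (q_ne n hn k j h0 h)

lemma q_add (n : ℕ) (hn : 2 ≤ n) (k t : ℤ) : q n hn (k + (2*n-1) * t) = q n hn k :=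
  ((q_eq n hn _ _).2 ⟨t, rfl⟩).symm

lemma q_fin (n : ℕ) (hn : 2 ≤ n) (k : Fin (2*n-1)) : q n hn (k.val : ℤ) = k := by
  have := k.isLt
  rw [Fin.ext_iff, ← Int.natCast_inj, q_val]
  exact Int.emod_eq_of_lt (by omega) (by omega)

/-- Any residue has a representative in any window. -/
lemma q_window (n : ℕ) (hn : 2 ≤ n) (k : Fin (2*n-1)) (a : ℤ) :
    ∃ w, a ≤ w ∧ w < a + (2*n-1) ∧ q n hn w = k := by
  have h1 := Int.emod_nonneg ((k.val : ℤ) - a) (show (2*n-1 : ℤ) ≠ 0 by omega)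
  have h2 := Int.emod_lt_of_pos ((k.val : ℤ) - a) (show 0 < (2*n-1 : ℤ) by omega)
  refine ⟨a + ((k.val : ℤ) - a) % (2*n-1), by omega, by omega, ?_⟩
  have h3 := Int.emod_add_mul_ediv ((k.val : ℤ) - a) (2*n-1)
  rw [← q_add n hn _ (((k.val : ℤ) - a) / (2*n-1))]
  rw [add_assoc, h3, add_sub_cancel, q_fin]

lemma nxt_q (n : ℕ) (hn : 2 ≤ n) (k : ℤ) : nxt (q n hn k) = q n hn (k+1) := by
  rw [Fin.ext_iff, ← Int.natCast_inj, q_val]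
  simp only [nxt]
  push_cast
  rw [q_val, show ((2*n-1 : ℕ) : ℤ) = 2*n-1 by omega, Int.emod_add_emod]

lemma wpos_q (n : ℕ) (hn : 2 ≤ n) (c : ℝ × ℝ) (R θ : ℝ) (k : ℤ) :
    wpos n c R θ (some (q n hn k)) = pt c R (θ + 2*π*k/(2*n-1)) := by
  have hpos : (0:ℝ) < 2*n-1 := by
    have : (2:ℝ) ≤ n := by exact_mod_cast hn
    linarith
  have h3 := Int.emod_add_mul_ediv k (2*n-1)
  have hv : ((q n hn k).val : ℝ) = k - (2*n-1) * ((k / (2*n-1) : ℤ) : ℝ) := by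
    have : ((q n hn k).val : ℤ) = k - (2*n-1) * (k / (2*n-1)) := by rw [q_val]; linarith
    exact_mod_cast this
  have ha : θ + 2*π*((q n hn k).val : ℝ)/(2*n-1) =
      θ + 2*π*k/(2*n-1) - ((k / (2*n-1) : ℤ) : ℝ) * (2*π) := by
    rw [hv]; field_simp; ring
  simp only [wpos, pt]
  rw [ha, Real.cos_sub_int_mul_two_pi, Real.sin_sub_int_mul_two_pi]

lemma no_cross {n : ℕ} (hn : 2 ≤ n) {c : ℝ × ℝ} {R θ : ℝ} (hR : 0 < R) {T : SimpleGraph (WV n)}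
    (hT : PlaneSpanningTree (wpos n c R θ) T)
    (u a v b : ℤ) (h1 : u < a) (h2 : a < v) (h3 : v < b) (h4 : b < u + (2*n-1))
    (e1 : T.Adj (some (q n hn u)) (some (q n hn v)))
    (e2 : T.Adj (some (q n hn a)) (some (q n hn b))) : False := by
  have hne : s((some (q n hn u) : WV n), some (q n hn v)) ≠ s(some (q n hn a), some (q n hn b)) := by
    intro h
    have hu := q_ne n hn u a h1 (by omega)
    have hv := q_ne n hn u b (by omega) (by omega)
    simp only [Sym2.eq_iff, Option.some.injEq] at h
    tauto
  have := hT.2 _ _ _ _ e1 e2 hne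
  rw [wpos_q, wpos_q, wpos_q, wpos_q] at this
  have hpos : (0:ℝ) < 2*n-1 := by
    have : (2:ℝ) ≤ n := by exact_mod_cast hn
    linarith
  have mono : ∀ x y : ℤ, x < y → θ + 2*π*x/(2*n-1) < θ + 2*π*y/(2*n-1) := by
    intro x y h
    have : (x:ℝ) < y := by exact_mod_cast h
    have := Real.pi_pos
    gcongr
  refine cross_chords c R _ _ _ _ hR (mono _ _ h1) (mono _ _ h2) (mono _ _ h3) ?_ this
  have h5 := mono _ _ h4
  push_cast at h5
  have : θ + 2*π*(u + (2*n-1))/(2*n-1) = θ + 2*π*u/(2*n-1) + 2*π := by field_simp; ring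
  linarith

lemma no_cross_radial {n : ℕ} (hn : 2 ≤ n) {c : ℝ × ℝ} {R θ : ℝ} (hR : 0 < R) {T : SimpleGraph (WV n)}
    (hT : PlaneSpanningTree (wpos n c R θ) T)
    (u a v : ℤ) (h1 : u < a) (h2 : a < v) (h4 : v ≤ u + (n-1))
    (e1 : T.Adj (some (q n hn u)) (some (q n hn v)))
    (e2 : T.Adj (some (q n hn a)) none) : False := by
  have hne : s((some (q n hn u) : WV n), some (q n hn v)) ≠ s(some (q n hn a), none) := by
    intro h
    simp at h
  have := hT.2 _ _ _ _ e1 e2 hne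
  rw [wpos_q, wpos_q, wpos_q] at this
  have hpos : (0:ℝ) < 2*n-1 := by
    have : (2:ℝ) ≤ n := by exact_mod_cast hn
    linarith
  have hpi := Real.pi_pos
  have mono : ∀ x y : ℝ, x < y → θ + 2*π*x/(2*n-1) < θ + 2*π*y/(2*n-1) := by
    intro x y h
    gcongr
  refine cross_radial c R _ _ _ hR (mono _ _ (by exact_mod_cast h1)) (mono _ _ (by exact_mod_cast h2))
    ?_ this
  have h6 : (v:ℝ) ≤ u + (n - 1) := by exact_mod_cast h4
  have h5 := mono v (u + (2*n-1)/2) (by linarith)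
  have : θ + 2*π*(u + (2*n-1)/2)/(2*n-1) = θ + 2*π*u/(2*n-1) + π := by field_simp; ring
  linarith

lemma exists_nbr {n : ℕ} {c : ℝ × ℝ} {R θ : ℝ} {T : SimpleGraph (WV n)}
    (hT : PlaneSpanningTree (wpos n c R θ) T) (v : WV n) (hn : 2 ≤ n) : ∃ w, T.Adj v w := by
  obtain ⟨w, hw⟩ : ∃ w : WV n, v ≠ w := by
    cases v with
    | none => exact ⟨some (q n hn 0), by simp⟩
    | some k => exact ⟨none, by simp⟩
  obtain ⟨p⟩ := hT.1.connected.preconnected v w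
  cases p with
  | nil => exact absurd rfl hw
  | cons h _ => exact ⟨_, h⟩

lemma short_chord {n : ℕ} (hn : 2 ≤ n) {c : ℝ × ℝ} {R θ : ℝ} (hR : 0 < R) {T : SimpleGraph (WV n)}
    (hT : PlaneSpanningTree (wpos n c R θ) T)
    (d : ℕ) : ∀ u v : ℤ, u < v → v ≤ u + d → v ≤ u + (n-1) →
    T.Adj (some (q n hn u)) (some (q n hn v)) →
    ∃ k, u ≤ k ∧ k < v ∧ T.Adj (some (q n hn k)) (some (q n hn (k+1))) := by
  induction d with
  | zero => intro u v h1 h2; exfalso; push_cast at h2; omega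
  | succ d ih =>
    intro u v h1 h2 h3 e
    rcases eq_or_ne v (u+1) with rfl | hv
    · exact ⟨u, le_rfl, h1, e⟩
    obtain ⟨y, hy⟩ := exists_nbr hT (some (q n hn (u+1))) hn
    cases y with
    | none => exact (no_cross_radial hn hR hT u (u+1) v (by omega) (by omega) h3 e hy).elim
    | some j =>
      obtain ⟨w, w1, w2, rfl⟩ := q_window n hn j (u+1)
      have w3 : w ≠ u + 1 := by rintro rfl; exact hy.ne rfl
      rcases lt_or_ge v w with h | h
      · rcases eq_or_ne w (u + (2*n-1)) with rfl | h'
        · refine ⟨u, le_rfl, h1, ?_⟩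
          have := q_add n hn u 1
          rw [mul_one] at this
          rw [this] at hy
          exact hy.symm
        · exact (no_cross hn hR hT u (u+1) v w (by omega) (by omega) h (by omega) e hy).elim
      · obtain ⟨k, k1, k2, k3⟩ := ih (u+1) w (by omega) (by push_cast at h2; omega) (by omega) hy
        exact ⟨k, by omega, by omega, k3⟩

/-- Every chord has a short side. -/
lemma exists_short {n : ℕ} (hn : 2 ≤ n) {T : SimpleGraph (WV n)} (i j : Fin (2*n-1)) (e : T.Adj (some i) (some j)) :
    ∃ u v : ℤ, u < v ∧ v ≤ u + (n-1) ∧ T.Adj (some (q n hn u)) (some (q n hn v)) ∧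
      (q n hn u = i ∨ q n hn v = i) := by
  obtain ⟨w, w1, w2, rfl⟩ := q_window n hn j i.val
  have hi := q_fin n hn i
  have w3 : w ≠ i.val := by rintro rfl; rw [hi] at e; exact e.ne rfl
  rcases le_or_gt w (i.val + (n-1)) with h | h
  · exact ⟨i.val, w, by omega, h, by rwa [hi], Or.inl hi⟩
  · have h1 := q_add n hn i.val 1
    rw [mul_one, hi] at h1
    exact ⟨w, i.val + (2*n-1), by omega, by omega, by rw [h1]; exact e.symm, Or.inr h1⟩

lemma zero_boundary {n : ℕ} (hn : 2 ≤ n) {c : ℝ × ℝ} {R θ : ℝ} (hR : 0 < R) {T : SimpleGraph (WV n)}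
    (hT : PlaneSpanningTree (wpos n c R θ) T)
    (h : boundaryCount T = 0) (k : Fin (2*n-1)) : T.Adj none (some k) := by
  obtain ⟨y, hy⟩ := exists_nbr hT (some k) hn
  cases y with
  | none => exact hy.symm
  | some j =>
    exfalso
    obtain ⟨u, v, h1, h2, h3, -⟩ := exists_short hn k j hy
    obtain ⟨b, -, -, hb⟩ := short_chord hn hR hT (v-u).toNat u v h1 (by omega) h2 h3
    rw [boundaryCount, Set.ncard_eq_zero] at h
    have : q n hn b ∈ {k : Fin (2*n-1) | T.Adj (some k) (some (nxt k))} := by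
      simpa [nxt_q] using hb
    rw [h] at this
    exact this

lemma key {n : ℕ} (hn : 2 ≤ n) {c : ℝ × ℝ} {R θ : ℝ} (hR : 0 < R) {T : SimpleGraph (WV n)}
    (hT : PlaneSpanningTree (wpos n c R θ) T)
    (h : boundaryCount T ≤ 1) :
    ∃ s : ℤ, ∀ t : ℤ, 0 ≤ t → t < n → T.Adj none (some (q n hn (s + t))) := by
  by_cases hall : ∀ k, T.Adj none (some k)
  · exact ⟨0, fun t _ _ => hall _⟩
  push Not at hall
  obtain ⟨k0, hk0⟩ := hall
  have hch : ∀ k j : Fin (2*n-1), T.Adj (some k) (some j) → ∃ b u v : ℤ, u ≤ b ∧ b < v ∧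
      v ≤ u + (n-1) ∧ T.Adj (some (q n hn u)) (some (q n hn v)) ∧
      T.Adj (some (q n hn b)) (some (q n hn (b+1))) ∧ (q n hn u = k ∨ q n hn v = k) := by
    intro k j e
    obtain ⟨u, v, h1, h2, h3, h4⟩ := exists_short hn k j e
    obtain ⟨b, b1, b2, hb⟩ := short_chord hn hR hT (v-u).toNat u v h1 (by omega) h2 h3
    exact ⟨b, u, v, b1, b2, h2, h3, hb, h4⟩
  obtain ⟨y, hy⟩ := exists_nbr hT (some k0) hn
  cases y with
  | none => exact absurd hy.symm hk0
  | some j0 =>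
  obtain ⟨b, u0, v0, hu0, hv0, hl0, he0, hb, -⟩ := hch k0 j0 hy
  have hch' : ∀ k j : Fin (2*n-1), T.Adj (some k) (some j) → ∃ u v : ℤ, u ≤ b ∧ b < v ∧
      v ≤ u + (n-1) ∧ T.Adj (some (q n hn u)) (some (q n hn v)) ∧
      (q n hn u = k ∨ q n hn v = k) := by
    intro k j e
    obtain ⟨b', u, v, h1, h2, h3, h4, h5, h6⟩ := hch k j e
    have hbb : q n hn b' = q n hn b := by
      rw [boundaryCount, Set.ncard_le_one] at h
      exact h _ (by simpa [nxt_q] using h5) _ (by simpa [nxt_q] using hb)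
    obtain ⟨t, ht⟩ := (q_eq n hn _ _).1 hbb
    refine ⟨u + (2*n-1)*t, v + (2*n-1)*t, by omega, by omega, by omega, ?_, ?_⟩
    · rwa [q_add, q_add]
    · rwa [q_add, q_add]
  -- a longest chord
  obtain ⟨u, v, hu, hv, hl, he, hmax⟩ : ∃ u v : ℤ, u ≤ b ∧ b < v ∧ v ≤ u + (n-1) ∧
      T.Adj (some (q n hn u)) (some (q n hn v)) ∧
      ∀ u' v' : ℤ, u' ≤ b → b < v' → v' ≤ u' + (n-1) →
        T.Adj (some (q n hn u')) (some (q n hn v')) → v' - u' ≤ v - u := by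
    obtain ⟨d, ⟨u, v, h1, h2, h3, h4, h5⟩, hd⟩ := Int.exists_greatest_of_bdd
      (P := fun d => ∃ u v : ℤ, u ≤ b ∧ b < v ∧ v ≤ u + (n-1) ∧
        T.Adj (some (q n hn u)) (some (q n hn v)) ∧ v - u = d)
      ⟨n, by rintro z ⟨u, v, h1, h2, h3, h4, h5⟩; omega⟩
      ⟨v0 - u0, u0, v0, hu0, hv0, hl0, he0, rfl⟩
    refine ⟨u, v, h1, h2, h3, h4, fun u' v' a1 a2 a3 a4 => ?_⟩
    rw [h5]
    exact hd _ ⟨u', v', a1, a2, a3, a4, rfl⟩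
  -- outside points have no chords
  have hout : ∀ w : ℤ, v < w → w < u + (2*n-1) → ∀ j, ¬ T.Adj (some (q n hn w)) (some j) := by
    intro w w1 w2 j e
    obtain ⟨u', v', h1, h2, h3, h4, h5⟩ := hch' _ j e
    have h6 := hmax u' v' h1 h2 h3 h4
    rcases h5 with h5 | h5
    · have h7 := q_add n hn w (-1)
      rw [← h7] at h5
      have h8 := q_inj n hn _ _ (by omega) (by omega) h5
      exact no_cross hn hR hT u' u v' v (by omega) (by omega) (by omega) (by omega) h4 he
    · have h8 := q_inj n hn _ _ (by omega) (by omega) h5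
      exact no_cross hn hR hT u u' v v' (by omega) (by omega) (by omega) (by omega) he h4
  have hrad : ∀ w : ℤ, v < w → w < u + (2*n-1) → T.Adj none (some (q n hn w)) := by
    intro w w1 w2
    obtain ⟨y, hy⟩ := exists_nbr hT (some (q n hn w)) hn
    cases y with
    | none => exact hy.symm
    | some j => exact absurd hy (hout w w1 w2 j)
  have huv : T.Adj none (some (q n hn u)) ∨ T.Adj none (some (q n hn v)) := by
    obtain ⟨p⟩ := hT.1.connected.preconnected (some (q n hn u)) none
    obtain ⟨d, -, d1, d2⟩ := p.exists_boundary_dart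
      {x | ∃ k : ℤ, u ≤ k ∧ k ≤ v ∧ x = some (q n hn k)} ⟨u, le_rfl, by omega, rfl⟩
      (by rintro ⟨k, -, -, hk⟩; cases hk)
    obtain ⟨k, k1, k2, hk⟩ := d1
    have hd := d.adj
    rw [hk] at hd
    rcases hsnd : d.snd with _ | j
    · rw [hsnd] at hd
      rcases eq_or_ne k u with rfl | h1
      · exact Or.inl hd.symm
      rcases eq_or_ne k v with rfl | h2
      · exact Or.inr hd.symm
      exact (no_cross_radial hn hR hT u k v (by omega) (by omega) hl he hd).elim
    · rw [hsnd] at hd d2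
      obtain ⟨w, w1, w2, rfl⟩ := q_window n hn j u
      exfalso
      rcases le_or_gt w v with h1 | h1
      · exact d2 ⟨w, w1, h1, rfl⟩
      · exact hout w h1 w2 _ hd.symm
  rcases huv with h1 | h1
  · refine ⟨v+1, fun t t0 t1 => ?_⟩
    rcases eq_or_ne (v + 1 + t) (u + (2*n-1)) with h2 | h2
    · have := q_add n hn u 1
      rw [mul_one] at this
      rwa [h2, this]
    · exact hrad _ (by omega) (by omega)
  · refine ⟨v, fun t t0 t1 => ?_⟩
    rcases eq_or_ne t 0 with rfl | h2
    · simpa using h1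
    · exact hrad _ (by omega) (by omega)

lemma sum_count {m n : ℕ} (P : Fin n → Fin m → Prop) (h : ∀ k, ∃! i, P i k) :
    ∑ i, Set.ncard {k | P i k} = m := by
  classical
  have h1 : ∀ i, Set.ncard {k | P i k} = ∑ k : Fin m, if P i k then 1 else 0 := by
    intro i
    rw [Set.ncard_eq_toFinset_card', Finset.card_eq_sum_ones, Finset.sum_ite]
    simp
  simp_rw [h1]
  rw [Finset.sum_comm]
  have h2 : ∀ k, (∑ i, if P i k then 1 else 0) = 1 := by
    intro k
    obtain ⟨i, hi, hu⟩ := h k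
    rw [Finset.sum_eq_single i]
    · simp [hi]
    · intro j _ hj
      rw [if_neg]
      exact fun hP => hj (hu j hP)
    · simp
  simp [h2]

/-- Minimal values are attained once the total is tight. -/
lemma tight {n : ℕ} (f g : Fin n → ℕ) (h : ∀ i, g i ≤ f i) (hs : ∑ i, f i ≤ ∑ i, g i) (i : Fin n) :
    f i = g i := by
  have h1 : ∑ i, g i = ∑ i, f i := le_antisymm (Finset.sum_le_sum fun i _ => h i) hs
  exact ((Finset.sum_eq_sum_iff_of_le fun i _ => h i).1 h1 i (Finset.mem_univ _)).symm

lemma sum_two {n : ℕ} (i : Fin n) (a b : ℕ) : ∑ j, (if j = i then a else b) = a + (n-1) * b := by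
  rw [Finset.sum_ite]
  simp [Finset.filter_eq', Finset.filter_ne']

end WheelCfg

open WheelCfg in
/-- In any partition of the complete geometric graph on a regular wheel configuration into
`n` plane spanning trees, there is a unique tree having exactly one boundary edge and
exactly `n` radial edges going to consecutive circle points, and every other tree has
exactly two boundary edges and exactly one radial edge. -/
theorem stmt5 (n : ℕ) (hn : 2 ≤ n) (c : ℝ × ℝ) (R θ : ℝ) (hR : 0 < R)
    (T : Fin n → SimpleGraph (WV n)) (hpart : IsPartition T)
    (hplane : ∀ i, PlaneSpanningTree (wpos n c R θ) (T i)) :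
    ∃! i : Fin n,
      boundaryCount (T i) = 1 ∧ radialCount (T i) = n ∧
      (∃ s : ℕ, ∀ k : Fin (2*n-1),
        (T i).Adj none (some k) ↔ ∃ t < n, (s + t) % (2*n-1) = k.val) ∧
      (∀ j : Fin n, j ≠ i → boundaryCount (T j) = 2 ∧ radialCount (T j) = 1) := by
  have hm : 1 < 2*n-1 := by omega
  have hB : ∑ i, boundaryCount (T i) = 2*n-1 := by
    refine sum_count (fun i k => (T i).Adj (some k) (some (nxt k))) fun k => hpart _ _ ?_
    intro h
    rw [Option.some.injEq, ← q_fin n hn k, nxt_q] at h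
    exact q_ne n hn _ _ (by omega) (by omega) h
  have hRad : ∑ i, radialCount (T i) = 2*n-1 :=
    sum_count (fun i k => (T i).Adj none (some k)) fun k => hpart _ _ (by simp)
  have hr1 : ∀ i, 1 ≤ radialCount (T i) := by
    intro i
    obtain ⟨y, hy⟩ := exists_nbr (hplane i) none hn
    cases y with
    | none => exact absurd rfl hy.ne
    | some k =>
      rw [radialCount, Nat.one_le_iff_ne_zero, ← Nat.pos_iff_ne_zero, Set.ncard_pos]
      exact ⟨k, hy⟩
  -- consecutive radial edges
  have hsub : ∀ i, boundaryCount (T i) ≤ 1 → ∃ A : Finset (Fin (2*n-1)), A.card = n ∧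
      (∀ k ∈ A, (T i).Adj none (some k)) ∧
      ∃ s : ℕ, ∀ k : Fin (2*n-1), k ∈ A ↔ ∃ t < n, (s + t) % (2*n-1) = k.val := by
    intro i hi
    obtain ⟨s, hs⟩ := key hn hR (hplane i) hi
    refine ⟨(Finset.range n).image fun t : ℕ => q n hn (s + t), ?_, ?_, (q n hn s).val, ?_⟩
    · rw [Finset.card_image_of_injOn, Finset.card_range]
      intro x hx y hy hxy
      simp only [Finset.coe_range, Set.mem_Iio] at hx hy
      have := q_inj n hn _ _ (by omega) (by omega) hxy
      omega
    · intro k hk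
      obtain ⟨t, ht, rfl⟩ := Finset.mem_image.1 hk
      exact hs t (by omega) (by simpa using ht)
    · intro k
      have hq : ∀ t : ℕ, ((q n hn s).val + t) % (2*n-1) = (q n hn (s + t)).val := by
        intro t
        rw [← Int.natCast_inj, q_val]
        push_cast
        rw [q_val, show ((2*n-1 : ℕ) : ℤ) = 2*n-1 by omega, Int.emod_add_emod]
      simp only [Finset.mem_image, Finset.mem_range, hq, Fin.ext_iff]
  have hrn : ∀ i, boundaryCount (T i) ≤ 1 → n ≤ radialCount (T i) := by
    intro i hi
    obtain ⟨A, hA, hA', -⟩ := hsub i hi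
    refine hA.symm.le.trans ?_
    rw [← Set.ncard_coe_finset, radialCount]
    exact Set.ncard_le_ncard (fun k hk => hA' k (by simpa using hk))
  obtain ⟨i, hi⟩ : ∃ i, boundaryCount (T i) ≤ 1 := by
    by_contra hcon
    push Not at hcon
    have : ∑ i : Fin n, 2 ≤ ∑ i, boundaryCount (T i) := Finset.sum_le_sum fun i _ => hcon i
    simp at this
    omega
  have hrad := tight (fun j => radialCount (T j)) (fun j => if j = i then n else 1)
    (by
      intro j
      by_cases h : j = i
      · subst h; simpa using hrn _ hi
      · simpa [h] using hr1 j)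
    (by rw [hRad, sum_two]; omega)
  have hri : radialCount (T i) = n := by simpa using hrad i
  have hrj : ∀ j, j ≠ i → radialCount (T j) = 1 := fun j hj => by simpa [hj] using hrad j
  have hbi : 1 ≤ boundaryCount (T i) := by
    by_contra hcon
    have h0 := zero_boundary hn hR (hplane i) (by omega)
    have : radialCount (T i) = 2*n-1 := by
      rw [radialCount]; simp [h0]
    omega
  have hbnd := tight (fun j => boundaryCount (T j)) (fun j => if j = i then 1 else 2)
    (by
      intro j
      by_cases h : j = i
      · subst h; simpa using hbi
      · have h1 := hrj j h
        have h2 := hrn j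
        simp only [h, if_false]
        omega)
    (by rw [hB, sum_two]; omega)
  refine ⟨i, ⟨by simpa using hbnd i, hri, ?_, fun j hj => ⟨by simpa [hj] using hbnd j, hrj j hj⟩⟩, ?_⟩
  · obtain ⟨A, hA, hA', s, hs⟩ := hsub i hi
    refine ⟨s, fun k => ?_⟩
    rw [← hs k]
    have : (A : Set (Fin (2*n-1))) = {k | (T i).Adj none (some k)} := by
      apply Set.eq_of_subset_of_ncard_le (fun k hk => hA' k (by simpa using hk))
      rw [Set.ncard_coe_finset, hA]
      exact hri.le
    rw [← Finset.mem_coe, this]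
    rfl
  · rintro j ⟨-, hj, -⟩
    by_contra h
    have := hrj j h
    omega
end

section
/- Let P be a set of 2n points in regular wheel configuration, n ≥ 2, and let T be any w-caterpillar on 2n vertices. Then the edges of the complete geometric graph GW_{2n} on P can be partitioned into n plane spanning trees T_1, ..., T_n such that T_1, ..., T_{n−1} are each isomorphic (as abstract graphs) to T, and T_n is a plane spanning caterpillar with exactly one boundary edge. -/
open scoped Real

namespace GraphDefs

/-- Degree of a vertex, via `Set.ncard` (no decidability assumptions). -/
noncomputable def gdeg {V : Type*} (G : SimpleGraph V) (v : V) : ℕ := (G.neighborSet v).ncard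

/-- A caterpillar: a tree having a path which contains all vertices of degree `≥ 2`
(equivalently, removing all leaves yields a path). -/
def IsCaterpillar {V : Type*} (G : SimpleGraph V) : Prop :=
  G.IsTree ∧ ∃ (u v : V) (p : G.Walk u v), p.IsPath ∧ ∀ w, 2 ≤ gdeg G w → w ∈ p.support

/-- The graph obtained from `T` by deleting the edges of the path `u1 u2 u3 u4`. -/
def delP4 {V : Type*} (T : SimpleGraph V) (u1 u2 u3 u4 : V) : SimpleGraph V :=
  T.deleteEdges {s(u1,u2), s(u2,u3), s(u3,u4)}

/-- Witness for `P_4`-symmetry: in `T` minus the path edges, `u1` and `ua` are isolated,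
the components of `u3` and `ub` are nontrivial, distinct, cover everything else, and there is
a graph isomorphism between them sending `u3` to `ub`. -/
def P4SymWitness {V : Type*} (T : SimpleGraph V) (u1 u2 u3 u4 ua ub : V) : Prop :=
  (∀ w, ¬ (delP4 T u1 u2 u3 u4).Adj u1 w) ∧
  (∀ w, ¬ (delP4 T u1 u2 u3 u4).Adj ua w) ∧
  (∃ w, (delP4 T u1 u2 u3 u4).Adj u3 w) ∧
  (∃ w, (delP4 T u1 u2 u3 u4).Adj ub w) ∧
  (delP4 T u1 u2 u3 u4).connectedComponentMk u3 ≠ (delP4 T u1 u2 u3 u4).connectedComponentMk ub ∧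
  (∀ v : V, v = u1 ∨ v = ua ∨
      v ∈ ((delP4 T u1 u2 u3 u4).connectedComponentMk u3).supp ∨
      v ∈ ((delP4 T u1 u2 u3 u4).connectedComponentMk ub).supp) ∧
  ∃ φ : ((delP4 T u1 u2 u3 u4).induce ((delP4 T u1 u2 u3 u4).connectedComponentMk u3).supp) ≃g
        ((delP4 T u1 u2 u3 u4).induce ((delP4 T u1 u2 u3 u4).connectedComponentMk ub).supp),
    (φ ⟨u3, rfl⟩).1 = ub

/-- A `P_4`-symmetric tree, recording the 4-path: the case `i = 4` (Type-1) uses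
isolated vertices `u1, u4` and components of `u3, u2`; the case `i = 2` (Type-2) uses
isolated vertices `u1, u2` and components of `u3, u4`. -/
def IsP4SymmetricVia {V : Type*} (T : SimpleGraph V) (u1 u2 u3 u4 : V) : Prop :=
  u1 ≠ u2 ∧ u1 ≠ u3 ∧ u1 ≠ u4 ∧ u2 ≠ u3 ∧ u2 ≠ u4 ∧ u3 ≠ u4 ∧
  T.Adj u1 u2 ∧ T.Adj u2 u3 ∧ T.Adj u3 u4 ∧
  (P4SymWitness T u1 u2 u3 u4 u4 u2 ∨ P4SymWitness T u1 u2 u3 u4 u2 u4)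

/-- A `w`-caterpillar: a `P_4`-symmetric tree `T` such that `T` or `T - u1` is a caterpillar. -/
def IsWCaterpillar {V : Type*} (T : SimpleGraph V) : Prop :=
  T.IsTree ∧ ∃ u1 u2 u3 u4 : V, IsP4SymmetricVia T u1 u2 u3 u4 ∧
    (IsCaterpillar T ∨ IsCaterpillar (T.induce {v | v ≠ u1}))

/-- A double star: a tree with two adjacent vertices `v, w` such that every other
vertex is a leaf adjacent to `v` or `w`. -/
def IsDoubleStar {V : Type*} (G : SimpleGraph V) : Prop :=
  G.IsTree ∧ ∃ v w : V, v ≠ w ∧ G.Adj v w ∧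
    ∀ u, u ≠ v → u ≠ w → gdeg G u = 1 ∧ (G.Adj v u ∨ G.Adj w u)

/-- A symmetric tree: an edge `vw` such that the two components of `T - vw` admit a
graph isomorphism mapping `v` to `w`. -/
def IsSymmetricTree {V : Type*} (T : SimpleGraph V) : Prop :=
  T.IsTree ∧ ∃ v w : V, T.Adj v w ∧
    ∃ φ : ((T.deleteEdges {s(v,w)}).induce ((T.deleteEdges {s(v,w)}).connectedComponentMk v).supp) ≃g
          ((T.deleteEdges {s(v,w)}).induce ((T.deleteEdges {s(v,w)}).connectedComponentMk w).supp),
      (φ ⟨v, rfl⟩).1 = w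

/-- `S_2(m, m)`: the double star `S(m,m)` with its central edge subdivided by two
degree-2 vertices: centers `v, w` of degree `m+1`, subdivision path `v c1 c2 w`,
and all other vertices are leaves adjacent to `v` or `w`. -/
def IsS2DoubleStar {V : Type*} (G : SimpleGraph V) (m : ℕ) : Prop :=
  G.IsTree ∧ ∃ v c1 c2 w : V,
    v ≠ c1 ∧ v ≠ c2 ∧ v ≠ w ∧ c1 ≠ c2 ∧ c1 ≠ w ∧ c2 ≠ w ∧
    G.Adj v c1 ∧ G.Adj c1 c2 ∧ G.Adj c2 w ∧
    gdeg G v = m + 1 ∧ gdeg G w = m + 1 ∧ gdeg G c1 = 2 ∧ gdeg G c2 = 2 ∧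
    ∀ u, u ≠ v → u ≠ c1 → u ≠ c2 → u ≠ w → gdeg G u = 1 ∧ (G.Adj v u ∨ G.Adj w u)

end GraphDefs
namespace W8
open WheelCfg GraphDefs

lemma disj_of_lin (A B C : ℝ) (u v p q : ℝ × ℝ)
    (hu : A * u.1 + B * u.2 + C = 0) (hv : A * v.1 + B * v.2 + C = 0)
    (hp : 0 ≤ A * p.1 + B * p.2 + C) (hq : 0 ≤ A * q.1 + B * q.2 + C)
    (hpq : 0 < (A * p.1 + B * p.2 + C) + (A * q.1 + B * q.2 + C)) :
    Disjoint (openSegment ℝ u v) (openSegment ℝ p q) := by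
  rw [Set.disjoint_left]
  rintro z ⟨a, b, ha, hb, hab, rfl⟩ ⟨a', b', ha', hb', hab', h⟩
  have h1 := congrArg Prod.fst h
  have h2 := congrArg Prod.snd h
  simp only [Prod.fst_add, Prod.smul_fst, Prod.snd_add, Prod.smul_snd, smul_eq_mul] at h1 h2
  have e1 : A * (a * u.1 + b * v.1) + B * (a * u.2 + b * v.2) + C = 0 := by
    have : C = (a + b) * C := by rw [hab, one_mul]
    rw [this]
    linear_combination a * hu + b * hv
  have e2 : A * (a' * p.1 + b' * q.1) + B * (a' * p.2 + b' * q.2) + C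
      = a' * (A * p.1 + B * p.2 + C) + b' * (A * q.1 + B * q.2 + C) := by
    linear_combination -C * hab'
  rw [h1, h2, e1] at e2
  rcases hp.lt_or_eq with h | h
  · nlinarith [mul_pos ha' h, mul_nonneg hb'.le hq]
  · rw [← h] at hpq e2
    nlinarith [mul_pos hb' (by linarith : 0 < A * q.1 + B * q.2 + C)]

/-- point on the circle at angle `φ` -/
noncomputable def pt (c : ℝ × ℝ) (R φ : ℝ) : ℝ × ℝ := (c.1 + R * Real.cos φ, c.2 + R * Real.sin φ)

lemma lin_pt (c : ℝ × ℝ) (R α β γ : ℝ) :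
    (-Real.cos ((α+β)/2)) * (pt c R γ).1 + (-Real.sin ((α+β)/2)) * (pt c R γ).2
      + (R * Real.cos ((β-α)/2) + c.1 * Real.cos ((α+β)/2) + c.2 * Real.sin ((α+β)/2))
    = 2 * R * (Real.sin ((γ-α)/2) * Real.sin ((γ-β)/2)) := by
  have h1 : Real.cos ((γ-α)/2 - (γ-β)/2) = _ := Real.cos_sub _ _
  have h2 : Real.cos ((γ-α)/2 + (γ-β)/2) = _ := Real.cos_add _ _
  have h3 : (γ-α)/2 - (γ-β)/2 = (β-α)/2 := by ring
  have h4 : (γ-α)/2 + (γ-β)/2 = γ - (α+β)/2 := by ring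
  rw [h3] at h1
  rw [h4, Real.cos_sub] at h2
  simp only [pt]
  linear_combination R * h1 - R * h2

/-- angle of circle point `k` -/
noncomputable def ang (n : ℕ) (θ : ℝ) (k : ℕ) : ℝ := θ + 2 * π * k / (2 * n - 1)

lemma sin_ang_pos {n : ℕ} (hn : 2 ≤ n) (θ : ℝ) {a k : ℕ} (h : a < k) (hk : k < 2 * n - 1) :
    0 < Real.sin ((ang n θ k - ang n θ a) / 2) := by
  have hm : (0:ℝ) < 2 * n - 1 := by
    have : (2:ℝ) ≤ n := by exact_mod_cast hn
    linarith
  have hk' : (k:ℝ) < 2 * n - 1 := by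
    have : k + 1 < 2 * n := by omega
    have : (k:ℝ) + 1 < 2 * n := by exact_mod_cast this
    linarith
  have ha : (a:ℝ) < k := by exact_mod_cast h
  have ha0 : (0:ℝ) ≤ a := by positivity
  have e : (ang n θ k - ang n θ a) / 2 = π * ((k - a) / (2 * n - 1)) := by
    simp only [ang]; field_simp; ring
  rw [e]
  apply Real.sin_pos_of_pos_of_lt_pi
  · exact mul_pos Real.pi_pos (div_pos (by linarith) hm)
  · have : ((k:ℝ) - a) / (2 * n - 1) < 1 := by
      rw [div_lt_one hm]; linarith
    nlinarith [Real.pi_pos]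

lemma sin_ang_neg {n : ℕ} (hn : 2 ≤ n) (θ : ℝ) {a k : ℕ} (h : k < a) (hk : a < 2 * n - 1) :
    Real.sin ((ang n θ k - ang n θ a) / 2) < 0 := by
  have := sin_ang_pos hn θ h hk
  have e : (ang n θ k - ang n θ a) / 2 = - ((ang n θ a - ang n θ k) / 2) := by ring
  rw [e, Real.sin_neg]; linarith

lemma sin_ang_zero {n : ℕ} (θ : ℝ) (a : ℕ) :
    Real.sin ((ang n θ a - ang n θ a) / 2) = 0 := by simp

/-- the chord product -/
noncomputable def F (n : ℕ) (θ : ℝ) (a b k : ℕ) : ℝ :=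
  Real.sin ((ang n θ k - ang n θ a) / 2) * Real.sin ((ang n θ k - ang n θ b) / 2)

lemma F_pos {n : ℕ} (hn : 2 ≤ n) (θ : ℝ) {a b k : ℕ} (hab : a < b) (hb : b < 2 * n - 1)
    (hk : k < 2 * n - 1) (h : k < a ∨ b < k) : 0 < F n θ a b k := by
  rcases h with h | h
  · exact mul_pos_of_neg_of_neg (sin_ang_neg hn θ h (by omega)) (sin_ang_neg hn θ (by omega) hb)
  · exact mul_pos (sin_ang_pos hn θ (by omega) hk) (sin_ang_pos hn θ h hk)

lemma F_neg {n : ℕ} (hn : 2 ≤ n) (θ : ℝ) {a b k : ℕ} (hb : b < 2 * n - 1)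
    (h : a < k) (h' : k < b) : F n θ a b k < 0 :=
  mul_neg_of_pos_of_neg (sin_ang_pos hn θ h (by omega)) (sin_ang_neg hn θ h' hb)

lemma F_zero {n : ℕ} (θ : ℝ) {a b k : ℕ} (h : k = a ∨ k = b) : F n θ a b k = 0 := by
  rcases h with rfl | rfl <;> simp [F]

lemma chord_chord {n : ℕ} (hn : 2 ≤ n) (c : ℝ × ℝ) {R : ℝ} (hR : 0 < R) (θ : ℝ) {a b p q : ℕ}
    (hab : a < b) (hb : b < 2 * n - 1) (hpq : p < q) (hq : q < 2 * n - 1)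
    (hne : ¬ (a = p ∧ b = q)) (h1 : ¬ (a < p ∧ p < b ∧ b < q)) (h2 : ¬ (p < a ∧ a < q ∧ q < b)) :
    Disjoint (openSegment ℝ (pt c R (ang n θ a)) (pt c R (ang n θ b)))
      (openSegment ℝ (pt c R (ang n θ p)) (pt c R (ang n θ q))) := by
  have key := lin_pt c R (ang n θ a) (ang n θ b)
  set A := (-Real.cos ((ang n θ a+ang n θ b)/2))
  set B := (-Real.sin ((ang n θ a+ang n θ b)/2))
  set C := (R * Real.cos ((ang n θ b-ang n θ a)/2) + c.1 * Real.cos ((ang n θ a+ang n θ b)/2)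
    + c.2 * Real.sin ((ang n θ a+ang n θ b)/2))
  have key' : ∀ k, A * (pt c R (ang n θ k)).1 + B * (pt c R (ang n θ k)).2 + C
      = 2 * R * F n θ a b k := fun k => key _
  have hza : F n θ a b a = 0 := F_zero θ (Or.inl rfl)
  have hzb : F n θ a b b = 0 := F_zero θ (Or.inr rfl)
  by_cases hc : (p ≤ a ∨ b ≤ p) ∧ (q ≤ a ∨ b ≤ q)
  · have nn : ∀ k < 2 * n - 1, (k ≤ a ∨ b ≤ k) → 0 ≤ F n θ a b k := by
      intro k hk h
      by_cases h' : k = a ∨ k = b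
      · exact (F_zero θ h').ge
      · exact (F_pos hn θ hab hb hk (by omega)).le
    have hp0 := nn p (by omega) hc.1
    have hq0 := nn q hq hc.2
    have hs : 0 < F n θ a b p + F n θ a b q := by
      by_cases h' : p < a ∨ b < p
      · have := F_pos hn θ hab hb (by omega) h'
        linarith
      · have := F_pos hn θ hab hb hq (by omega : q < a ∨ b < q)
        linarith
    apply disj_of_lin A B C
    · rw [key', hza]; ring
    · rw [key', hzb]; ring
    · rw [key']; positivity
    · rw [key']; positivity
    · rw [key', key', ← mul_add]; positivity
  · have nn : ∀ k, (a ≤ k ∧ k ≤ b) → F n θ a b k ≤ 0 := by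
      intro k h
      by_cases h' : k = a ∨ k = b
      · exact (F_zero θ h').le
      · exact (F_neg hn θ hb (by omega) (by omega)).le
    have hp0 := nn p (by omega)
    have hq0 := nn q (by omega)
    have hs : F n θ a b p + F n θ a b q < 0 := by
      by_cases h' : a < p ∧ p < b
      · have := F_neg hn θ hb h'.1 h'.2
        linarith
      · have := F_neg hn θ hb (by omega : a < q) (by omega : q < b)
        linarith
    have e : ∀ k, (-A) * (pt c R (ang n θ k)).1 + (-B) * (pt c R (ang n θ k)).2 + (-C)
      = 2 * R * (-F n θ a b k) := fun k => by linear_combination - key' k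
    apply disj_of_lin (-A) (-B) (-C)
    · rw [e, hza]; ring
    · rw [e, hzb]; ring
    · rw [e]; have : 0 ≤ - F n θ a b p := by linarith
      positivity
    · rw [e]; have : 0 ≤ - F n θ a b q := by linarith
      positivity
    · rw [e, e, ← mul_add]; have : 0 < - F n θ a b p + - F n θ a b q := by linarith
      positivity

lemma chord_radial {n : ℕ} (hn : 2 ≤ n) (c : ℝ × ℝ) {R : ℝ} (hR : 0 < R) (θ : ℝ) {a b k : ℕ}
    (hab : a < b) (hb : b < 2 * n - 1) (hd : b ≤ a + (n - 1)) (hk : k < 2 * n - 1)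
    (h : k ≤ a ∨ b ≤ k) :
    Disjoint (openSegment ℝ (pt c R (ang n θ a)) (pt c R (ang n θ b)))
      (openSegment ℝ (pt c R (ang n θ k)) c) := by
  have key := lin_pt c R (ang n θ a) (ang n θ b)
  set A := (-Real.cos ((ang n θ a+ang n θ b)/2)) with hA
  set B := (-Real.sin ((ang n θ a+ang n θ b)/2)) with hB
  set C := (R * Real.cos ((ang n θ b-ang n θ a)/2) + c.1 * Real.cos ((ang n θ a+ang n θ b)/2)
    + c.2 * Real.sin ((ang n θ a+ang n θ b)/2)) with hC
  have key' : ∀ k, A * (pt c R (ang n θ k)).1 + B * (pt c R (ang n θ k)).2 + C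
      = 2 * R * F n θ a b k := fun k => key _
  have hza : F n θ a b a = 0 := F_zero θ (Or.inl rfl)
  have hzb : F n θ a b b = 0 := F_zero θ (Or.inr rfl)
  have hcen : A * c.1 + B * c.2 + C = R * Real.cos ((ang n θ b-ang n θ a)/2) := by
    rw [hA, hB, hC]; ring
  have hcos : 0 < Real.cos ((ang n θ b-ang n θ a)/2) := by
    have h2 : (2:ℝ) ≤ n := by exact_mod_cast hn
    have hm : (0:ℝ) < 2 * n - 1 := by linarith
    have hd' : (b:ℝ) ≤ a + (n - 1) := by
      have : b + 1 ≤ a + n := by omega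
      have : (b:ℝ) + 1 ≤ a + n := by exact_mod_cast this
      linarith
    have hab' : (a:ℝ) < b := by exact_mod_cast hab
    have e : (ang n θ b - ang n θ a) / 2 = π * ((b - a) / (2 * n - 1)) := by
      simp only [ang]; field_simp; ring
    rw [e]
    have h3 : ((b:ℝ) - a) / (2 * n - 1) < 1 / 2 := by
      rw [div_lt_iff₀ hm]; linarith
    have h4 : 0 < ((b:ℝ) - a) / (2 * n - 1) := div_pos (by linarith) hm
    apply Real.cos_pos_of_mem_Ioo
    constructor
    · nlinarith [Real.pi_pos]
    · nlinarith [Real.pi_pos]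
  have hF : 0 ≤ F n θ a b k := by
    by_cases h' : k = a ∨ k = b
    · exact (F_zero θ h').ge
    · exact (F_pos hn θ hab hb hk (by omega)).le
  apply disj_of_lin A B C
  · rw [key', hza]; ring
  · rw [key', hzb]; ring
  · rw [key']; positivity
  · rw [hcen]; positivity
  · rw [key', hcen]; positivity

lemma radial_radial {n : ℕ} (hn : 2 ≤ n) (c : ℝ × ℝ) {R : ℝ} (hR : 0 < R) (θ : ℝ) {a k : ℕ}
    (hak : a ≠ k) (ha : a < 2 * n - 1) (hk : k < 2 * n - 1) :
    Disjoint (openSegment ℝ (pt c R (ang n θ a)) c)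
      (openSegment ℝ (pt c R (ang n θ k)) c) := by
  rw [Set.disjoint_left]
  rintro z ⟨s, s', hs, hs', hss, rfl⟩ ⟨t, t', ht, ht', htt, h⟩
  have h1 := congrArg Prod.fst h
  have h2 := congrArg Prod.snd h
  simp only [Prod.fst_add, Prod.smul_fst, Prod.snd_add, Prod.smul_snd, smul_eq_mul, pt] at h1 h2
  set α := ang n θ a with hα
  set γ := ang n θ k with hγ
  have hs1 : s' = 1 - s := by linarith
  have ht1 : t' = 1 - t := by linarith
  subst hs1 ht1
  have g1 : t * Real.cos γ = s * Real.cos α := by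
    have : R * (t * Real.cos γ - s * Real.cos α) = 0 := by linear_combination h1
    rcases mul_eq_zero.1 this with h | h <;> linarith
  have g2 : t * Real.sin γ = s * Real.sin α := by
    have : R * (t * Real.sin γ - s * Real.sin α) = 0 := by linear_combination h2
    rcases mul_eq_zero.1 this with h | h <;> linarith
  have hts : t = s := by
    have e : t ^ 2 = s ^ 2 := by
      linear_combination (t * Real.cos γ + s * Real.cos α) * g1 +
        (t * Real.sin γ + s * Real.sin α) * g2 - t ^ 2 * Real.sin_sq_add_cos_sq γ
        + s ^ 2 * Real.sin_sq_add_cos_sq α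
    nlinarith
  subst hts
  have c1 : Real.cos γ = Real.cos α := mul_left_cancel₀ ht.ne' g1
  have c2 : Real.sin γ = Real.sin α := mul_left_cancel₀ ht.ne' g2
  have hc : Real.cos (γ - α) = 1 := by
    rw [Real.cos_sub, c1, c2]; linear_combination Real.sin_sq_add_cos_sq α
  have hsn : Real.sin ((γ - α) / 2) ≠ 0 := by
    rcases lt_or_gt_of_ne hak with h | h
    · exact (sin_ang_pos hn θ h hk).ne'
    · exact (sin_ang_neg hn θ h ha).ne
  have e : γ - α = 2 * ((γ - α) / 2) := by ring
  rw [e, Real.cos_two_mul] at hc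
  have := Real.sin_sq_add_cos_sq ((γ - α) / 2)
  have : Real.sin ((γ - α) / 2) ^ 2 = 0 := by linarith
  exact hsn (pow_eq_zero_iff (two_ne_zero) |>.1 this)

/-- label of a vertex after rotating by `s`; the center gets label `2n-1`. -/
def kap (n s : ℕ) : WV n → ℕ
  | none => 2 * n - 1
  | some i => if i.val + s < 2 * n - 1 then i.val + s else i.val + s - (2 * n - 1)

lemma wpos_some {n s : ℕ} (hn : 2 ≤ n) (c : ℝ × ℝ) (R θ : ℝ) (i : Fin (2 * n - 1)) :
    wpos n c R θ (some i) = pt c R (ang n (θ - 2 * π * s / (2 * n - 1)) (kap n s (some i))) := by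
  have h2 : (2:ℝ) ≤ n := by exact_mod_cast hn
  have hm : (2:ℝ) * n - 1 ≠ 0 := by linarith
  simp only [wpos, kap]
  split_ifs with h
  · have : θ + 2 * π * i.val / (2 * n - 1) = ang n (θ - 2 * π * s / (2 * n - 1)) (i.val + s) := by
      simp only [ang]; push_cast; ring
    rw [this]; rfl
  · have : θ + 2 * π * i.val / (2 * n - 1) =
        ang n (θ - 2 * π * s / (2 * n - 1)) (i.val + s - (2 * n - 1)) + 2 * π := by
      simp only [ang]
      rw [Nat.cast_sub (by omega), Nat.cast_sub (by omega)]
      push_cast; field_simp; ring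
    rw [this, Real.cos_add_two_pi, Real.sin_add_two_pi]; rfl

lemma kap_lt {n s : ℕ} (hs : s ≤ 2 * n - 1) (i : Fin (2 * n - 1)) :
    kap n s (some i) < 2 * n - 1 := by
  have := i.2
  simp only [kap]; split_ifs <;> omega

lemma kap_inj {n s : ℕ} (hs : s ≤ 2 * n - 1) : Function.Injective (kap n s) := by
  intro a b h
  rcases a with _ | i <;> rcases b with _ | j
  · rfl
  · have := kap_lt hs j; simp only [kap] at *; omega
  · have := kap_lt hs i; simp only [kap] at *; omega
  · have := i.2; have := j.2
    simp only [kap] at h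
    congr 1; apply Fin.ext
    split_ifs at h <;> omega

lemma kap_range {n s : ℕ} (hn : 2 ≤ n) (hs : s ≤ 2 * n - 1) :
    Set.range (kap n s) = Set.Iio (2 * n) := by
  ext k
  simp only [Set.mem_range, Set.mem_Iio]
  constructor
  · rintro ⟨a, rfl⟩
    rcases a with _ | i
    · simp only [kap]; omega
    · have := kap_lt hs i; omega
  · intro hk
    by_cases h : k = 2 * n - 1
    · exact ⟨none, h.symm⟩
    · by_cases h' : s ≤ k
      · refine ⟨some ⟨k - s, by omega⟩, ?_⟩
        simp only [kap]; split_ifs <;> omega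
      · refine ⟨some ⟨k + (2 * n - 1) - s, by omega⟩, ?_⟩
        simp only [kap]; split_ifs <;> omega

/-- Combinatorial planarity of a labelled graph. -/
structure PlaneNat (n : ℕ) (H : SimpleGraph ℕ) : Prop where
  len : ∀ a b, H.Adj a b → a < b → b < 2 * n - 1 → b ≤ a + (n - 1)
  cross : ∀ a b p q, H.Adj a b → H.Adj p q → a < p → p < b → b < q → ¬ (q < 2 * n - 1)
  rad : ∀ a b k, H.Adj a b → H.Adj k (2 * n - 1) → a < k → k < b → ¬ (b < 2 * n - 1)

lemma nonCrossing_of {n s : ℕ} (hn : 2 ≤ n) (hs : s ≤ 2 * n - 1) (c : ℝ × ℝ) {R : ℝ} (hR : 0 < R)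
    (θ : ℝ) {H : SimpleGraph ℕ} (hH : PlaneNat n H) :
    NonCrossing (wpos n c R θ) (H.comap (kap n s)) := by
  have cc : ∀ i j k l : Fin (2 * n - 1), (H.comap (kap n s)).Adj (some i) (some j) →
      (H.comap (kap n s)).Adj (some k) (some l) → s(some i, some j) ≠ s(some k, some l) →
      kap n s (some i) < kap n s (some j) → kap n s (some k) < kap n s (some l) →
      Disjoint (openSegment ℝ (wpos n c R θ (some i)) (wpos n c R θ (some j)))
        (openSegment ℝ (wpos n c R θ (some k)) (wpos n c R θ (some l))) := by
    intro i j k l h1 h2 hne hij hkl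
    simp only [wpos_some (s := s) hn]
    apply chord_chord hn c hR _ hij (kap_lt hs _) hkl (kap_lt hs _)
    · rintro ⟨e1, e2⟩
      rw [kap_inj hs e1, kap_inj hs e2] at hne
      exact hne rfl
    · rintro ⟨e1, e2, e3⟩
      exact hH.cross _ _ _ _ h1 h2 e1 e2 e3 (kap_lt hs _)
    · rintro ⟨e1, e2, e3⟩
      exact hH.cross _ _ _ _ h2 h1 e1 e2 e3 (kap_lt hs _)
  have cc' : ∀ i j k l : Fin (2 * n - 1), (H.comap (kap n s)).Adj (some i) (some j) →
      (H.comap (kap n s)).Adj (some k) (some l) → s(some i, some j) ≠ s(some k, some l) →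
      Disjoint (openSegment ℝ (wpos n c R θ (some i)) (wpos n c R θ (some j)))
        (openSegment ℝ (wpos n c R θ (some k)) (wpos n c R θ (some l))) := by
    intro i j k l h1 h2 hne
    rcases lt_or_gt_of_ne (show kap n s (some i) ≠ kap n s (some j) from (show H.Adj _ _ from h1).ne) with hij | hij <;>
    rcases lt_or_gt_of_ne (show kap n s (some k) ≠ kap n s (some l) from (show H.Adj _ _ from h2).ne) with hkl | hkl
    · exact cc _ _ _ _ h1 h2 hne hij hkl
    · rw [openSegment_symm ℝ (wpos n c R θ (some k))]
      exact cc _ _ _ _ h1 h2.symm (by rwa [Sym2.eq_swap (a := some l)]) hij hkl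
    · rw [openSegment_symm ℝ (wpos n c R θ (some i))]
      exact cc _ _ _ _ h1.symm h2 (by rwa [Sym2.eq_swap (a := some j)]) hij hkl
    · rw [openSegment_symm ℝ (wpos n c R θ (some k)), openSegment_symm ℝ (wpos n c R θ (some i))]
      exact cc _ _ _ _ h1.symm h2.symm
        (by rwa [Sym2.eq_swap (a := some l), Sym2.eq_swap (a := some j)]) hij hkl
  have cr : ∀ i j k : Fin (2 * n - 1), (H.comap (kap n s)).Adj (some i) (some j) →
      (H.comap (kap n s)).Adj (some k) none →
      Disjoint (openSegment ℝ (wpos n c R θ (some i)) (wpos n c R θ (some j)))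
        (openSegment ℝ (wpos n c R θ (some k)) (wpos n c R θ none)) := by
    have main : ∀ i j k : Fin (2 * n - 1), (H.comap (kap n s)).Adj (some i) (some j) →
      (H.comap (kap n s)).Adj (some k) none → kap n s (some i) < kap n s (some j) →
      Disjoint (openSegment ℝ (wpos n c R θ (some i)) (wpos n c R θ (some j)))
        (openSegment ℝ (wpos n c R θ (some k)) (wpos n c R θ none)) := by
      intro i j k h1 h2 hij
      simp only [wpos_some (s := s) hn]
      apply chord_radial hn c hR _ hij (kap_lt hs _) (hH.len _ _ h1 hij (kap_lt hs _)) (kap_lt hs _)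
      by_contra hcon
      exact hH.rad _ _ (kap n s (some k)) h1 h2 (by omega) (by omega) (kap_lt hs _)
    intro i j k h1 h2
    rcases lt_or_gt_of_ne (show kap n s (some i) ≠ kap n s (some j) from (show H.Adj _ _ from h1).ne) with hij | hij
    · exact main _ _ _ h1 h2 hij
    · rw [openSegment_symm ℝ (wpos n c R θ (some i))]
      exact main _ _ _ h1.symm h2 hij
  have rr : ∀ i k : Fin (2 * n - 1), i ≠ k →
      Disjoint (openSegment ℝ (wpos n c R θ (some i)) (wpos n c R θ none))
        (openSegment ℝ (wpos n c R θ (some k)) (wpos n c R θ none)) := by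
    intro i k hik
    simp only [wpos_some (s := s) hn]
    apply radial_radial hn c hR _ _ (kap_lt hs _) (kap_lt hs _)
    intro h; apply hik; simpa using kap_inj hs h
  intro a b p q h1 h2 hne
  rcases a with _ | i <;> rcases b with _ | j
  · exact absurd rfl h1.ne
  · rw [openSegment_symm ℝ (wpos n c R θ none)]
    rcases p with _ | k <;> rcases q with _ | l
    · exact absurd rfl h2.ne
    · rw [openSegment_symm ℝ (wpos n c R θ none)]
      exact rr _ _ (by rintro rfl; exact hne rfl)
    · exact rr _ _ (by rintro rfl; exact hne Sym2.eq_swap)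
    · exact (cr _ _ _ h2 h1.symm).symm
  · rcases p with _ | k <;> rcases q with _ | l
    · exact absurd rfl h2.ne
    · rw [openSegment_symm ℝ (wpos n c R θ none)]
      exact rr _ _ (by rintro rfl; exact hne Sym2.eq_swap)
    · exact rr _ _ (by rintro rfl; exact hne rfl)
    · exact (cr _ _ _ h2 h1).symm
  · rcases p with _ | k <;> rcases q with _ | l
    · exact absurd rfl h2.ne
    · rw [openSegment_symm ℝ (wpos n c R θ none)]
      exact cr _ _ _ h1 h2.symm
    · exact cr _ _ _ h1 h2
    · exact cc' _ _ _ _ h1 h2 hne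

/-- No vertex has three distinct neighbours that are not leaves. -/
def Loc {V : Type*} (G : SimpleGraph V) : Prop :=
  ∀ v a b c a' b' c', G.Adj v a → G.Adj v b → G.Adj v c → a ≠ b → a ≠ c → b ≠ c →
    G.Adj a a' → G.Adj b b' → G.Adj c c' → a' ≠ v → b' ≠ v → c' ≠ v → False

lemma two_le_gdeg {V : Type*} [Finite V] {G : SimpleGraph V} {v a b : V} (ha : G.Adj v a)
    (hb : G.Adj v b) (hab : a ≠ b) : 2 ≤ gdeg G v := by
  have : ({a, b} : Set V).ncard = 2 := Set.ncard_pair hab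
  rw [← this]
  apply Set.ncard_le_ncard _ (Set.toFinite _)
  rintro x (rfl | rfl)
  · exact ha
  · exact hb

lemma loc_of_caterpillar {V : Type*} [Finite V] {G : SimpleGraph V} (h : IsCaterpillar G) :
    Loc G := by
  classical
  obtain ⟨ht, u, w, p, hp, hdeg⟩ := h
  intro v a b c a' b' c' va vb vc ab ac bc aa bb cc ha hb hc
  have hac := ht.isAcyclic
  have hv : v ∈ p.support := hdeg v (two_le_gdeg va vb ab)
  have key : ∀ x x', G.Adj v x → G.Adj x x' → x' ≠ v →
      x = (p.takeUntil v hv).penultimate ∨ x = (p.dropUntil v hv).snd := by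
    intro x x' h1 h2 h3
    have hx : x ∈ p.support := hdeg x (two_le_gdeg h2 h1.symm h3)
    rw [← SimpleGraph.Walk.take_spec p hv, SimpleGraph.Walk.mem_support_append_iff] at hx
    rcases hx with hx | hx
    · left
      exact hac.eq_penultimate_of_adj_end (hp.takeUntil hv) h1 hx
    · right
      exact hac.eq_snd_of_adj_start (hp.dropUntil hv) h1 hx
  have ka := key a a' va aa ha
  have kb := key b b' vb bb hb
  have kc := key c c' vc cc hc
  grind

/-- End-rooted caterpillars, built by adding leaves at the root or extending the root. -/
inductive ECat {V : Type*} : SimpleGraph V → Set V → V → Prop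
  | single (G : SimpleGraph V) (r : V) (h : ∀ a b, ¬ G.Adj a b) : ECat G {r} r
  | leaf (G G' : SimpleGraph V) (S S' : Set V) (r x : V) (h : ECat G S r) (hx : x ∉ S)
      (hS : S' = insert x S)
      (hG : ∀ a b, G'.Adj a b ↔ G.Adj a b ∨ (a = r ∧ b = x) ∨ (a = x ∧ b = r)) : ECat G' S' r
  | ext (G G' : SimpleGraph V) (S S' : Set V) (r x : V) (h : ECat G S r) (hx : x ∉ S)
      (hS : S' = insert x S)
      (hG : ∀ a b, G'.Adj a b ↔ G.Adj a b ∨ (a = r ∧ b = x) ∨ (a = x ∧ b = r)) : ECat G' S' x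

lemma ECat.root_mem {V : Type*} {G : SimpleGraph V} {S : Set V} {r : V} (h : ECat G S r) :
    r ∈ S := by
  induction h with
  | single G r h => simp
  | leaf G G' S S' r x h hx hS hG ih => subst hS; exact Or.inr ih
  | ext G G' S S' r x h hx hS hG ih => subst hS; exact Or.inl rfl

lemma ECat.adj_mem {V : Type*} {G : SimpleGraph V} {S : Set V} {r : V} (h : ECat G S r) :
    ∀ a b, G.Adj a b → a ∈ S ∧ b ∈ S := by
  induction h with
  | single G r h => intro a b hab; exact absurd hab (h a b)
  | leaf G G' S S' r x h hx hS hG ih =>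
    subst hS; intro a b hab
    have := h.root_mem
    rcases (hG a b).1 hab with h1 | ⟨rfl, rfl⟩ | ⟨rfl, rfl⟩
    · exact ⟨Or.inr (ih _ _ h1).1, Or.inr (ih _ _ h1).2⟩
    · exact ⟨Or.inr this, Or.inl rfl⟩
    · exact ⟨Or.inl rfl, Or.inr this⟩
  | ext G G' S S' r x h hx hS hG ih =>
    subst hS; intro a b hab
    have := h.root_mem
    rcases (hG a b).1 hab with h1 | ⟨rfl, rfl⟩ | ⟨rfl, rfl⟩
    · exact ⟨Or.inr (ih _ _ h1).1, Or.inr (ih _ _ h1).2⟩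
    · exact ⟨Or.inr this, Or.inl rfl⟩
    · exact ⟨Or.inl rfl, Or.inr this⟩

/-- Comapping along an injection. -/
lemma ECat.comap {V W : Type*} {G : SimpleGraph V} {S : Set V} {r : V} (h : ECat G S r)
    (κ : W → V) (hκ : Function.Injective κ) (hS : S ⊆ Set.range κ) :
    ∃ r', κ r' = r ∧ ECat (G.comap κ) (κ ⁻¹' S) r' := by
  induction h with
  | single G r h =>
    obtain ⟨r', rfl⟩ := hS (Set.mem_singleton _)
    refine ⟨r', rfl, ?_⟩
    have : κ ⁻¹' {κ r'} = {r'} := by ext x; simp [hκ.eq_iff]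
    rw [this]
    exact ECat.single _ _ (fun a b => h _ _)
  | leaf G G' S S' r x h hx hS' hG ih =>
    subst hS'
    obtain ⟨r', rfl, h'⟩ := ih (fun y hy => hS (Or.inr hy))
    obtain ⟨x', rfl⟩ := hS (Or.inl rfl)
    refine ⟨r', rfl, ECat.leaf _ _ _ _ r' x' h' hx ?_ ?_⟩
    · ext y; simp [hκ.eq_iff]
    · intro a b
      simp only [SimpleGraph.comap_adj, hG, hκ.eq_iff]
  | ext G G' S S' r x h hx hS' hG ih =>
    subst hS'
    obtain ⟨r', rfl, h'⟩ := ih (fun y hy => hS (Or.inr hy))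
    obtain ⟨x', rfl⟩ := hS (Or.inl rfl)
    refine ⟨x', rfl, ECat.ext _ _ _ _ r' x' h' hx ?_ ?_⟩
    · ext y; simp [hκ.eq_iff]
    · intro a b
      simp only [SimpleGraph.comap_adj, hG, hκ.eq_iff]

/-- The properties of end-rooted caterpillars proved by induction. -/
structure EProp {V : Type*} (G : SimpleGraph V) (S : Set V) (r : V) : Prop where
  acyc : G.IsAcyclic
  reach : ∀ a ∈ S, G.Reachable r a
  path : ∃ (v : V) (p : G.Walk r v), p.IsPath ∧ (∀ w ∈ p.support, w ∈ S) ∧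
    ∀ w a b, G.Adj w a → G.Adj w b → a ≠ b → w ∈ p.support

lemma acyc_add {V : Type*} {G G' : SimpleGraph V} {r x : V} (hG : G.IsAcyclic)
    (hx : ∀ a, ¬ G.Adj x a) (hrx : r ≠ x)
    (h : ∀ a b, G'.Adj a b ↔ G.Adj a b ∨ (a = r ∧ b = x) ∨ (a = x ∧ b = r)) : G'.IsAcyclic := by
  have e : G' = G ⊔ SimpleGraph.edge r x := by
    ext a b
    rw [h, SimpleGraph.sup_adj, SimpleGraph.edge_adj]
    grind
  rw [e]
  apply hG.sup_edge_of_not_reachable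
  rintro ⟨p⟩
  cases p.reverse with
  | nil => exact hrx rfl
  | cons h _ => exact hx _ h

lemma ECat.eprop {V : Type*} {G : SimpleGraph V} {S : Set V} {r : V} (h : ECat G S r) :
    EProp G S r := by
  induction h with
  | single G r h =>
    refine ⟨?_, ?_, r, .nil, by simp, by simp, ?_⟩
    · have : G = ⊥ := by ext a b; simp [h]
      rw [this]; exact SimpleGraph.isAcyclic_bot
    · rintro a rfl; exact SimpleGraph.Reachable.refl _
    · intro w a b h1; exact absurd h1 (h _ _)
  | leaf G G' S S' r x h hx hS hG ih =>
    subst hS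
    obtain ⟨h1, h2, v, p, hp, hpS, hd⟩ := ih
    have hle : G ≤ G' := fun a b hab => (hG a b).2 (Or.inl hab)
    have hxG : ∀ a, ¬ G.Adj x a := fun a ha => hx (h.adj_mem _ _ ha).1
    have hrx : r ≠ x := fun e => hx (e ▸ h.root_mem)
    refine ⟨acyc_add h1 hxG hrx hG, ?_, v, p.mapLe hle, ?_, ?_, ?_⟩
    · rintro a (rfl | ha)
      · exact SimpleGraph.Adj.reachable ((hG _ _).2 (Or.inr (Or.inl ⟨rfl, rfl⟩)))
      · exact (h2 a ha).mono hle
    · exact hp.mapLe hle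
    · intro w hw
      simp only [SimpleGraph.Walk.support_mapLe_eq_support] at hw
      exact Or.inr (hpS w hw)
    · intro w a b ha hb hab
      simp only [SimpleGraph.Walk.support_mapLe_eq_support]
      rw [hG] at ha hb
      by_cases hw : w = r
      · subst hw; exact p.start_mem_support
      · by_cases hwx : w = x
        · subst hwx
          have := hxG a; have := hxG b
          grind
        · exact hd w a b (by grind) (by grind) hab
  | ext G G' S S' r x h hx hS hG ih =>
    subst hS
    obtain ⟨h1, h2, v, p, hp, hpS, hd⟩ := ih
    have hle : G ≤ G' := fun a b hab => (hG a b).2 (Or.inl hab)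
    have hxG : ∀ a, ¬ G.Adj x a := fun a ha => hx (h.adj_mem _ _ ha).1
    have hrx : r ≠ x := fun e => hx (e ▸ h.root_mem)
    have hxr : G'.Adj x r := (hG _ _).2 (Or.inr (Or.inr ⟨rfl, rfl⟩))
    refine ⟨acyc_add h1 hxG hrx hG, ?_, v, .cons hxr (p.mapLe hle), ?_, ?_, ?_⟩
    · rintro a (rfl | ha)
      · exact SimpleGraph.Reachable.refl _
      · exact hxr.reachable.trans ((h2 a ha).mono hle)
    · rw [SimpleGraph.Walk.cons_isPath_iff]
      refine ⟨hp.mapLe hle, ?_⟩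
      rw [SimpleGraph.Walk.support_mapLe_eq_support]
      exact fun hh => hx (hpS x hh)
    · intro w hw
      simp only [SimpleGraph.Walk.support_cons, List.mem_cons,
        SimpleGraph.Walk.support_mapLe_eq_support] at hw
      rcases hw with rfl | hw
      · exact Or.inl rfl
      · exact Or.inr (hpS w hw)
    · intro w a b ha hb hab
      simp only [SimpleGraph.Walk.support_cons, List.mem_cons,
        SimpleGraph.Walk.support_mapLe_eq_support]
      rw [hG] at ha hb
      by_cases hw : w = r
      · subst hw; exact Or.inr p.start_mem_support
      · by_cases hwx : w = x
        · exact Or.inl hwx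
        · exact Or.inr (hd w a b (by grind) (by grind) hab)

lemma ECat.isCaterpillar {V : Type*} {G : SimpleGraph V} {r : V} (h : ECat G Set.univ r) :
    IsCaterpillar G := by
  obtain ⟨h1, h2, v, p, hp, -, hd⟩ := h.eprop
  have hc : G.Connected := by
    have : Nonempty V := ⟨r⟩
    exact ⟨fun a b => (h2 a trivial).symm.trans (h2 b trivial)⟩
  refine ⟨⟨hc, h1⟩, r, v, p, hp, fun w hw => ?_⟩
  unfold gdeg at hw
  have hfin : (G.neighborSet w).Finite := Set.finite_of_ncard_pos (by omega)
  obtain ⟨a, ha, b, hb, hab⟩ := (Set.one_lt_ncard hfin).1 (by omega : 1 < (G.neighborSet w).ncard)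
  exact hd w a b ha hb hab

/-- Restriction of a graph to a set of vertices (same vertex type). -/
def res {V : Type*} (G : SimpleGraph V) (S : Set V) : SimpleGraph V where
  Adj a b := G.Adj a b ∧ a ∈ S ∧ b ∈ S
  symm := ⟨fun _ _ h => ⟨h.1.symm, h.2.2, h.2.1⟩⟩
  loopless := ⟨fun _ h => h.1.ne rfl⟩

/-- From the local condition to the inductive structure. -/
lemma ecat_of_loc {V : Type*} {G : SimpleGraph V} (hL : Loc G) (k : ℕ) :
    ∀ (S : Set V) (r p p' : V), S.Finite → S.ncard = k → r ∈ S → p ∉ S → G.Adj r p → G.Adj p p' →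
      p' ≠ r → (∀ a ∈ S, Relation.ReflTransGen (fun a b => G.Adj a b ∧ b ∈ S) r a) →
      ECat (res G S) S r := by
  induction k with
  | zero =>
    intro S r p p' hf hk hr
    rw [Set.ncard_eq_zero hf] at hk
    subst hk; exact absurd hr (by simp)
  | succ k ih =>
    intro S r p p' hf hk hr hp hrp hpp hpr hconn
    by_cases hS : ∃ y ∈ S, G.Adj r y
    · obtain ⟨y, hy, hry⟩ := hS
      by_cases h2 : ∃ z ∈ S, G.Adj r z ∧ z ≠ y
      · obtain ⟨z, hz, hrz, hzy⟩ := h2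
        -- one of y, z is a leaf of G
        obtain ⟨x, hx, hrx, hleaf⟩ : ∃ x ∈ S, G.Adj r x ∧ ∀ w, G.Adj x w → w = r := by
          by_contra hcon
          push Not at hcon
          obtain ⟨y', hy', hy'r⟩ := hcon y hy hry
          obtain ⟨z', hz', hz'r⟩ := hcon z hz hrz
          exact hL r p y z p' y' z' hrp hry hrz (by rintro rfl; exact hp hy)
            (by rintro rfl; exact hp hz) hzy.symm hpp hy' hz' hpr hy'r hz'r
        have hxr : x ≠ r := hrx.ne'
        refine ECat.leaf (res G (S \ {x})) _ (S \ {x}) S r x ?_ (by simp) ?_ ?_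
        · refine ih (S \ {x}) r p p' (hf.subset Set.sdiff_subset) ?_ ⟨hr, by simpa using hxr.symm⟩
            (fun h => hp h.1) hrp hpp hpr ?_
          · rw [Set.ncard_sdiff_singleton_of_mem hx, hk]; rfl
          · rintro a ⟨ha, hax⟩
            have := hconn a ha
            clear ha
            replace hax : a ≠ x := by simpa using hax
            induction this with
            | refl => exact Relation.ReflTransGen.refl
            | tail hab hbc ih' =>
              rename_i b c
              by_cases hb : b = x
              · subst hb
                have := hleaf _ hbc.1
                subst this; exact Relation.ReflTransGen.refl
              · exact (ih' hb).tail ⟨hbc.1, hbc.2, by simpa using hax⟩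
        · ext w; simp only [Set.mem_insert_iff, Set.mem_sdiff, Set.mem_singleton_iff]
          grind
        · intro a b
          simp only [res, Set.mem_sdiff, Set.mem_singleton_iff]
          have h3 := hrx.symm
          constructor
          · rintro ⟨h4, h5, h6⟩
            by_cases ha : a = x
            · subst ha; exact Or.inr (Or.inr ⟨rfl, hleaf _ h4⟩)
            · by_cases hb : b = x
              · subst hb; exact Or.inr (Or.inl ⟨hleaf _ h4.symm, rfl⟩)
              · exact Or.inl ⟨h4, ⟨h5, ha⟩, h6, hb⟩
          · rintro (⟨h4, h5, h6⟩ | ⟨rfl, rfl⟩ | ⟨rfl, rfl⟩)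
            · exact ⟨h4, h5.1, h6.1⟩
            · exact ⟨hrx, hr, hx⟩
            · exact ⟨h3, hx, hr⟩
      · push Not at h2
        have hyr : y ≠ r := hry.ne'
        refine ECat.ext (res G (S \ {r})) _ (S \ {r}) S y r ?_ (by simp) ?_ ?_
        · refine ih (S \ {r}) y r p (hf.subset Set.sdiff_subset) ?_ ⟨hy, by simpa using hyr⟩
            (by simp) hry.symm hrp (by rintro rfl; exact hp hy) ?_
          · rw [Set.ncard_sdiff_singleton_of_mem hr, hk]; rfl
          · rintro a ⟨ha, hax⟩
            have := hconn a ha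
            clear ha
            replace hax : a ≠ r := by simpa using hax
            induction this with
            | refl => exact absurd rfl hax
            | tail hab hbc ih' =>
              rename_i b c
              by_cases hb : b = r
              · subst hb
                have := h2 _ hbc.2 hbc.1
                subst this; exact Relation.ReflTransGen.refl
              · exact (ih' hb).tail ⟨hbc.1, hbc.2, by simpa using hax⟩
        · ext w; simp only [Set.mem_insert_iff, Set.mem_sdiff, Set.mem_singleton_iff]
          grind
        · intro a b
          simp only [res, Set.mem_sdiff, Set.mem_singleton_iff]
          have h3 := hry.symm
          constructor
          · rintro ⟨h4, h5, h6⟩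
            by_cases ha : a = r
            · subst ha; exact Or.inr (Or.inr ⟨rfl, h2 _ h6 h4⟩)
            · by_cases hb : b = r
              · subst hb; exact Or.inr (Or.inl ⟨h2 _ h5 h4.symm, rfl⟩)
              · exact Or.inl ⟨h4, ⟨h5, ha⟩, h6, hb⟩
          · rintro (⟨h4, h5, h6⟩ | ⟨rfl, rfl⟩ | ⟨rfl, rfl⟩)
            · exact ⟨h4, h5.1, h6.1⟩
            · exact ⟨h3, hy, hr⟩
            · exact ⟨hry, hr, hy⟩
    · push Not at hS
      have hSr : S = {r} := by
        ext a
        simp only [Set.mem_singleton_iff]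
        constructor
        · intro ha
          have := hconn a ha
          rcases Relation.ReflTransGen.cases_head this with h | ⟨c, hc, _⟩
          · exact h.symm
          · exact absurd hc.1 (hS c hc.2)
        · rintro rfl; exact hr
      subst hSr
      refine ECat.single _ _ ?_
      rintro a b ⟨h1, h2, h3⟩
      rw [Set.mem_singleton_iff] at h2 h3
      subst h2 h3; exact h1.ne rfl

/-- A graceful zigzag labelling. -/
lemma ECat.label {V : Type*} {G : SimpleGraph V} {S : Set V} {r : V} (h : ECat G S r) :
    ∃ (d : ℕ) (f : V → ℕ) (x : ℕ → ℕ), Set.BijOn f S (Set.Iic d) ∧ f r = 0 ∧ x d = 0 ∧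
      (∀ e < d, x e = x (e + 1) ∨ x e = x (e + 1) + 1) ∧
      (∀ e ≤ d, x e + e ≤ d) ∧
      ∀ a b, G.Adj a b ↔ a ∈ S ∧ b ∈ S ∧ ∃ e, 1 ≤ e ∧ e ≤ d ∧
        ((f a = x e ∧ f b = x e + e) ∨ (f b = x e ∧ f a = x e + e)) := by
  classical
  induction h with
  | single G r h =>
    refine ⟨0, fun _ => 0, fun _ => 0, ?_, rfl, rfl, by simp, by simp, ?_⟩
    · refine ⟨?_, ?_, ?_⟩
      · intro a _; simp
      · intro a ha b hb _; simp at ha hb; rw [ha, hb]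
      · intro a ha; simp at ha; simp [ha]
    · intro a b
      constructor
      · intro hab; exact absurd hab (h _ _)
      · rintro ⟨_, _, e, h1, h2, _⟩; omega
  | leaf G G' S S' r x h hx hS hG ih =>
    subst hS
    obtain ⟨d, f, X, ⟨hm, hi, hs⟩, hr, hX, hstep, hbd, hadj⟩ := ih
    have hrS := h.root_mem
    have hne : ∀ a ∈ S, a ≠ x := fun a ha e => hx (e ▸ ha)
    have hle : ∀ a ∈ S, f a ≤ d := fun a ha => hm ha
    refine ⟨d + 1, fun v => if v = x then d + 1 else f v, fun e => if e = d + 1 then 0 else X e,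
      ⟨?_, ?_, ?_⟩, ?_, by simp, ?_, ?_, ?_⟩
    · rintro a (rfl | ha)
      · simp
      · have := hle a ha
        simp [hne a ha]; omega
    · rintro a (rfl | ha) b (rfl | hb) hab
      · rfl
      · have := hle b hb
        simp [hne b hb] at hab; omega
      · have := hle a ha
        simp [hne a ha] at hab; omega
      · simp [hne a ha, hne b hb] at hab
        exact hi ha hb hab
    · intro k hk
      simp only [Set.mem_Iic] at hk
      by_cases hk' : k = d + 1
      · exact ⟨x, Or.inl rfl, by simp [hk']⟩
      · obtain ⟨a, ha, rfl⟩ := hs (show k ∈ Set.Iic d from by simp; omega)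
        exact ⟨a, Or.inr ha, by simp [hne a ha]⟩
    · simp [hne r hrS, hr]
    · intro e he
      by_cases h' : e = d
      · subst h'; simp [hX]
      · have := hstep e (by omega)
        grind
    · intro e he
      have := hbd e
      grind
    · intro a b
      rw [hG, hadj]
      constructor
      · rintro (⟨ha, hb, e, h1, h2, h3⟩ | ⟨rfl, rfl⟩ | ⟨rfl, rfl⟩)
        · refine ⟨Or.inr ha, Or.inr hb, e, h1, by omega, ?_⟩
          simp only [hne a ha, hne b hb, if_false, show e ≠ d + 1 by omega]
          exact h3
        · refine ⟨Or.inr hrS, Or.inl rfl, d + 1, by omega, le_rfl, ?_⟩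
          simp [hne a hrS, hr]
        · refine ⟨Or.inl rfl, Or.inr hrS, d + 1, by omega, le_rfl, ?_⟩
          simp [hne b hrS, hr]
      · rintro ⟨ha, hb, e, h1, h2, h3⟩
        have key : ∀ a ∈ S, f a = 0 → a = r := fun a ha h0 => hi ha hrS (by rw [h0, hr])
        rcases ha with rfl | ha <;> rcases hb with rfl | hb
        · simp only [if_true] at h3
          split_ifs at h3 with h4
          · simp at h3
          · have := hbd e (by omega); omega
        · have h5 := hle b hb
          simp only [hne b hb, if_true, if_false] at h3
          split_ifs at h3 with h4
          · exact Or.inr (Or.inr ⟨rfl, key b hb (by omega)⟩)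
          · have := hbd e (by omega); omega
        · have h5 := hle a ha
          simp only [hne a ha, if_true, if_false] at h3
          split_ifs at h3 with h4
          · exact Or.inr (Or.inl ⟨key a ha (by omega), rfl⟩)
          · have := hbd e (by omega); omega
        · have h5 := hle a ha
          have h6 := hle b hb
          simp only [hne a ha, hne b hb, if_false] at h3
          split_ifs at h3 with h4
          · omega
          · exact Or.inl ⟨ha, hb, e, h1, by omega, h3⟩
  | ext G G' S S' r x h hx hS hG ih =>
    subst hS
    obtain ⟨d, f, X, ⟨hm, hi, hs⟩, hr, hX, hstep, hbd, hadj⟩ := ih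
    have hrS := h.root_mem
    have hne : ∀ a ∈ S, a ≠ x := fun a ha e => hx (e ▸ ha)
    have hle : ∀ a ∈ S, f a ≤ d := fun a ha => hm ha
    refine ⟨d + 1, fun v => if v = x then 0 else d + 1 - f v,
      fun e => if e = d + 1 then 0 else d + 1 - X e - e,
      ⟨?_, ?_, ?_⟩, ?_, by simp, ?_, ?_, ?_⟩
    · rintro a (rfl | ha)
      · simp
      · simp [hne a ha]
    · rintro a (rfl | ha) b (rfl | hb) hab
      · rfl
      · have := hle b hb
        simp [hne b hb] at hab; omega
      · have := hle a ha
        simp [hne a ha] at hab; omega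
      · simp [hne a ha, hne b hb] at hab
        have := hle a ha
        have := hle b hb
        exact hi ha hb (by omega)
    · intro k hk
      simp only [Set.mem_Iic] at hk
      by_cases hk' : k = 0
      · exact ⟨x, Or.inl rfl, by simp [hk']⟩
      · obtain ⟨a, ha, h'⟩ := hs (show d + 1 - k ∈ Set.Iic d from Set.mem_Iic.2 (by omega))
        exact ⟨a, Or.inr ha, by simp only [hne a ha, h', if_false]; omega⟩
    · simp
    · intro e he
      by_cases h' : e = d
      · subst h'; simp [hX]
      · have := hstep e (by omega)
        have := hbd e (by omega)
        have := hbd (e + 1) (by omega)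
        simp only [show e ≠ d + 1 by omega, show e + 1 ≠ d + 1 by omega, if_false]
        omega
    · intro e he
      have := hbd e
      simp only
      split_ifs <;> omega
    · intro a b
      rw [hG, hadj]
      constructor
      · rintro (⟨ha, hb, e, h1, h2, h3⟩ | ⟨rfl, rfl⟩ | ⟨rfl, rfl⟩)
        · refine ⟨Or.inr ha, Or.inr hb, e, h1, by omega, ?_⟩
          simp only [hne a ha, hne b hb, if_false, show e ≠ d + 1 by omega]
          have := hbd e h2
          omega
        · refine ⟨Or.inr hrS, Or.inl rfl, d + 1, by omega, le_rfl, ?_⟩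
          simp [hne a hrS, hr]
        · refine ⟨Or.inl rfl, Or.inr hrS, d + 1, by omega, le_rfl, ?_⟩
          simp [hne b hrS, hr]
      · rintro ⟨ha, hb, e, h1, h2, h3⟩
        have key : ∀ a ∈ S, f a = 0 → a = r := fun a ha h0 => hi ha hrS (by rw [h0, hr])
        rcases ha with rfl | ha <;> rcases hb with rfl | hb
        · simp at h3; omega
        · have h5 := hle b hb
          simp only [hne b hb, if_true, if_false] at h3
          split_ifs at h3 with h4
          · exact Or.inr (Or.inr ⟨rfl, key b hb (by omega)⟩)
          · have := hbd e (by omega); omega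
        · have h5 := hle a ha
          simp only [hne a ha, if_true, if_false] at h3
          split_ifs at h3 with h4
          · exact Or.inr (Or.inl ⟨key a ha (by omega), rfl⟩)
          · have := hbd e (by omega); omega
        · have h5 := hle a ha
          have h6 := hle b hb
          simp only [hne a ha, hne b hb, if_false] at h3
          split_ifs at h3 with h4
          · omega
          · have := hbd e (by omega)
            exact Or.inl ⟨ha, hb, e, h1, by omega, by omega⟩

/-- The zigzag sequence of left end points. -/
structure Zig (n : ℕ) (x : ℕ → ℕ) : Prop where
  last : x (n - 1) = 0
  step : ∀ e < n - 1, x e = x (e + 1) ∨ x e = x (e + 1) + 1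
  bd : ∀ e ≤ n - 1, x e + e ≤ n - 1

lemma Zig.nest {n : ℕ} {x : ℕ → ℕ} (h : Zig n x) (e k : ℕ) :
    e + k ≤ n - 1 → x (e + k) ≤ x e ∧ x e + e ≤ x (e + k) + (e + k) := by
  induction k with
  | zero => simp
  | succ k ih =>
    intro hk
    have h1 := ih (by omega)
    have h2 := h.step (e + k) (by omega)
    rw [← Nat.add_assoc e k 1] at *
    omega

lemma Zig.nest' {n : ℕ} {x : ℕ → ℕ} (h : Zig n x) {e e' : ℕ} (h1 : e ≤ e') (h2 : e' ≤ n - 1) :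
    x e' ≤ x e ∧ x e + e ≤ x e' + e' := by
  obtain ⟨k, rfl⟩ := Nat.exists_eq_add_of_le h1
  exact h.nest e k h2

/-- Relation of the base tree. -/
def R1 (n : ℕ) (x : ℕ → ℕ) (ρ p q : ℕ) : Prop :=
  (∃ e, 1 ≤ e ∧ e ≤ n - 1 ∧ ((p = x e ∧ q = x e + e) ∨
    (p = x e + (n - 1) ∧ q = x e + (n - 1) + e))) ∨ (p = ρ ∧ q = 2 * n - 1)

/-- Relation of the left over tree (with `k` extra leaves). -/
def R2 (n : ℕ) (x : ℕ → ℕ) (ρ k p q : ℕ) : Prop :=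
  (∃ e, 1 ≤ e ∧ e ≤ n - 1 ∧ p = x e ∧ q = x e + e) ∨
    (q = 2 * n - 1 ∧ (p = ρ ∨ (n ≤ p ∧ p < n + k)))

/-- Base tree -/
def H1 (n : ℕ) (x : ℕ → ℕ) (ρ : ℕ) : SimpleGraph ℕ := SimpleGraph.fromRel (R1 n x ρ)

/-- Left over tree -/
def H2 (n : ℕ) (x : ℕ → ℕ) (ρ k : ℕ) : SimpleGraph ℕ := SimpleGraph.fromRel (R2 n x ρ k)

/-- Chords of length at most `d` -/
def K (x : ℕ → ℕ) (d : ℕ) : SimpleGraph ℕ :=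
  SimpleGraph.fromRel (fun p q => ∃ e, 1 ≤ e ∧ e ≤ d ∧ p = x e ∧ q = x e + e)

lemma R1.lt {n : ℕ} {x : ℕ → ℕ} {ρ p q : ℕ} (hn : 2 ≤ n) (hρ : ρ = 0 ∨ ρ = 2 * n - 2)
    (h : R1 n x ρ p q) : p < q := by
  rcases h with ⟨e, h1, h2, h3⟩ | h <;> omega

lemma R2.lt {n : ℕ} {x : ℕ → ℕ} {ρ k p q : ℕ} (hn : 2 ≤ n) (hρ : ρ < n) (hk : k ≤ n - 1)
    (h : R2 n x ρ k p q) : p < q := by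
  rcases h with ⟨e, h1, h2, h3⟩ | h <;> omega

lemma H1_adj {n : ℕ} {x : ℕ → ℕ} {ρ : ℕ} (hn : 2 ≤ n) (hρ : ρ = 0 ∨ ρ = 2 * n - 2) (p q : ℕ) :
    (H1 n x ρ).Adj p q ↔ R1 n x ρ p q ∨ R1 n x ρ q p := by
  rw [H1, SimpleGraph.fromRel_adj]
  constructor
  · exact fun h => h.2
  · intro h
    refine ⟨?_, h⟩
    rcases h with h | h
    · exact (h.lt hn hρ).ne
    · exact (h.lt hn hρ).ne'

lemma H2_adj {n : ℕ} {x : ℕ → ℕ} {ρ k : ℕ} (hn : 2 ≤ n) (hρ : ρ < n) (hk : k ≤ n - 1) (p q : ℕ) :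
    (H2 n x ρ k).Adj p q ↔ R2 n x ρ k p q ∨ R2 n x ρ k q p := by
  rw [H2, SimpleGraph.fromRel_adj]
  constructor
  · exact fun h => h.2
  · intro h
    refine ⟨?_, h⟩
    rcases h with h | h
    · exact (h.lt hn hρ hk).ne
    · exact (h.lt hn hρ hk).ne'

lemma K_adj {x : ℕ → ℕ} {d : ℕ} (p q : ℕ) :
    (K x d).Adj p q ↔ ∃ e, 1 ≤ e ∧ e ≤ d ∧ ((p = x e ∧ q = x e + e) ∨ (q = x e ∧ p = x e + e)) := by
  rw [K, SimpleGraph.fromRel_adj]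
  constructor
  · rintro ⟨_, ⟨e, h1, h2, h3⟩ | ⟨e, h1, h2, h3⟩⟩
    · exact ⟨e, h1, h2, Or.inl h3⟩
    · exact ⟨e, h1, h2, Or.inr h3⟩
  · rintro ⟨e, h1, h2, h3 | h3⟩
    · exact ⟨by omega, Or.inl ⟨e, h1, h2, h3⟩⟩
    · exact ⟨by omega, Or.inr ⟨e, h1, h2, h3⟩⟩

lemma zig_nocross {n : ℕ} {x : ℕ → ℕ} (hx : Zig n x) {e e' : ℕ} (h : e ≤ n - 1) (h' : e' ≤ n - 1) :
    ¬ (x e < x e' ∧ x e' < x e + e ∧ x e + e < x e' + e') := by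
  rcases le_total e e' with h1 | h1
  · have := hx.nest' h1 h'; omega
  · have := hx.nest' h1 h; omega

lemma plane1 {n : ℕ} {x : ℕ → ℕ} {ρ : ℕ} (hn : 2 ≤ n) (hρ : ρ = 0 ∨ ρ = 2 * n - 2)
    (hx : Zig n x) : PlaneNat n (H1 n x ρ) := by
  have lt_adj : ∀ a b, (H1 n x ρ).Adj a b → a < b → R1 n x ρ a b := by
    intro a b h hab
    rw [H1_adj hn hρ] at h
    rcases h with h | h
    · exact h
    · have := h.lt hn hρ; omega
  refine ⟨?_, ?_, ?_⟩
  · intro a b h hab hb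
    rcases lt_adj _ _ h hab with ⟨e, h1, h2, h3⟩ | h <;> omega
  · intro a b p q hab hpq h1 h2 h3 h4
    rcases lt_adj _ _ hab (by omega) with ⟨e, e1, e2, e3⟩ | h
    · rcases lt_adj _ _ hpq (by omega) with ⟨e', e1', e2', e3'⟩ | h
      · have b1 := hx.bd e e2
        have b2 := hx.bd e' e2'
        have := zig_nocross hx e2 e2'
        omega
      · omega
    · omega
  · intro a b k hab hk h1 h2 h3
    rcases lt_adj _ _ hab (by omega) with ⟨e, e1, e2, e3⟩ | h
    · have b1 := hx.bd e e2
      rcases lt_adj _ _ hk (by omega) with ⟨e', e1', e2', e3'⟩ | h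
      · have b2 := hx.bd e' e2'
        omega
      · omega
    · omega

lemma plane2 {n : ℕ} {x : ℕ → ℕ} {ρ : ℕ} (hn : 2 ≤ n) (hρ : ρ = 0 ∨ ρ = n - 1)
    (hx : Zig n x) : PlaneNat n (H2 n x ρ (n - 1)) := by
  have hρ' : ρ < n := by omega
  have lt_adj : ∀ a b, (H2 n x ρ (n - 1)).Adj a b → a < b → R2 n x ρ (n - 1) a b := by
    intro a b h hab
    rw [H2_adj hn hρ' le_rfl] at h
    rcases h with h | h
    · exact h
    · have := h.lt hn hρ' le_rfl; omega
  refine ⟨?_, ?_, ?_⟩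
  · intro a b h hab hb
    rcases lt_adj _ _ h hab with ⟨e, h1, h2, h3⟩ | h <;> omega
  · intro a b p q hab hpq h1 h2 h3 h4
    rcases lt_adj _ _ hab (by omega) with ⟨e, e1, e2, e3⟩ | h
    · rcases lt_adj _ _ hpq (by omega) with ⟨e', e1', e2', e3'⟩ | h
      · have := zig_nocross hx e2 e2'
        omega
      · omega
    · omega
  · intro a b k hab hk h1 h2 h3
    rcases lt_adj _ _ hab (by omega) with ⟨e, e1, e2, e3⟩ | h
    · have b1 := hx.bd e e2
      rcases lt_adj _ _ hk (by omega) with ⟨e', e1', e2', e3'⟩ | h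
      · have b2 := hx.bd e' e2'
        omega
      · omega
    · omega

lemma ecat_K {n : ℕ} {x : ℕ → ℕ} (hx : Zig n x) (d : ℕ) : d ≤ n - 1 →
    ECat (K x d) (Set.Icc (x d) (x d + d)) (x d) ∧
    ECat (K x d) (Set.Icc (x d) (x d + d)) (x d + d) := by
  induction d with
  | zero =>
    intro _
    have h : ECat (K x 0) {x 0} (x 0) := by
      refine ECat.single _ _ ?_
      intro a b hab
      rw [K_adj] at hab
      obtain ⟨e, h1, h2, _⟩ := hab
      omega
    simpa using h
  | succ d ih =>
    intro hd
    obtain ⟨i1, i2⟩ := ih (by omega)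
    rcases hx.step d (by omega) with h | h
    · have hS : Set.Icc (x (d + 1)) (x (d + 1) + (d + 1))
          = insert (x (d + 1) + (d + 1)) (Set.Icc (x d) (x d + d)) := by
        ext k; simp only [Set.mem_Icc, Set.mem_insert_iff]; omega
      have hn : x (d + 1) + (d + 1) ∉ Set.Icc (x d) (x d + d) := by
        simp only [Set.mem_Icc]; omega
      have hG : ∀ a b, (K x (d + 1)).Adj a b ↔ (K x d).Adj a b ∨
          (a = x d ∧ b = x (d + 1) + (d + 1)) ∨ (a = x (d + 1) + (d + 1) ∧ b = x d) := by
        intro a b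
        rw [K_adj, K_adj]
        constructor
        · rintro ⟨e, h1, h2, h3⟩
          by_cases he : e = d + 1
          · subst he; right; omega
          · exact Or.inl ⟨e, h1, by omega, h3⟩
        · rintro (⟨e, h1, h2, h3⟩ | h3)
          · exact ⟨e, h1, by omega, h3⟩
          · exact ⟨d + 1, by omega, le_rfl, by omega⟩
      have j1 := ECat.leaf _ _ _ _ _ _ i1 hn hS hG
      have j2 := ECat.ext _ _ _ _ _ _ i1 hn hS hG
      rw [h] at j1
      exact ⟨j1, j2⟩
    · have hS : Set.Icc (x (d + 1)) (x (d + 1) + (d + 1))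
          = insert (x (d + 1)) (Set.Icc (x d) (x d + d)) := by
        ext k; simp only [Set.mem_Icc, Set.mem_insert_iff]; omega
      have hn : x (d + 1) ∉ Set.Icc (x d) (x d + d) := by
        simp only [Set.mem_Icc]; omega
      have hG : ∀ a b, (K x (d + 1)).Adj a b ↔ (K x d).Adj a b ∨
          (a = x d + d ∧ b = x (d + 1)) ∨ (a = x (d + 1) ∧ b = x d + d) := by
        intro a b
        rw [K_adj, K_adj]
        constructor
        · rintro ⟨e, h1, h2, h3⟩
          by_cases he : e = d + 1
          · subst he; right; omega
          · exact Or.inl ⟨e, h1, by omega, h3⟩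
        · rintro (⟨e, h1, h2, h3⟩ | h3)
          · exact ⟨e, h1, by omega, h3⟩
          · exact ⟨d + 1, by omega, le_rfl, by omega⟩
      have j1 := ECat.leaf _ _ _ _ _ _ i2 hn hS hG
      have j2 := ECat.ext _ _ _ _ _ _ i2 hn hS hG
      have e : x d + d = x (d + 1) + (d + 1) := by omega
      rw [e] at j1
      exact ⟨j2, j1⟩

lemma ecat_H2 {n : ℕ} {x : ℕ → ℕ} {ρ : ℕ} (hn : 2 ≤ n) (hρ : ρ = 0 ∨ ρ = n - 1)
    (hx : Zig n x) (k : ℕ) : k ≤ n - 1 →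
    ECat (H2 n x ρ k) (insert (2 * n - 1) (Set.Iio (n + k))) (2 * n - 1) := by
  have hρ' : ρ < n := by omega
  induction k with
  | zero =>
    intro _
    have h1 := ecat_K hx (n - 1) le_rfl
    rw [hx.last] at h1
    have h2 : ECat (K x (n - 1)) (Set.Icc 0 (0 + (n - 1))) ρ := by
      rcases hρ with rfl | rfl
      · exact h1.1
      · simpa using h1.2
    refine ECat.ext _ _ _ _ ρ _ h2 ?_ ?_ ?_
    · simp only [Set.mem_Icc]; omega
    · ext k; simp only [Set.mem_insert_iff, Set.mem_Iio, Set.mem_Icc]; omega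
    · intro a b
      rw [K_adj, H2_adj hn hρ' (by omega)]
      unfold R2
      constructor
      · rintro ((⟨e, h1, h2, h3⟩ | h3) | (⟨e, h1, h2, h3⟩ | h3))
        · exact Or.inl ⟨e, h1, h2, Or.inl h3⟩
        · right; omega
        · exact Or.inl ⟨e, h1, h2, Or.inr h3⟩
        · right; omega
      · rintro (⟨e, h1, h2, h3 | h3⟩ | h3 | h3)
        · exact Or.inl (Or.inl ⟨e, h1, h2, h3⟩)
        · exact Or.inr (Or.inl ⟨e, h1, h2, h3⟩)
        · exact Or.inl (Or.inr (by omega))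
        · exact Or.inr (Or.inr (by omega))
  | succ k ih =>
    intro hk
    refine ECat.leaf _ _ _ _ _ (n + k) (ih (by omega)) ?_ ?_ ?_
    · simp only [Set.mem_insert_iff, Set.mem_Iio]; omega
    · ext j; simp only [Set.mem_insert_iff, Set.mem_Iio]; omega
    · intro a b
      rw [H2_adj hn hρ' (by omega), H2_adj hn hρ' (by omega)]
      unfold R2
      generalize (∃ e, 1 ≤ e ∧ e ≤ n - 1 ∧ a = x e ∧ b = x e + e) = P
      generalize (∃ e, 1 ≤ e ∧ e ≤ n - 1 ∧ b = x e ∧ a = x e + e) = Q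
      by_cases hP : P
      · simp [hP]
      · by_cases hQ : Q
        · simp [hQ]
        · simp only [hP, hQ, false_or]; omega

lemma cat_H2 {n s : ℕ} {x : ℕ → ℕ} {ρ : ℕ} (hn : 2 ≤ n) (hs : s ≤ 2 * n - 1)
    (hρ : ρ = 0 ∨ ρ = n - 1) (hx : Zig n x) :
    IsCaterpillar ((H2 n x ρ (n - 1)).comap (kap n s)) := by
  have hr : (insert (2 * n - 1) (Set.Iio (n + (n - 1))) : Set ℕ) = Set.range (kap n s) := by
    rw [kap_range hn hs]
    ext k; simp only [Set.mem_insert_iff, Set.mem_Iio]; omega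
  obtain ⟨r, -, h⟩ := (ecat_H2 hn hρ hx (n - 1) le_rfl).comap (kap n s) (kap_inj hs) hr.le
  rw [hr, Set.preimage_range] at h
  exact h.isCaterpillar

lemma kap_diff {n s d : ℕ} (_hs : s ≤ 2 * n - 1) (hd : d ≤ n - 1) {i i' : Fin (2 * n - 1)}
    (h : i'.val = i.val + d ∨ i'.val + (2 * n - 1) = i.val + d) :
    kap n s (some i') = kap n s (some i) + d ∨
    kap n s (some i') + (2 * n - 1) = kap n s (some i) + d := by
  have := i.2; have := i'.2
  simp only [kap]; split_ifs <;> omega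

lemma chord1 {n d : ℕ} {x : ℕ → ℕ} {ρ : ℕ} (hn : 2 ≤ n) (hρ : ρ = 0 ∨ ρ = 2 * n - 2)
    (hx : Zig n x) (h1 : 1 ≤ d) (h2 : d ≤ n - 1) {p q : ℕ} (hp : p < 2 * n - 1) (hq : q < 2 * n - 1)
    (h : q = p + d ∨ q + (2 * n - 1) = p + d) :
    (H1 n x ρ).Adj p q ↔ p = x d ∨ p = x d + (n - 1) := by
  rw [H1_adj hn hρ]
  constructor
  · rintro ((⟨e, e1, e2, e3⟩ | e3) | (⟨e, e1, e2, e3⟩ | e3))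
    · have : e = d := by omega
      subst this; omega
    · omega
    · omega
    · omega
  · intro h3
    have := hx.bd d h2
    exact Or.inl (Or.inl ⟨d, h1, h2, by omega⟩)

lemma chord2 {n d : ℕ} {x : ℕ → ℕ} {ρ : ℕ} (hn : 2 ≤ n) (hρ : ρ = 0 ∨ ρ = n - 1)
    (hx : Zig n x) (h1 : 1 ≤ d) (h2 : d ≤ n - 1) {p q : ℕ} (hp : p < 2 * n - 1) (hq : q < 2 * n - 1)
    (h : q = p + d ∨ q + (2 * n - 1) = p + d) :
    (H2 n x ρ (n - 1)).Adj p q ↔ p = x d := by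
  rw [H2_adj hn (by omega) le_rfl]
  constructor
  · rintro ((⟨e, e1, e2, e3⟩ | e3) | (⟨e, e1, e2, e3⟩ | e3))
    · have : e = d := by omega
      subst this; omega
    · omega
    · omega
    · omega
  · intro h3
    have := hx.bd d h2
    exact Or.inl (Or.inl ⟨d, h1, h2, by omega⟩)

lemma radial1 {n : ℕ} {x : ℕ → ℕ} {ρ : ℕ} (hn : 2 ≤ n) (hρ : ρ = 0 ∨ ρ = 2 * n - 2)
    (hx : Zig n x) {p : ℕ} (hp : p < 2 * n - 1) :
    (H1 n x ρ).Adj p (2 * n - 1) ↔ p = ρ := by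
  rw [H1_adj hn hρ]
  constructor
  · rintro ((⟨e, e1, e2, e3⟩ | e3) | (⟨e, e1, e2, e3⟩ | e3))
    · have := hx.bd e e2; omega
    · omega
    · have := hx.bd e e2; omega
    · omega
  · intro h; exact Or.inl (Or.inr ⟨h, rfl⟩)

lemma radial2 {n : ℕ} {x : ℕ → ℕ} {ρ : ℕ} (hn : 2 ≤ n) (hρ : ρ = 0 ∨ ρ = n - 1)
    (hx : Zig n x) {p : ℕ} (hp : p < 2 * n - 1) :
    (H2 n x ρ (n - 1)).Adj p (2 * n - 1) ↔ p = ρ ∨ n ≤ p := by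
  rw [H2_adj hn (by omega) le_rfl]
  constructor
  · rintro ((⟨e, e1, e2, e3⟩ | e3) | (⟨e, e1, e2, e3⟩ | e3))
    · have := hx.bd e e2; omega
    · omega
    · have := hx.bd e e2; omega
    · omega
  · intro h; exact Or.inl (Or.inr ⟨rfl, by omega⟩)

/-- The family of trees. -/
def tr (n : ℕ) (x : ℕ → ℕ) (ρ ρ' : ℕ) (j : Fin n) : SimpleGraph (WV n) :=
  if j.val = n - 1 then (H2 n x ρ' (n - 1)).comap (kap n 1)
  else (H1 n x ρ).comap (kap n (2 * n - 1 - j.val))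

lemma tr_chord {n d : ℕ} {x : ℕ → ℕ} {ρ ρ' : ℕ} (hn : 2 ≤ n)
    (hρ : (ρ = 0 ∧ ρ' = 0) ∨ (ρ = 2 * n - 2 ∧ ρ' = n - 1)) (hx : Zig n x)
    (h1 : 1 ≤ d) (h2 : d ≤ n - 1) {i i' : Fin (2 * n - 1)}
    (h : i'.val = i.val + d ∨ i'.val + (2 * n - 1) = i.val + d) :
    ∃! j : Fin n, (tr n x ρ ρ' j).Adj (some i) (some i') := by
  have hi := i.2
  have hb := hx.bd d h2
  have key : ∀ j : Fin n, (tr n x ρ ρ' j).Adj (some i) (some i') ↔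
      (j.val = n - 1 ∧ (i.val + 1 = x d ∨ i.val + 1 = x d + (2 * n - 1))) ∨
      (j.val < n - 1 ∧ (i.val = x d + j ∨ i.val = x d + (n - 1) + j ∨
        i.val + (2 * n - 1) = x d + (n - 1) + j)) := by
    intro j
    have hj := j.2
    unfold tr
    split_ifs with hjn
    · rw [SimpleGraph.comap_adj, chord2 hn (by omega) hx h1 h2 (kap_lt (by omega) _)
        (kap_lt (by omega) _) (kap_diff (by omega) h2 h)]
      simp only [kap]; split_ifs <;> omega
    · rw [SimpleGraph.comap_adj, chord1 hn (by omega) hx h1 h2 (kap_lt (by omega) _)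
        (kap_lt (by omega) _) (kap_diff (by omega) h2 h)]
      simp only [kap]; split_ifs <;> omega
  simp only [key]
  obtain ⟨t, ht, ht'⟩ : ∃ t, t < 2 * n - 1 ∧ (i.val = x d + t ∨ i.val + (2 * n - 1) = x d + t) := by
    by_cases hh : x d ≤ i.val
    · exact ⟨i.val - x d, by omega, by omega⟩
    · exact ⟨i.val + (2 * n - 1) - x d, by omega, by omega⟩
  by_cases c1 : t = 2 * n - 2
  · refine ⟨⟨n - 1, by omega⟩, by dsimp only; omega, ?_⟩
    intro j hj; apply Fin.ext; simp only; omega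
  · by_cases c2 : t < n - 1
    · refine ⟨⟨t, by omega⟩, by dsimp only; omega, ?_⟩
      intro j hj; apply Fin.ext; simp only; omega
    · refine ⟨⟨t - (n - 1), by omega⟩, by dsimp only; omega, ?_⟩
      intro j hj; apply Fin.ext; simp only; omega

lemma tr_radial {n : ℕ} {x : ℕ → ℕ} {ρ ρ' : ℕ} (hn : 2 ≤ n)
    (hρ : (ρ = 0 ∧ ρ' = 0) ∨ (ρ = 2 * n - 2 ∧ ρ' = n - 1)) (hx : Zig n x)
    (i : Fin (2 * n - 1)) :
    ∃! j : Fin n, (tr n x ρ ρ' j).Adj (some i) none := by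
  have hi := i.2
  obtain ⟨t, ht, ht'⟩ : ∃ t, t < 2 * n - 1 ∧ (i.val = ρ + t ∨ i.val + (2 * n - 1) = ρ + t) := by
    by_cases hh : ρ ≤ i.val
    · exact ⟨i.val - ρ, by omega, by omega⟩
    · exact ⟨i.val + (2 * n - 1) - ρ, by omega, by omega⟩
  have key : ∀ j : Fin n, (tr n x ρ ρ' j).Adj (some i) none ↔
      (j.val = n - 1 ∧ n - 1 ≤ t) ∨ (j.val < n - 1 ∧ j.val = t) := by
    intro j
    have hj := j.2
    unfold tr
    split_ifs with hjn
    · rw [SimpleGraph.comap_adj, show kap n 1 none = 2 * n - 1 from rfl,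
        radial2 hn (by omega) hx (kap_lt (by omega) _)]
      simp only [kap]; split_ifs <;> omega
    · rw [SimpleGraph.comap_adj, show kap n _ none = 2 * n - 1 from rfl,
        radial1 hn (by omega) hx (kap_lt (by omega) _)]
      simp only [kap]; split_ifs <;> omega
  simp only [key]
  by_cases c1 : n - 1 ≤ t
  · refine ⟨⟨n - 1, by omega⟩, by dsimp only; omega, ?_⟩
    intro j hj; apply Fin.ext; simp only; omega
  · refine ⟨⟨t, by omega⟩, by dsimp only; omega, ?_⟩
    intro j hj; apply Fin.ext; simp only; omega

lemma tr_partition {n : ℕ} {x : ℕ → ℕ} {ρ ρ' : ℕ} (hn : 2 ≤ n)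
    (hρ : (ρ = 0 ∧ ρ' = 0) ∨ (ρ = 2 * n - 2 ∧ ρ' = n - 1)) (hx : Zig n x) :
    IsPartition (tr n x ρ ρ') := by
  intro a b hab
  rcases a with _ | i <;> rcases b with _ | i'
  · exact absurd rfl hab
  · simp only [SimpleGraph.adj_comm _ none]
    exact tr_radial hn hρ hx i'
  · exact tr_radial hn hρ hx i
  · have hne : i.val ≠ i'.val := fun h => hab (by rw [Fin.ext h])
    have h1 := i.2
    have h2 := i'.2
    have hsym : (∃! j : Fin n, (tr n x ρ ρ' j).Adj (some i') (some i)) →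
        ∃! j : Fin n, (tr n x ρ ρ' j).Adj (some i) (some i') := by
      intro h
      simpa only [SimpleGraph.adj_comm _ (some i)] using h
    rcases lt_or_gt_of_ne hne with h | h
    · by_cases hd : i'.val - i.val ≤ n - 1
      · exact tr_chord (d := i'.val - i.val) hn hρ hx (by omega) hd (by omega)
      · exact hsym (tr_chord (d := i.val + (2 * n - 1) - i'.val) hn hρ hx
          (by omega) (by omega) (by omega))
    · by_cases hd : i.val - i'.val ≤ n - 1
      · exact hsym (tr_chord (d := i.val - i'.val) hn hρ hx (by omega) hd (by omega))
      · exact tr_chord (d := i'.val + (2 * n - 1) - i.val) hn hρ hx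
          (by omega) (by omega) (by omega)

lemma bcount {n : ℕ} {x : ℕ → ℕ} {ρ' : ℕ} (hn : 2 ≤ n)
    (hρ : ρ' = 0 ∨ ρ' = n - 1) (hx : Zig n x) :
    boundaryCount ((H2 n x ρ' (n - 1)).comap (kap n 1)) = 1 := by
  have hb := hx.bd 1 (by omega)
  have hs : 1 ≤ 2 * n - 1 := by omega
  obtain ⟨v, hv⟩ : x 1 ∈ Set.range (kap n 1) := by
    rw [kap_range hn hs]; simp only [Set.mem_Iio]; omega
  rcases v with _ | k0
  · simp only [kap] at hv; omega
  · unfold boundaryCount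
    rw [Set.ncard_eq_one]
    refine ⟨k0, ?_⟩
    ext k
    have hk := k.2
    have hd : (nxt k).val = k.val + 1 ∨ (nxt k).val + (2 * n - 1) = k.val + 1 := by
      simp only [nxt]
      by_cases h : k.val + 1 < 2 * n - 1
      · left; exact Nat.mod_eq_of_lt h
      · right
        have : k.val + 1 = 2 * n - 1 := by omega
        rw [this, Nat.mod_self]; omega
    simp only [Set.mem_ofPred_eq, Set.mem_singleton_iff, SimpleGraph.comap_adj]
    rw [chord2 hn hρ hx le_rfl (by omega) (kap_lt hs _) (kap_lt hs _) (kap_diff hs (by omega) hd), ← hv]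
    constructor
    · intro h; simpa using kap_inj hs h
    · rintro rfl; rfl

lemma iso_of_labels {V W : Type*} (H : SimpleGraph ℕ) (κ : V → ℕ) (g : W → ℕ)
    (hκ : Function.Injective κ) (hg : Function.Injective g) (h : Set.range κ = Set.range g) :
    Nonempty (H.comap κ ≃g H.comap g) := by
  let e : V ≃ W := (Equiv.ofInjective κ hκ).trans
    ((Equiv.setCongr h).trans (Equiv.ofInjective g hg).symm)
  have he : ∀ v, g (e v) = κ v := by
    intro v
    simp [e, Equiv.apply_ofInjective_symm]
  refine ⟨⟨e, ?_⟩⟩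
  intro a b
  simp only [SimpleGraph.comap_adj, he]


/-- The edge relation of a labelled half. -/
def Ch {V : Type*} (S : Set V) (f : V → ℕ) (X : ℕ → ℕ) (d : ℕ) (a b : V) : Prop :=
  a ∈ S ∧ b ∈ S ∧ ∃ e, 1 ≤ e ∧ e ≤ d ∧ f a = X e ∧ f b = X e + e

/-- Directed edges of the tree in terms of the labelled halves. -/
def Dir {V : Type*} (S0 S1 : Set V) (f0 f1 : V → ℕ) (X : ℕ → ℕ) (d : ℕ) (r0 r1 p w q a b : V) :
    Prop :=
  Ch S0 f0 X d a b ∨ Ch S1 f1 X d a b ∨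
  (a = r0 ∧ b = r1) ∨ (a = r1 ∧ b = p) ∨ (a = w ∧ b = q)

lemma assemble {V : Type*} {S0 S1 : Set V} {f0 f1 : V → ℕ} {X : ℕ → ℕ} {d ρ : ℕ}
    {r0 r1 p w q : V} (T : SimpleGraph V)
    (h0 : Set.BijOn f0 S0 (Set.Iic d)) (h1 : Set.BijOn f1 S1 (Set.Iic d))
    (hr0 : r0 ∈ S0) (hr1 : r1 ∈ S1) (hf0 : f0 r0 = 0) (hf1 : f1 r1 = 0)
    (hdis : ∀ v ∈ S0, v ∉ S1) (hp0 : p ∉ S0) (hp1 : p ∉ S1) (hq0 : q ∉ S0) (hq1 : q ∉ S1)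
    (hpq : p ≠ q) (hcov : ∀ v, v ∈ S0 ∨ v ∈ S1 ∨ v = p ∨ v = q)
    (hw : (w = r0 ∧ ρ = 0) ∨ (w = p ∧ ρ = 2 * d + 2))
    (hXb : ∀ e ≤ d, X e + e ≤ d)
    (hadj : ∀ a b, T.Adj a b ↔ Dir S0 S1 f0 f1 X d r0 r1 p w q a b ∨
      Dir S0 S1 f0 f1 X d r0 r1 p w q b a) :
    ∃ g : V → ℕ, Function.Injective g ∧ Set.range g = Set.Iio (2 * (d + 2)) ∧
      T = (H1 (d + 2) (fun e => if e = d + 1 then 0 else X e) ρ).comap g := by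
  classical
  let g : V → ℕ := fun v => if v ∈ S0 then f0 v else if v ∈ S1 then f1 v + (d + 1) else
    if v = p then 2 * d + 2 else 2 * d + 3
  have g0 : ∀ v ∈ S0, g v = f0 v := fun v hv => by simp [g, hv]
  have g1 : ∀ v ∈ S1, g v = f1 v + (d + 1) := fun v hv => by
    have : v ∉ S0 := fun h => hdis v h hv
    simp [g, hv, this]
  have gp : g p = 2 * d + 2 := by simp [g, hp0, hp1]
  have gq : g q = 2 * d + 3 := by simp [g, hq0, hq1, hpq.symm]
  have b0 : ∀ v ∈ S0, f0 v ≤ d := fun v hv => h0.mapsTo hv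
  have b1 : ∀ v ∈ S1, f1 v ≤ d := fun v hv => h1.mapsTo hv
  have i0 : ∀ a ∈ S0, ∀ b ∈ S0, f0 a = f0 b → a = b := fun a ha b hb h => h0.injOn ha hb h
  have i1 : ∀ a ∈ S1, ∀ b ∈ S1, f1 a = f1 b → a = b := fun a ha b hb h => h1.injOn ha hb h
  have ginj : Function.Injective g := by
    intro a b hab
    rcases hcov a with ha | ha | rfl | rfl <;> rcases hcov b with hb | hb | rfl | rfl
    · rw [g0 a ha, g0 b hb] at hab; exact i0 a ha b hb hab
    · rw [g0 a ha, g1 b hb] at hab; have := b0 a ha; omega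
    · rw [g0 a ha, gp] at hab; have := b0 a ha; omega
    · rw [g0 a ha, gq] at hab; have := b0 a ha; omega
    · rw [g1 a ha, g0 b hb] at hab; have := b0 b hb; omega
    · rw [g1 a ha, g1 b hb] at hab; exact i1 a ha b hb (by omega)
    · rw [g1 a ha, gp] at hab; have := b1 a ha; omega
    · rw [g1 a ha, gq] at hab; have := b1 a ha; omega
    · rw [g0 b hb, gp] at hab; have := b0 b hb; omega
    · rw [g1 b hb, gp] at hab; have := b1 b hb; omega
    · rfl
    · omega
    · rw [g0 b hb, gq] at hab; have := b0 b hb; omega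
    · rw [g1 b hb, gq] at hab; have := b1 b hb; omega
    · omega
    · rfl
  have gr0 : g r0 = 0 := by rw [g0 _ hr0, hf0]
  have gr1 : g r1 = d + 1 := by rw [g1 _ hr1, hf1]; omega
  have gw : g w = ρ := by
    rcases hw with ⟨rfl, rfl⟩ | ⟨rfl, rfl⟩ <;> assumption
  have s0 : ∀ v, g v ≤ d → v ∈ S0 := by
    intro v hv
    rcases hcov v with h | h | rfl | rfl
    · exact h
    · rw [g1 v h] at hv; omega
    · omega
    · omega
  have s1 : ∀ v, d < g v → g v ≤ 2 * d + 1 → v ∈ S1 := by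
    intro v hv hv'
    rcases hcov v with h | h | rfl | rfl
    · have := b0 v h; rw [g0 v h] at hv; omega
    · exact h
    · omega
    · omega
  refine ⟨g, ginj, ?_, ?_⟩
  · ext k
    simp only [Set.mem_range, Set.mem_Iio]
    constructor
    · rintro ⟨v, rfl⟩
      rcases hcov v with h | h | rfl | rfl
      · have := b0 v h; rw [g0 v h]; omega
      · have := b1 v h; rw [g1 v h]; omega
      · omega
      · omega
    · intro hk
      by_cases k0 : k ≤ d
      · obtain ⟨v, hv, rfl⟩ := h0.surjOn (show k ∈ Set.Iic d from k0)
        exact ⟨v, g0 v hv⟩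
      by_cases k1 : k ≤ 2 * d + 1
      · obtain ⟨v, hv, hv'⟩ := h1.surjOn (show k - (d + 1) ∈ Set.Iic d by
          simp only [Set.mem_Iic]; omega)
        exact ⟨v, by rw [g1 v hv]; omega⟩
      by_cases k2 : k = 2 * d + 2
      · exact ⟨p, by omega⟩
      · exact ⟨q, by omega⟩
  · have key : ∀ a b, R1 (d + 2) (fun e => if e = d + 1 then 0 else X e) ρ (g a) (g b) ↔
        Dir S0 S1 f0 f1 X d r0 r1 p w q a b := by
      intro a b
      constructor
      · rintro (⟨e, e1, e2, e3⟩ | ⟨h, h'⟩)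
        · by_cases he : e = d + 1
          · subst he
            simp only [if_true] at e3
            rcases e3 with ⟨h, h'⟩ | ⟨h, h'⟩
            · exact Or.inr (Or.inr (Or.inl ⟨ginj (by omega), ginj (by omega)⟩))
            · exact Or.inr (Or.inr (Or.inr (Or.inl ⟨ginj (by omega), ginj (by omega)⟩)))
          · simp only [if_neg he] at e3
            have hb := hXb e (by omega)
            rcases e3 with ⟨h, h'⟩ | ⟨h, h'⟩
            · have ha := s0 a (by omega)
              have hb' := s0 b (by omega)
              rw [g0 a ha] at h
              rw [g0 b hb'] at h'
              exact Or.inl ⟨ha, hb', e, e1, by omega, h, h'⟩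
            · have ha := s1 a (by omega) (by omega)
              have hb' := s1 b (by omega) (by omega)
              rw [g1 a ha] at h
              rw [g1 b hb'] at h'
              exact Or.inr (Or.inl ⟨ha, hb', e, e1, by omega, by omega, by omega⟩)
        · exact Or.inr (Or.inr (Or.inr (Or.inr ⟨ginj (by omega), ginj (by omega)⟩)))
      · rintro (⟨ha, hb, e, e1, e2, h, h'⟩ | ⟨ha, hb, e, e1, e2, h, h'⟩ | ⟨rfl, rfl⟩ | ⟨rfl, rfl⟩ |
          ⟨rfl, rfl⟩)
        · refine Or.inl ⟨e, e1, by omega, Or.inl ?_⟩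
          rw [g0 a ha, g0 b hb]
          simp only [if_neg (show e ≠ d + 1 by omega)]
          exact ⟨h, h'⟩
        · refine Or.inl ⟨e, e1, by omega, Or.inr ?_⟩
          rw [g1 a ha, g1 b hb]
          simp only [if_neg (show e ≠ d + 1 by omega)]
          omega
        · refine Or.inl ⟨d + 1, by omega, by omega, Or.inl ?_⟩
          simp only [if_true]; omega
        · refine Or.inl ⟨d + 1, by omega, by omega, Or.inr ?_⟩
          simp only [if_true]; omega
        · exact Or.inr (by omega)
    ext a b
    rw [SimpleGraph.comap_adj, H1_adj (by omega) (by omega), key, key, hadj]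

lemma zig_ext {X : ℕ → ℕ} {d : ℕ} (h0 : X d = 0)
    (h1 : ∀ e < d, X e = X (e + 1) ∨ X e = X (e + 1) + 1) (h2 : ∀ e ≤ d, X e + e ≤ d) :
    Zig (d + 2) (fun e => if e = d + 1 then 0 else X e) := by
  refine ⟨by simp, ?_, ?_⟩
  · intro e he
    by_cases hd : e = d
    · subst hd; simp [h0]
    · have := h1 e (by omega)
      simpa [show e ≠ d + 1 by omega, hd] using this
  · intro e he
    by_cases hd : e = d + 1
    · subst hd; simp
    · have := h2 e (by omega)
      simp only [if_neg hd]; omega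

lemma loc_mono {V : Type*} {G H : SimpleGraph V} (h : G ≤ H) (hL : Loc H) : Loc G := by
  intro v a b c a' b' c' h1 h2 h3 h4 h5 h6 h7 h8 h9
  exact hL v a b c a' b' c' (h h1) (h h2) (h h3) h4 h5 h6 (h h7) (h h8) (h h9)

lemma loc_res {V : Type*} [Finite V] {T : SimpleGraph V} {u : V}
    (h : IsCaterpillar T ∨ IsCaterpillar (T.induce {v | v ≠ u})) :
    Loc (res T {v | v ≠ u}) := by
  rcases h with h | h
  · exact loc_mono (fun a b hab => hab.1) (loc_of_caterpillar h)
  · have hL := loc_of_caterpillar h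
    intro v a b c a' b' c' h1 h2 h3 h4 h5 h6 h7 h8 h9 k1 k2 k3
    refine hL ⟨v, h1.2.1⟩ ⟨a, h1.2.2⟩ ⟨b, h2.2.2⟩ ⟨c, h3.2.2⟩ ⟨a', h7.2.2⟩ ⟨b', h8.2.2⟩ ⟨c', h9.2.2⟩
      ?_ ?_ ?_ ?_ ?_ ?_ ?_ ?_ ?_ ?_ ?_ ?_
    · exact h1.1
    · exact h2.1
    · exact h3.1
    · simpa [Subtype.ext_iff] using h4
    · simpa [Subtype.ext_iff] using h5
    · simpa [Subtype.ext_iff] using h6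
    · exact h7.1
    · exact h8.1
    · exact h9.1
    · simpa [Subtype.ext_iff] using k1
    · simpa [Subtype.ext_iff] using k2
    · simpa [Subtype.ext_iff] using k3

lemma core {V : Type*} [Finite V] {T : SimpleGraph V} {u1 u2 u3 u4 ua ub : V}
    (hL : Loc (res T {v | v ≠ u1})) (hP : P4SymWitness T u1 u2 u3 u4 ua ub)
    (h13 : u1 ≠ u3) (h1b : u1 ≠ ub) (ha3 : ua ≠ u3) (hab : ua ≠ ub) (hadj : T.Adj u3 ub)
    (hcase : (ua = u4 ∧ ub = u2) ∨ (ua = u2 ∧ ub = u4)) :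
    ∃ (S3 Sb : Set V) (f0 f1 : V → ℕ) (X : ℕ → ℕ) (d : ℕ),
      Set.BijOn f0 S3 (Set.Iic d) ∧ Set.BijOn f1 Sb (Set.Iic d) ∧ u3 ∈ S3 ∧ ub ∈ Sb ∧
      f0 u3 = 0 ∧ f1 ub = 0 ∧ (∀ v ∈ S3, v ∉ Sb) ∧ u1 ∉ S3 ∧ u1 ∉ Sb ∧ ua ∉ S3 ∧ ua ∉ Sb ∧
      (∀ v, v = u1 ∨ v = ua ∨ v ∈ S3 ∨ v ∈ Sb) ∧ X d = 0 ∧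
      (∀ e < d, X e = X (e + 1) ∨ X e = X (e + 1) + 1) ∧ (∀ e ≤ d, X e + e ≤ d) ∧
      ∀ a b, (delP4 T u1 u2 u3 u4).Adj a b ↔
        (Ch S3 f0 X d a b ∨ Ch S3 f0 X d b a) ∨ (Ch Sb f1 X d a b ∨ Ch Sb f1 X d b a) := by
  classical
  obtain ⟨hi1, hia, -, ⟨wb, hwb⟩, hne, hcov, φ, hφ⟩ := hP
  replace hφ : ∀ h : u3 ∈ ((delP4 T u1 u2 u3 u4).connectedComponentMk u3).supp, (φ ⟨u3, h⟩).1 = ub := fun _ => hφ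
  have hDT : delP4 T u1 u2 u3 u4 ≤ T := SimpleGraph.deleteEdges_le _
  have hDiff : ∀ a b, T.Adj a b → ¬ (delP4 T u1 u2 u3 u4).Adj a b →
      s(a, b) = s(u1, u2) ∨ s(a, b) = s(u2, u3) ∨ s(a, b) = s(u3, u4) := by
    intro a b h h'
    by_contra hc
    apply h'
    rw [delP4, SimpleGraph.deleteEdges_adj]
    exact ⟨h, by simpa using hc⟩
  generalize delP4 T u1 u2 u3 u4 = D at *
  have hmem : ∀ v w, v ∈ (D.connectedComponentMk w).supp ↔ D.Reachable v w := by
    intro v w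
    rw [SimpleGraph.ConnectedComponent.mem_supp_iff, SimpleGraph.ConnectedComponent.eq]
  have hiso : ∀ u w, (∀ w, ¬ D.Adj u w) → u ≠ w → ¬ D.Reachable u w := by
    rintro u w hu huw ⟨p⟩
    cases p with
    | nil => exact huw rfl
    | cons h _ => exact hu _ h
  generalize hS3 : (D.connectedComponentMk u3).supp = S3 at hcov φ hφ
  generalize hSb : (D.connectedComponentMk ub).supp = Sb at hcov φ hφ
  have hu3 : u3 ∈ S3 := by rw [← hS3]; rfl
  have hub : ub ∈ Sb := by rw [← hSb]; rfl
  have hdis : ∀ v ∈ S3, v ∉ Sb := by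
    intro v h h'
    rw [← hS3, SimpleGraph.ConnectedComponent.mem_supp_iff] at h
    rw [← hSb, SimpleGraph.ConnectedComponent.mem_supp_iff] at h'
    exact hne (h.symm.trans h')
  have h13' : u1 ∉ S3 := fun h => hiso u1 u3 hi1 h13 ((hmem _ _).1 (by rwa [hS3]))
  have h1b' : u1 ∉ Sb := fun h => hiso u1 ub hi1 h1b ((hmem _ _).1 (by rwa [hSb]))
  have ha3' : ua ∉ S3 := fun h => hiso ua u3 hia ha3 ((hmem _ _).1 (by rwa [hS3]))
  have hab' : ua ∉ Sb := fun h => hiso ua ub hia hab ((hmem _ _).1 (by rwa [hSb]))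
  have hb3 : ub ∉ S3 := fun h => hdis _ h hub
  have hcl3 : ∀ a b, D.Adj a b → (a ∈ S3 ↔ b ∈ S3) := by
    intro a b h
    rw [← hS3, hmem, hmem]
    exact ⟨fun k => h.symm.reachable.trans k, fun k => h.reachable.trans k⟩
  have hclb : ∀ a b, D.Adj a b → (a ∈ Sb ↔ b ∈ Sb) := by
    intro a b h
    rw [← hSb, hmem, hmem]
    exact ⟨fun k => h.symm.reachable.trans k, fun k => h.reachable.trans k⟩
  have hwbS : wb ∈ Sb := (hclb _ _ hwb).1 hub
  have hne1 : ∀ v ∈ S3, v ≠ u1 := fun v hv h => h13' (h ▸ hv)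
  have hne1b : ∀ v ∈ Sb, v ≠ u1 := fun v hv h => h1b' (h ▸ hv)
  have h23 : u2 ∉ S3 ∧ u4 ∉ S3 := by
    rcases hcase with ⟨rfl, rfl⟩ | ⟨rfl, rfl⟩
    · exact ⟨hb3, ha3'⟩
    · exact ⟨ha3', hb3⟩
  have hin : ∀ a ∈ S3, ∀ b ∈ S3, T.Adj a b → D.Adj a b := by
    intro a ha b hb h
    by_contra hc
    rcases hDiff a b h hc with h | h | h <;> rw [Sym2.eq_iff] at h <;>
      rcases h with ⟨rfl, rfl⟩ | ⟨rfl, rfl⟩ <;> tauto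
  have hE : ECat (res (res T {v | v ≠ u1}) S3) S3 u3 := by
    refine ecat_of_loc hL S3.ncard S3 u3 ub wb (Set.toFinite _) rfl hu3 hb3
      ⟨hadj, h13.symm, h1b.symm⟩ ⟨hDT hwb, h1b.symm, hne1b _ hwbS⟩
      (fun h => hdis u3 hu3 (h ▸ hwbS)) ?_
    intro a ha
    have hr : D.Reachable u3 a := ((hmem _ _).1 (by rwa [hS3])).symm
    rw [SimpleGraph.reachable_iff_reflTransGen] at hr
    have : ∀ a, Relation.ReflTransGen D.Adj u3 a → a ∈ S3 ∧ Relation.ReflTransGen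
        (fun a b => (res T {v | v ≠ u1}).Adj a b ∧ b ∈ S3) u3 a := by
      intro a h
      induction h with
      | refl => exact ⟨hu3, .refl⟩
      | tail _ hbc ih =>
        have hc := (hcl3 _ _ hbc).1 ih.1
        exact ⟨hc, ih.2.tail ⟨⟨hDT hbc, hne1 _ ih.1, hne1 _ hc⟩, hc⟩⟩
    exact (this a hr).2
  obtain ⟨d, f, X, hf, hf0, hX0, hX1, hX2, hA⟩ := hE.label
  have hA3 : ∀ a ∈ S3, ∀ b ∈ S3, (D.Adj a b ↔ (Ch S3 f X d a b ∨ Ch S3 f X d b a)) := by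
    intro a ha b hb
    have : D.Adj a b ↔ (res (res T {v | v ≠ u1}) S3).Adj a b :=
      ⟨fun h => ⟨⟨hDT h, hne1 _ ha, hne1 _ hb⟩, ha, hb⟩, fun h => hin a ha b hb h.1.1⟩
    rw [this, hA]
    constructor
    · rintro ⟨-, -, e, e1, e2, h | h⟩
      · exact Or.inl ⟨ha, hb, e, e1, e2, h⟩
      · exact Or.inr ⟨hb, ha, e, e1, e2, h⟩
    · rintro (⟨-, -, e, e1, e2, h⟩ | ⟨-, -, e, e1, e2, h⟩)
      · exact ⟨ha, hb, e, e1, e2, Or.inl h⟩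
      · exact ⟨ha, hb, e, e1, e2, Or.inr h⟩
  let f1 : V → ℕ := fun v => if h : v ∈ Sb then f (φ.symm ⟨v, h⟩).1 else 0
  have f1e : ∀ v (h : v ∈ Sb), f1 v = f (φ.symm ⟨v, h⟩).1 := fun v h => by simp [f1, h]
  have hAb : ∀ a ∈ Sb, ∀ b ∈ Sb, (D.Adj a b ↔ (Ch Sb f1 X d a b ∨ Ch Sb f1 X d b a)) := by
    intro a ha b hb
    have h1 : D.Adj a b ↔ D.Adj (φ.symm ⟨a, ha⟩).1 (φ.symm ⟨b, hb⟩).1 := by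
      have := φ.symm.map_adj_iff (v := ⟨a, ha⟩) (w := ⟨b, hb⟩)
      rw [SimpleGraph.induce_adj, SimpleGraph.induce_adj] at this
      exact this.symm
    rw [h1, hA3 _ (φ.symm ⟨a, ha⟩).2 _ (φ.symm ⟨b, hb⟩).2]
    unfold Ch
    rw [f1e a ha, f1e b hb]
    simp only [ha, hb, (φ.symm ⟨a, ha⟩).2, (φ.symm ⟨b, hb⟩).2, true_and]
  refine ⟨S3, Sb, f, f1, X, d, hf, ⟨?_, ?_, ?_⟩, hu3, hub, hf0, ?_, hdis, h13', h1b', ha3', hab',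
    hcov, hX0, hX1, hX2, ?_⟩
  · intro v hv
    rw [f1e v hv]; exact hf.mapsTo (φ.symm ⟨v, hv⟩).2
  · intro a ha b hb h
    rw [f1e a ha, f1e b hb] at h
    have := hf.injOn (φ.symm ⟨a, ha⟩).2 (φ.symm ⟨b, hb⟩).2 h
    have := φ.symm.injective (Subtype.ext this)
    simpa using this
  · intro k hk
    obtain ⟨v, hv, rfl⟩ := hf.surjOn hk
    refine ⟨(φ ⟨v, hv⟩).1, (φ ⟨v, hv⟩).2, ?_⟩
    rw [f1e _ (φ ⟨v, hv⟩).2]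
    simp
  · rw [f1e ub hub]
    have : φ.symm ⟨ub, hub⟩ = ⟨u3, hu3⟩ := by
      rw [RelIso.symm_apply_eq]
      exact Subtype.ext (hφ _).symm
    rw [this]; exact hf0
  · intro a b
    constructor
    · intro h
      rcases hcov a with rfl | rfl | ha | ha
      · exact absurd h (hi1 _)
      · exact absurd h (hia _)
      · exact Or.inl ((hA3 a ha b ((hcl3 _ _ h).1 ha)).1 h)
      · exact Or.inr ((hAb a ha b ((hclb _ _ h).1 ha)).1 h)
    · rintro (h | h)
      · have hh : a ∈ S3 ∧ b ∈ S3 := by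
          rcases h with h | h
          · exact ⟨h.1, h.2.1⟩
          · exact ⟨h.2.1, h.1⟩
        exact (hA3 a hh.1 b hh.2).2 h
      · have hh : a ∈ Sb ∧ b ∈ Sb := by
          rcases h with h | h
          · exact ⟨h.1, h.2.1⟩
          · exact ⟨h.2.1, h.1⟩
        exact (hAb a hh.1 b hh.2).2 h

lemma delP4_iff {V : Type*} {T : SimpleGraph V} {u1 u2 u3 u4 : V} (h12 : T.Adj u1 u2)
    (h23 : T.Adj u2 u3) (h34 : T.Adj u3 u4) (a b : V) :
    T.Adj a b ↔ (delP4 T u1 u2 u3 u4).Adj a b ∨ s(a, b) = s(u1, u2) ∨ s(a, b) = s(u2, u3) ∨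
      s(a, b) = s(u3, u4) := by
  rw [delP4, SimpleGraph.deleteEdges_adj]
  constructor
  · intro h
    by_cases hc : s(a, b) ∈ ({s(u1, u2), s(u2, u3), s(u3, u4)} : Set (Sym2 V))
    · exact Or.inr (by simpa using hc)
    · exact Or.inl ⟨h, hc⟩
  · rintro (h | h | h | h)
    · exact h.1
    · rw [← SimpleGraph.mem_edgeSet, h]; exact h12
    · rw [← SimpleGraph.mem_edgeSet, h]; exact h23
    · rw [← SimpleGraph.mem_edgeSet, h]; exact h34

lemma extract {n : ℕ} (T : SimpleGraph (Fin (2 * n))) (hT : IsWCaterpillar T) :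
    ∃ (x : ℕ → ℕ) (ρ ρ' : ℕ) (g : Fin (2 * n) → ℕ), Zig n x ∧
      ((ρ = 0 ∧ ρ' = 0) ∨ (ρ = 2 * n - 2 ∧ ρ' = n - 1)) ∧ Function.Injective g ∧
      Set.range g = Set.Iio (2 * n) ∧ T = (H1 n x ρ).comap g := by
  obtain ⟨-, u1, u2, u3, u4, ⟨n12, n13, n14, n23, n24, n34, a12, a23, a34, hP⟩, hC⟩ := hT
  have hL := loc_res hC
  have hcard : ∀ (d : ℕ) (g : Fin (2 * n) → ℕ), Function.Injective g →
      Set.range g = Set.Iio (2 * (d + 2)) → n = d + 2 := by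
    intro d g hg hr
    have h1 : (Set.range g).ncard = 2 * n := by
      rw [← Set.image_univ, Set.ncard_image_of_injective _ hg, Set.ncard_univ, Nat.card_fin]
    have h2 : (Set.Iio (2 * (d + 2))).ncard = 2 * (d + 2) := by
      rw [← Finset.coe_Iio, Set.ncard_coe_finset, Nat.card_Iio]
    rw [hr, h2] at h1
    omega
  rcases hP with hP | hP
  · obtain ⟨S3, Sb, f0, f1, X, d, b0, b1, m3, mb, z3, zb, hdis, h1, h2, h3, h4, hcov, hX0, hX1, hX2,
      hA⟩ := core hL hP n13 n12 n34.symm n24.symm a23.symm (Or.inl ⟨rfl, rfl⟩)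
    obtain ⟨g, hg, hr, hTg⟩ := assemble (p := u1) (q := u4) (w := u3) (ρ := 0) (X := X) T b0 b1
      m3 mb z3 zb hdis h1 h2 h3 h4 n14 (fun v => by have := hcov v; tauto) (Or.inl ⟨rfl, rfl⟩) hX2
      (fun a b => by
        rw [delP4_iff a12 a23 a34, hA]
        simp only [Sym2.eq_iff, Dir]
        generalize Ch S3 f0 X d a b = A1
        generalize Ch S3 f0 X d b a = A2
        generalize Ch Sb f1 X d a b = A3
        generalize Ch Sb f1 X d b a = A4
        grind)
    obtain rfl := hcard d g hg hr
    exact ⟨_, 0, 0, g, zig_ext hX0 hX1 hX2, Or.inl ⟨rfl, rfl⟩, hg, hr, hTg⟩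
  · obtain ⟨S3, Sb, f0, f1, X, d, b0, b1, m3, mb, z3, zb, hdis, h1, h2, h3, h4, hcov, hX0, hX1, hX2,
      hA⟩ := core hL hP n13 n14 n23 n24 a34 (Or.inr ⟨rfl, rfl⟩)
    obtain ⟨g, hg, hr, hTg⟩ := assemble (p := u2) (q := u1) (w := u2) (ρ := 2 * d + 2) (X := X) T
      b1 b0 mb m3 zb z3 (fun v hv hv' => hdis v hv' hv) h4 h3 h2 h1 n12.symm
      (fun v => by have := hcov v; tauto) (Or.inr ⟨rfl, rfl⟩) hX2
      (fun a b => by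
        rw [delP4_iff a12 a23 a34, hA]
        simp only [Sym2.eq_iff, Dir]
        generalize Ch S3 f0 X d a b = A1
        generalize Ch S3 f0 X d b a = A2
        generalize Ch Sb f1 X d a b = A3
        generalize Ch Sb f1 X d b a = A4
        grind)
    obtain rfl := hcard d g hg hr
    exact ⟨_, 2 * d + 2, d + 1, g, zig_ext hX0 hX1 hX2, Or.inr ⟨by omega, by omega⟩, hg, hr, hTg⟩

end W8

open WheelCfg GraphDefs in
/-- For every `w`-caterpillar `T` on `2n` vertices, the complete geometric graph on a
regular wheel configuration of `2n` points can be partitioned into `n` plane spanning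
trees, `n-1` of which are isomorphic to `T`, while the remaining one is a caterpillar
with exactly one boundary edge. -/
theorem stmt8 (n : ℕ) (hn : 2 ≤ n) (c : ℝ × ℝ) (R θ : ℝ) (hR : 0 < R)
    (T : SimpleGraph (Fin (2*n))) (hT : IsWCaterpillar T) :
    ∃ 𝒯 : Fin n → SimpleGraph (WV n),
      IsPartition 𝒯 ∧
      (∀ i, PlaneSpanningTree (wpos n c R θ) (𝒯 i)) ∧
      ∃ i₀ : Fin n,
        (IsCaterpillar (𝒯 i₀) ∧ boundaryCount (𝒯 i₀) = 1) ∧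
        (∀ j : Fin n, j ≠ i₀ → Nonempty (𝒯 j ≃g T)) := by
  classical
  obtain ⟨x, ρ, ρ', g, hx, hρ, hg, hr, hTg⟩ := W8.extract T hT
  have hρ1 : ρ = 0 ∨ ρ = 2 * n - 2 := by omega
  have hρ2 : ρ' = 0 ∨ ρ' = n - 1 := by omega
  have hiso : ∀ j : Fin n, j.val ≠ n - 1 → Nonempty (W8.tr n x ρ ρ' j ≃g T) := by
    intro j hj
    have hs : 2 * n - 1 - j.val ≤ 2 * n - 1 := by omega
    have := W8.iso_of_labels (W8.H1 n x ρ) (W8.kap n (2 * n - 1 - j.val)) g (W8.kap_inj hs) hg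
      (by rw [W8.kap_range hn hs, hr])
    rw [← hTg] at this
    simpa only [W8.tr, if_neg hj] using this
  have hlast : W8.tr n x ρ ρ' (⟨n - 1, by omega⟩ : Fin n) =
      (W8.H2 n x ρ' (n - 1)).comap (W8.kap n 1) := by simp [W8.tr]
  have hcat := W8.cat_H2 (s := 1) hn (by omega) hρ2 hx
  refine ⟨fun j => W8.tr n x ρ ρ' j, W8.tr_partition hn hρ hx, ?_, ⟨n - 1, by omega⟩, ⟨?_, ?_⟩, ?_⟩
  · intro j
    by_cases hj : j.val = n - 1
    · have hjn : 0 < n := by omega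
      have hj' : j = ⟨n - 1, Nat.sub_lt hjn one_pos⟩ := Fin.ext hj
      subst hj'
      refine ⟨?_, ?_⟩
      · simp only [hlast]; exact hcat.1
      · simp only [hlast]; exact W8.nonCrossing_of hn (by omega) c hR θ (W8.plane2 hn hρ2 hx)
    · refine ⟨?_, ?_⟩
      · obtain ⟨e⟩ := hiso j hj
        exact e.isTree_iff.2 hT.1
      · have := W8.nonCrossing_of hn (s := 2 * n - 1 - j.val) (by omega) c hR θ
          (W8.plane1 hn hρ1 hx)
        simpa only [W8.tr, if_neg hj] using this
  · simp only [hlast]; exact hcat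
  · simp only [hlast]; exact W8.bcount hn hρ2 hx
  · intro j hj
    exact hiso j (fun h => hj (Fin.ext h))
end

section
/- A set of 2n points in general position in which every point is incident with exactly one halving line has exactly n halving lines, and these can be labeled h_0, ..., h_{n−1} in anticlockwise order so that h_i passes through points labeled v_i and v_{i+n}, where v_0, v_1, ..., v_{2n−1} are in anticlockwise (radial) order; moreover h_i splits the remaining points into {v_{i+1}, ..., v_{i+n−1}} and {v_{i+n+1}, ..., v_{i+2n−1}} (indices mod 2n). -/
namespace Halving

/-- Signed side of `p` with respect to the oriented line through `u`, `v`. -/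
def sideVal (u v p : ℝ × ℝ) : ℝ :=
  (v.1 - u.1) * (p.2 - u.2) - (v.2 - u.2) * (p.1 - u.1)

/-- General position: no three distinct points of `P` are collinear. -/
def GenPos (P : Finset (ℝ × ℝ)) : Prop :=
  ∀ p ∈ P, ∀ q ∈ P, ∀ r ∈ P, p ≠ q → p ≠ r → q ≠ r →
    ¬ Collinear ℝ ({p, q, r} : Set (ℝ × ℝ))

/-- Points of `P` strictly on the negative side of the line through `u`, `v`. -/
noncomputable def negSide (P : Finset (ℝ × ℝ)) (u v : ℝ × ℝ) : Finset (ℝ × ℝ) :=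
  P.filter (fun p => sideVal u v p < 0)

/-- Points of `P` strictly on the positive side of the line through `u`, `v`. -/
noncomputable def posSide (P : Finset (ℝ × ℝ)) (u v : ℝ × ℝ) : Finset (ℝ × ℝ) :=
  P.filter (fun p => 0 < sideVal u v p)

/-- A `k`-halving line of a set `P` of `2m` points: a line through two points `u ≠ v` of `P`
splitting the remaining points into parts of sizes `m-1-k` and `m-1+k`.  `k = 0` is a
halving line. -/
def IsKHalving (P : Finset (ℝ × ℝ)) (m k : ℕ) (u v : ℝ × ℝ) : Prop :=
  u ∈ P ∧ v ∈ P ∧ u ≠ v ∧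
  min (negSide P u v).card (posSide P u v).card = m - 1 - k ∧
  max (negSide P u v).card (posSide P u v).card = m - 1 + k

/-- A halving line. -/
abbrev IsHalving (P : Finset (ℝ × ℝ)) (m : ℕ) (u v : ℝ × ℝ) : Prop := IsKHalving P m 0 u v

/-- Non-crossing geometric graph on points of the plane. -/
def NonCrossingG (G : SimpleGraph (ℝ × ℝ)) : Prop :=
  ∀ a b c d : ℝ × ℝ, G.Adj a b → G.Adj c d → s(a,b) ≠ s(c,d) →
    Disjoint (openSegment ℝ a b) (openSegment ℝ c d)

/-- A plane spanning tree of a finite point set `P`: all edges join points of `P`,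
the graph induced on `P` is a tree, and no two edges cross. -/
def PlaneSpanningTreeOn (P : Finset (ℝ × ℝ)) (G : SimpleGraph (ℝ × ℝ)) : Prop :=
  (∀ a b, G.Adj a b → a ∈ P ∧ b ∈ P) ∧ (G.induce (↑P : Set (ℝ × ℝ))).IsTree ∧ NonCrossingG G

/-- Partition of the edge set of the complete geometric graph on `P`. -/
def IsGeomPartition (P : Finset (ℝ × ℝ)) {n : ℕ} (T : Fin n → SimpleGraph (ℝ × ℝ)) : Prop :=
  ∀ a b : ℝ × ℝ, a ∈ P → b ∈ P → a ≠ b → ∃! i : Fin n, (T i).Adj a b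

/-- The number of halving lines of `P` (as unordered pairs of points). -/
noncomputable def halvingCount (P : Finset (ℝ × ℝ)) (m : ℕ) : ℕ :=
  Set.ncard {e : Sym2 (ℝ × ℝ) | ∃ u v, e = s(u,v) ∧ IsHalving P m u v}

/-- An `h`-labeling: a bijective labeling `v_0, …, v_{2n-1}` of `P` such that for every `i`
the line through `v_i` and `v_{i+n}` is a halving line. -/
def IsHLabeling (P : Finset (ℝ × ℝ)) (n : ℕ) (v : Fin (2*n) → ℝ × ℝ) : Prop :=
  Function.Injective v ∧ Set.range v = (↑P : Set (ℝ × ℝ)) ∧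
  ∀ i : Fin (2*n), IsHalving P n (v i) (v (i + ⟨n % (2*n), Nat.mod_lt _ i.pos⟩))

/-- Convex position: every point of `P` is outside the convex hull of the others. -/
def ConvexPos (P : Finset (ℝ × ℝ)) : Prop :=
  ∀ p ∈ P, p ∉ convexHull ℝ (↑(P.erase p) : Set (ℝ × ℝ))

end Halving
namespace Halving

lemma comb_lemma {ι : Type*} [DecidableEq ι] (A B : Finset ι) (t : ι → ℝ) (n : ℕ) (hn : 1 ≤ n)
    (hA : A.card ≤ n - 1) (hB : n ≤ B.card) (ht : Set.InjOn t B) :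
    ∃ q ∈ B, (A.filter (fun r => t q < t r)).card + (B.filter (fun r => t r < t q)).card
      = n - 1 := by
  classical
  let S := B.filter (fun q => n ≤ (A.filter (fun r => t q < t r)).card
    + (B.filter (fun r => t r ≤ t q)).card)
  have hBne : B.Nonempty := Finset.card_pos.mp (by omega)
  have hS : S.Nonempty := by
    obtain ⟨m, hm, hmax⟩ := B.exists_max_image t hBne
    refine ⟨m, Finset.mem_filter.mpr ⟨hm, ?_⟩⟩
    have : B.filter (fun r => t r ≤ t m) = B := Finset.filter_true_of_mem hmax
    rw [this]; omega
  obtain ⟨q, hq, hmin⟩ := S.exists_min_image t hS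
  have hqB : q ∈ B := (Finset.mem_filter.mp hq).1
  have hq2 := (Finset.mem_filter.mp hq).2
  refine ⟨q, hqB, ?_⟩
  have h1 : B.filter (fun r => t r ≤ t q) = insert q (B.filter (fun r => t r < t q)) := by
    ext r
    simp only [Finset.mem_filter, Finset.mem_insert]
    constructor
    · rintro ⟨h, h'⟩
      rcases h'.lt_or_eq with h' | h'
      · exact Or.inr ⟨h, h'⟩
      · exact Or.inl (ht h hqB h')
    · rintro (h | h)
      · subst h; exact ⟨hqB, le_refl _⟩
      · exact ⟨h.1, h.2.le⟩
  rw [h1, Finset.card_insert_of_notMem (by simp)] at hq2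
  have hup : (A.filter (fun r => t q < t r)).card + (B.filter (fun r => t r < t q)).card
      ≤ n - 1 := by
    rcases (B.filter (fun r => t r < t q)).eq_empty_or_nonempty with h | h
    · rw [h, Finset.card_empty]
      exact (Finset.card_filter_le _ _).trans hA
    · obtain ⟨m, hm, hmax⟩ := Finset.exists_max_image _ t h
      have hm' := Finset.mem_filter.mp hm
      have hmS : m ∉ S := fun hh => absurd (hmin m hh) (not_le.mpr hm'.2)
      have h2 : (A.filter (fun r => t m < t r)).card + (B.filter (fun r => t r ≤ t m)).card
          ≤ n - 1 := by
        by_contra hc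
        exact hmS (Finset.mem_filter.mpr ⟨hm'.1, by omega⟩)
      refine le_trans (Nat.add_le_add (Finset.card_le_card ?_) (Finset.card_le_card ?_)) h2
      · intro r hr
        have := Finset.mem_filter.mp hr
        exact Finset.mem_filter.mpr ⟨this.1, hm'.2.trans this.2⟩
      · intro r hr
        exact Finset.mem_filter.mpr ⟨(Finset.mem_filter.mp hr).1, hmax r hr⟩
  omega

lemma sideVal_ne (P : Finset (ℝ × ℝ)) (hgp : GenPos P) {p q r : ℝ × ℝ} (hp : p ∈ P) (hq : q ∈ P)
    (hr : r ∈ P) (hpq : p ≠ q) (hpr : p ≠ r) (hqr : q ≠ r) : sideVal p q r ≠ 0 := by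
  intro h
  apply hgp p hp q hq r hr hpq hpr hqr
  unfold sideVal at h
  rw [collinear_iff_of_mem (p₀ := p) (by simp)]
  refine ⟨q - p, ?_⟩
  have hne : q.1 - p.1 ≠ 0 ∨ q.2 - p.2 ≠ 0 := by
    by_contra hc
    push Not at hc
    exact hpq (Prod.ext (by linarith [hc.1]) (by linarith [hc.2]))
  intro x hx
  simp only [Set.mem_insert_iff, Set.mem_singleton_iff] at hx
  rcases hx with rfl | rfl | rfl
  · exact ⟨0, by simp⟩
  · exact ⟨1, by simp⟩
  · rcases hne with hne | hne
    · refine ⟨(x.1 - p.1) / (q.1 - p.1), ?_⟩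
      ext
      · simp; field_simp; ring
      · simp; field_simp; linarith
    · refine ⟨(x.2 - p.2) / (q.2 - p.2), ?_⟩
      ext
      · simp; field_simp; linarith
      · simp; field_simp; ring

lemma sideVal_swap (p q r : ℝ × ℝ) : sideVal q p r = - sideVal p q r := by
  unfold sideVal; ring

lemma sideVal_left (p q : ℝ × ℝ) : sideVal p q p = 0 := by
  unfold sideVal; ring

lemma sideVal_right (p q : ℝ × ℝ) : sideVal p q q = 0 := by
  unfold sideVal; ring

lemma negSide_swap (P : Finset (ℝ × ℝ)) (p q : ℝ × ℝ) : negSide P q p = posSide P p q := by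
  unfold negSide posSide
  simp [sideVal_swap p q]

lemma posSide_swap (P : Finset (ℝ × ℝ)) (p q : ℝ × ℝ) : posSide P q p = negSide P p q :=
  (negSide_swap P q p).symm

lemma isHalving_iff (P : Finset (ℝ × ℝ)) (n : ℕ) (p q : ℝ × ℝ) : IsHalving P n p q ↔
    p ∈ P ∧ q ∈ P ∧ p ≠ q ∧ (negSide P p q).card = n - 1 ∧ (posSide P p q).card = n - 1 := by
  unfold IsHalving IsKHalving
  constructor
  · rintro ⟨a, b, c, d, e⟩
    exact ⟨a, b, c, by omega, by omega⟩
  · rintro ⟨a, b, c, d, e⟩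
    exact ⟨a, b, c, by omega, by omega⟩

lemma isHalving_symm (P : Finset (ℝ × ℝ)) (n : ℕ) (p q : ℝ × ℝ) (h : IsHalving P n p q) :
    IsHalving P n q p := by
  rw [isHalving_iff] at *
  rw [negSide_swap P p q, posSide_swap P p q]
  exact ⟨h.2.1, h.1, h.2.2.1.symm, h.2.2.2.2, h.2.2.2.1⟩

lemma card_sides (P : Finset (ℝ × ℝ)) (hgp : GenPos P) {p q : ℝ × ℝ} (hp : p ∈ P) (hq : q ∈ P)
    (hpq : p ≠ q) : (negSide P p q).card + (posSide P p q).card + 2 = P.card := by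
  have h1 : P = insert p (insert q (negSide P p q ∪ posSide P p q)) := by
    ext r
    simp only [Finset.mem_insert, Finset.mem_union, negSide, posSide, Finset.mem_filter]
    constructor
    · intro hr
      by_cases h1 : r = p
      · exact Or.inl h1
      by_cases h2 : r = q
      · exact Or.inr (Or.inl h2)
      have := sideVal_ne P hgp hp hq hr hpq (Ne.symm h1) (Ne.symm h2)
      rcases lt_or_gt_of_ne this with h | h <;> tauto
    · rintro (h | h | h | h)
      · rw [h]; exact hp
      · rw [h]; exact hq
      · exact h.1
      · exact h.1
  have hd : Disjoint (negSide P p q) (posSide P p q) := by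
    rw [Finset.disjoint_left]
    intro r h1 h2
    have h1 := (Finset.mem_filter.mp h1).2
    have h2 := (Finset.mem_filter.mp h2).2
    linarith
  conv_rhs => rw [h1]
  rw [Finset.card_insert_of_notMem, Finset.card_insert_of_notMem, Finset.card_union_of_disjoint hd]
  · simp [negSide, posSide, sideVal_right]
  · simp [negSide, posSide, sideVal_left, hpq]

/-- linear functional -/
def lf (α β : ℝ) (p : ℝ × ℝ) : ℝ := α * p.1 + β * p.2

lemma exists_generic (P : Finset (ℝ × ℝ)) (a b : ℝ × ℝ) (hab : a ≠ b) :
    ∃ α β : ℝ, (∀ q ∈ P, ∀ r ∈ P, q ≠ r → lf α β q ≠ lf α β r) ∧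
      (∀ q ∈ P, ∀ r ∈ P, sideVal a b q < sideVal a b r → lf α β q < lf α β r) := by
  have key : ∀ q ∈ P, ∀ r ∈ P, ∀ᶠ ε : ℝ in nhdsWithin 0 (Set.Ioi 0),
      (q ≠ r → lf (-(b.2 - a.2) + ε * (b.1 - a.1)) ((b.1 - a.1) + ε * (b.2 - a.2)) q ≠
        lf (-(b.2 - a.2) + ε * (b.1 - a.1)) ((b.1 - a.1) + ε * (b.2 - a.2)) r) ∧
      (sideVal a b q < sideVal a b r →
        lf (-(b.2 - a.2) + ε * (b.1 - a.1)) ((b.1 - a.1) + ε * (b.2 - a.2)) q <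
        lf (-(b.2 - a.2) + ε * (b.1 - a.1)) ((b.1 - a.1) + ε * (b.2 - a.2)) r) := by
    intro q _ r _
    have hlf : ∀ ε : ℝ, lf (-(b.2 - a.2) + ε * (b.1 - a.1)) ((b.1 - a.1) + ε * (b.2 - a.2)) r -
        lf (-(b.2 - a.2) + ε * (b.1 - a.1)) ((b.1 - a.1) + ε * (b.2 - a.2)) q =
        (sideVal a b r - sideVal a b q) +
          ε * ((b.1 - a.1) * (r.1 - q.1) + (b.2 - a.2) * (r.2 - q.2)) := by
      intro ε; unfold lf sideVal; ring
    set D := (b.1 - a.1) * (r.1 - q.1) + (b.2 - a.2) * (r.2 - q.2) with hD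
    have hcont : Filter.Tendsto (fun ε : ℝ => (sideVal a b r - sideVal a b q) + ε * D)
        (nhdsWithin 0 (Set.Ioi 0)) (nhds (sideVal a b r - sideVal a b q)) := by
      have : ContinuousAt (fun ε : ℝ => (sideVal a b r - sideVal a b q) + ε * D) 0 := by
        fun_prop
      have h := this.tendsto
      simp only [zero_mul, add_zero] at h
      exact h.mono_left nhdsWithin_le_nhds
    rcases lt_trichotomy (sideVal a b r - sideVal a b q) 0 with h | h | h
    · filter_upwards [hcont.eventually_lt_const h] with ε hε
      rw [← hlf] at hε
      exact ⟨fun _ hh => by linarith, fun hh => by linarith⟩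
    · filter_upwards [self_mem_nhdsWithin] with ε hε
      refine ⟨fun hqr hh => ?_, fun hh => by linarith⟩
      have h3 := hlf ε
      rw [hh, sub_self, h, zero_add] at h3
      have hε : (0:ℝ) < ε := hε
      have hD0 : D = 0 := by
        rcases mul_eq_zero.mp h3.symm with h | h
        · linarith
        · exact h
      have hs : (b.1 - a.1) * (r.2 - q.2) - (b.2 - a.2) * (r.1 - q.1) = 0 := by
        rw [← h]; unfold sideVal; ring
      rw [hD] at hD0
      have hpos : 0 < (b.1 - a.1)^2 + (b.2 - a.2)^2 := by
        by_contra hc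
        apply hab
        have e1 : b.1 - a.1 = 0 := by nlinarith [sq_nonneg (b.1 - a.1), sq_nonneg (b.2 - a.2)]
        have e2 : b.2 - a.2 = 0 := by nlinarith [sq_nonneg (b.1 - a.1), sq_nonneg (b.2 - a.2)]
        exact Prod.ext (by linarith) (by linarith)
      have f1 : ((b.1 - a.1)^2 + (b.2 - a.2)^2) * (r.1 - q.1) = 0 := by
        linear_combination (b.1 - a.1) * hD0 - (b.2 - a.2) * hs
      have f2 : ((b.1 - a.1)^2 + (b.2 - a.2)^2) * (r.2 - q.2) = 0 := by
        linear_combination (b.2 - a.2) * hD0 + (b.1 - a.1) * hs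
      have g1 := (mul_eq_zero.mp f1).resolve_left hpos.ne'
      have g2 := (mul_eq_zero.mp f2).resolve_left hpos.ne'
      exact hqr (Prod.ext (by linarith) (by linarith))
    · filter_upwards [hcont.eventually_const_lt h] with ε hε
      rw [← hlf] at hε
      exact ⟨fun _ hh => by linarith, fun hh => by linarith⟩
  have key2 : ∀ᶠ ε : ℝ in nhdsWithin 0 (Set.Ioi 0), ∀ q ∈ P, ∀ r ∈ P,
      (q ≠ r → lf (-(b.2 - a.2) + ε * (b.1 - a.1)) ((b.1 - a.1) + ε * (b.2 - a.2)) q ≠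
        lf (-(b.2 - a.2) + ε * (b.1 - a.1)) ((b.1 - a.1) + ε * (b.2 - a.2)) r) ∧
      (sideVal a b q < sideVal a b r →
        lf (-(b.2 - a.2) + ε * (b.1 - a.1)) ((b.1 - a.1) + ε * (b.2 - a.2)) q <
        lf (-(b.2 - a.2) + ε * (b.1 - a.1)) ((b.1 - a.1) + ε * (b.2 - a.2)) r) := by
    rw [Filter.eventually_all_finset]
    intro q hq
    rw [Filter.eventually_all_finset]
    exact key q hq
  obtain ⟨ε, hε⟩ := key2.exists
  exact ⟨_, _, fun q hq r hr => (hε q hq r hr).1, fun q hq r hr => (hε q hq r hr).2⟩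

lemma sign_aux (f g t u : ℝ) (c s : ℝ) (hc : 0 < c) (hf : f < 0) (hg : g ≠ 0)
    (h : c * s = f * g * (u - t)) : s < 0 ↔ (0 < g ∧ t < u) ∨ (g < 0 ∧ u < t) := by
  have h1 : s < 0 ↔ c * s < 0 := by
    constructor
    · intro h; exact mul_neg_of_pos_of_neg hc h
    · intro h; by_contra h2; push Not at h2; nlinarith
  rw [h1, h]
  rcases lt_or_gt_of_ne hg with hg | hg
  · have : 0 < f * g := mul_pos_of_neg_of_neg hf hg
    constructor
    · intro h; right; refine ⟨hg, ?_⟩; by_contra h2; push Not at h2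
      nlinarith [mul_nonneg this.le (sub_nonneg.mpr h2)]
    · rintro (h | h)
      · linarith [h.1]
      · exact mul_neg_of_pos_of_neg this (by linarith [h.2])
  · have : f * g < 0 := mul_neg_of_neg_of_pos hf hg
    constructor
    · intro h; left; refine ⟨hg, ?_⟩; by_contra h2; push Not at h2
      nlinarith [mul_nonneg (neg_nonneg.mpr this.le) (sub_nonneg.mpr h2)]
    · rintro (h | h)
      · exact mul_neg_of_neg_of_pos this (by linarith [h.2])
      · linarith [h.1]

lemma exists_halving_below (P : Finset (ℝ × ℝ)) (n : ℕ) (hn : 2 ≤ n)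
    (hgp : GenPos P) (hcard : P.card = 2*n) (α β : ℝ)
    (hinj : ∀ q ∈ P, ∀ r ∈ P, q ≠ r → lf α β q ≠ lf α β r) (p : ℝ × ℝ) (hp : p ∈ P)
    (hup : (P.filter (fun q => lf α β p < lf α β q)).card ≤ n - 1) :
    ∃ q ∈ P, lf α β q < lf α β p ∧ IsHalving P n p q := by
  classical
  set A := P.filter (fun q => lf α β p < lf α β q) with hA
  set B := P.filter (fun q => lf α β q < lf α β p) with hB
  have hPeq : P = insert p (A ∪ B) := by
    ext r
    simp only [Finset.mem_insert, Finset.mem_union, hA, hB, Finset.mem_filter]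
    constructor
    · intro hr
      by_cases h : r = p
      · exact Or.inl h
      · rcases lt_or_gt_of_ne (hinj r hr p hp h) with h | h <;> tauto
    · rintro (h | h | h)
      · rw [h]; exact hp
      · exact h.1
      · exact h.1
  have hBc : n ≤ B.card := by
    have h1 := Finset.card_insert_le p (A ∪ B)
    rw [← hPeq] at h1
    have h2 := Finset.card_union_le A B
    omega
  set t : ℝ × ℝ → ℝ := fun q => lf (-β) α (q - p) / lf α β (q - p) with ht
  have hsub : ∀ q, lf α β (q - p) = lf α β q - lf α β p := by
    intro q; simp [lf]; ring
  have hαβ : 0 < α^2 + β^2 := by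
    by_contra hc
    have e1 : α = 0 := by nlinarith [sq_nonneg α, sq_nonneg β]
    have e2 : β = 0 := by nlinarith [sq_nonneg α, sq_nonneg β]
    have : B = ∅ := by rw [hB, e1, e2]; simp [lf]
    rw [this] at hBc; simp at hBc; omega
  have hside : ∀ q r, lf α β (q - p) ≠ 0 → lf α β (r - p) ≠ 0 →
      (α^2+β^2) * sideVal p q r = lf α β (q - p) * lf α β (r - p) * (t r - t q) := by
    intro q r h1 h2
    have : lf α β (q - p) * lf α β (r - p) * (t r - t q) =
        lf α β (q - p) * lf (-β) α (r - p) - lf (-β) α (q - p) * lf α β (r - p) := by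
      simp only [ht]; field_simp
    rw [this]
    simp [lf, sideVal]; ring
  have hBlt : ∀ q ∈ B, q ∈ P ∧ lf α β (q - p) < 0 ∧ p ≠ q := by
    intro q hq
    have := Finset.mem_filter.mp hq
    refine ⟨this.1, by rw [hsub]; linarith [this.2], ?_⟩
    rintro rfl
    exact lt_irrefl _ this.2
  have htinj : Set.InjOn t B := by
    intro q hq r hr hqr
    by_contra hne
    obtain ⟨q1, q2, q3⟩ := hBlt q hq
    obtain ⟨r1, r2, r3⟩ := hBlt r hr
    have h1 := hside q r q2.ne r2.ne
    rw [hqr, sub_self, mul_zero] at h1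
    exact sideVal_ne P hgp hp q1 r1 q3 r3 hne ((mul_eq_zero.mp h1).resolve_left hαβ.ne')
  obtain ⟨q, hq, hcount⟩ := comb_lemma A B t n (by omega) hup hBc htinj
  obtain ⟨q1, q2, q3⟩ := hBlt q hq
  have hneg : negSide P p q = A.filter (fun r => t q < t r) ∪ B.filter (fun r => t r < t q) := by
    ext r
    simp only [negSide, hA, hB, Finset.mem_union, Finset.mem_filter]
    by_cases hr : r ∈ P
    · by_cases hrp : r = p
      · subst hrp; simp [sideVal_left]
      · have hne : lf α β (r - p) ≠ 0 := by
          rw [hsub]; exact sub_ne_zero.mpr (hinj r hr p hp hrp)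
        rw [sign_aux _ _ (t q) (t r) _ _ hαβ q2 hne (hside q r q2.ne hne), hsub, sub_pos, sub_neg]
        tauto
    · tauto
  have hdis : Disjoint (A.filter (fun r => t q < t r)) (B.filter (fun r => t r < t q)) := by
    rw [Finset.disjoint_left]
    intro r h1 h2
    have h1 := (Finset.mem_filter.mp h1).2
    have h2 := (Finset.mem_filter.mp h2).2
    linarith
  have hnc : (negSide P p q).card = n - 1 := by
    rw [hneg, Finset.card_union_of_disjoint hdis]; exact hcount
  have := card_sides P hgp hp q1 q3
  refine ⟨q, q1, (Finset.mem_filter.mp hq).2, (isHalving_iff _ _ _ _).mpr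
    ⟨hp, q1, q3, hnc, by omega⟩⟩

end Halving
namespace Halving

/-- cross product of the vectors `p - p'` and `q - q'` -/
def cr (p p' q q' : ℝ × ℝ) : ℝ := (p.1 - p'.1) * (q.2 - q'.2) - (p.2 - p'.2) * (q.1 - q'.1)

section
variable {P : Finset (ℝ × ℝ)} {n : ℕ} {σ : ℝ × ℝ → ℝ × ℝ}

lemma not_same_side (hn : 2 ≤ n) (hgp : GenPos P) (hcard : P.card = 2*n)
    (h1 : ∀ p ∈ P, σ p ∈ P ∧ IsHalving P n p (σ p))
    (h2 : ∀ p ∈ P, ∀ q ∈ P, IsHalving P n p q → q = σ p)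
    (h3 : ∀ p ∈ P, σ (σ p) = p) (a b p : ℝ × ℝ) (hab : IsHalving P n a b) (hp : p ∈ P)
    (s1 : 0 < sideVal a b p) (s2 : 0 < sideVal a b (σ p)) : False := by
  obtain ⟨ha, hb, hne, hng, hps⟩ := (isHalving_iff _ _ _ _).mp hab
  obtain ⟨α, β, hinj, hmono⟩ := exists_generic P a b hne
  have key : ∀ p ∈ P, 0 < sideVal a b p → lf α β (σ p) < lf α β p := by
    intro p hp hs
    obtain ⟨q, hq, hlt, hh⟩ := exists_halving_below P n hn hgp hcard α β hinj p hp (by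
      rw [← hps]
      apply Finset.card_le_card
      intro q hq
      obtain ⟨hqP, hq⟩ := Finset.mem_filter.mp hq
      refine Finset.mem_filter.mpr ⟨hqP, ?_⟩
      by_contra hc
      have := hmono q hqP p hp (by linarith)
      linarith)
    rw [← h2 p hp q hq hh]
    exact hlt
  have k1 := key p hp s1
  have k2 := key (σ p) (h1 p hp).1 s2
  rw [h3 p hp] at k2
  linarith

lemma side_cr (hn : 2 ≤ n) (hgp : GenPos P) (hcard : P.card = 2*n)
    (h1 : ∀ p ∈ P, σ p ∈ P ∧ IsHalving P n p (σ p))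
    (h2 : ∀ p ∈ P, ∀ q ∈ P, IsHalving P n p q → q = σ p)
    (h3 : ∀ p ∈ P, σ (σ p) = p) (p q : ℝ × ℝ) (hp : p ∈ P) (hq : q ∈ P)
    (n1 : q ≠ p) (n2 : q ≠ σ p) :
    (0 < cr p (σ p) q (σ q) ∧ sideVal p (σ p) q < 0) ∨
    (cr p (σ p) q (σ q) < 0 ∧ 0 < sideVal p (σ p) q) := by
  obtain ⟨hsp, hh⟩ := h1 p hp
  obtain ⟨hsq, hh'⟩ := h1 q hq
  have hne : p ≠ σ p := hh.2.2.1
  have m1 : σ q ≠ p := by rintro rfl; exact n2 (h3 q hq).symm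
  have m2 : σ q ≠ σ p := by
    intro h; apply n1; rw [← h3 q hq, h, h3 p hp]
  have e1 := sideVal_ne P hgp hp hsp hq hne n1.symm n2.symm
  have e2 := sideVal_ne P hgp hp hsp hsq hne m1.symm m2.symm
  have hcr : cr p (σ p) q (σ q) = sideVal p (σ p) (σ q) - sideVal p (σ p) q := by
    unfold cr sideVal; ring
  rcases lt_or_gt_of_ne e1 with e1 | e1 <;> rcases lt_or_gt_of_ne e2 with e2 | e2
  · exact (not_same_side hn hgp hcard h1 h2 h3 (σ p) p q (isHalving_symm _ _ _ _ hh) hq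
      (by rw [sideVal_swap]; linarith) (by rw [sideVal_swap]; linarith)).elim
  · left; exact ⟨by linarith, e1⟩
  · right; exact ⟨by linarith, e1⟩
  · exact (not_same_side hn hgp hcard h1 h2 h3 p (σ p) q hh hq e1 e2).elim

end

lemma exists_labeling (P : Finset (ℝ × ℝ)) (n : ℕ) (hn : 2 ≤ n)
    (hgp : GenPos P) (hcard : P.card = 2*n) (σ : ℝ × ℝ → ℝ × ℝ)
    (h1 : ∀ p ∈ P, σ p ∈ P ∧ IsHalving P n p (σ p))
    (h2 : ∀ p ∈ P, ∀ q ∈ P, IsHalving P n p q → q = σ p)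
    (h3 : ∀ p ∈ P, σ (σ p) = p) :
    ∃ u : Fin n → ℝ × ℝ, (∀ i, u i ∈ P) ∧
      (∀ i j, i < j → 0 < cr (u i) (σ (u i)) (u j) (σ (u j))) ∧
      (∀ p ∈ P, ∃ i, p = u i ∨ p = σ (u i)) := by
  classical
  obtain ⟨a, ha⟩ : P.Nonempty := Finset.card_pos.mp (by omega)
  obtain ⟨α, β, hinj, -⟩ := exists_generic P a (σ a) (h1 a ha).2.2.2.1
  have hne : ∀ p ∈ P, p ≠ σ p := fun p hp => (h1 p hp).2.2.2.1
  set L := P.filter (fun p => lf α β (σ p) < lf α β p) with hL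
  set L' := P.filter (fun p => lf α β p < lf α β (σ p)) with hL'
  have hLL : L.card = L'.card := by
    refine Finset.card_bij (fun p _ => σ p) ?_ ?_ ?_
    · intro p hp
      obtain ⟨hp, hlt⟩ := Finset.mem_filter.mp hp
      exact Finset.mem_filter.mpr ⟨(h1 p hp).1, by rw [h3 p hp]; exact hlt⟩
    · intro p hp q hq h
      rw [← h3 p (Finset.mem_filter.mp hp).1, h, h3 q (Finset.mem_filter.mp hq).1]
    · intro p hp
      obtain ⟨hp, hlt⟩ := Finset.mem_filter.mp hp
      exact ⟨σ p, Finset.mem_filter.mpr ⟨(h1 p hp).1, by rw [h3 p hp]; exact hlt⟩, h3 p hp⟩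
  have hLU : L.card + L'.card = P.card := by
    rw [← Finset.card_union_of_disjoint]
    · congr 1
      ext p
      simp only [hL, hL', Finset.mem_union, Finset.mem_filter]
      constructor
      · tauto
      · intro hp
        rcases lt_or_gt_of_ne (hinj p hp _ (h1 p hp).1 (hne p hp)) with h | h <;> tauto
    · rw [Finset.disjoint_left]
      intro r h1 h2
      have h1 := (Finset.mem_filter.mp h1).2
      have h2 := (Finset.mem_filter.mp h2).2
      linarith
  have hLc : L.card = n := by omega
  have hαβ : 0 < α^2 + β^2 := by
    by_contra hc
    have e1 : α = 0 := by nlinarith [sq_nonneg α, sq_nonneg β]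
    have e2 : β = 0 := by nlinarith [sq_nonneg α, sq_nonneg β]
    exact hinj a ha _ (h1 a ha).1 (hne a ha) (by rw [e1, e2]; simp [lf])
  set t : ℝ × ℝ → ℝ := fun p => lf (-β) α (p - σ p) / lf α β (p - σ p) with ht
  have hLp : ∀ p ∈ L, p ∈ P ∧ 0 < lf α β (p - σ p) := by
    intro p hp
    obtain ⟨hp, hlt⟩ := Finset.mem_filter.mp hp
    refine ⟨hp, ?_⟩
    have : lf α β (p - σ p) = lf α β p - lf α β (σ p) := by simp [lf]; ring
    linarith
  have hcr : ∀ p ∈ L, ∀ q ∈ L, (α^2+β^2) * cr p (σ p) q (σ q) =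
      lf α β (p - σ p) * lf α β (q - σ q) * (t q - t p) := by
    intro p hp q hq
    have g1 := (hLp p hp).2.ne'
    have g2 := (hLp q hq).2.ne'
    have : lf α β (p - σ p) * lf α β (q - σ q) * (t q - t p) =
        lf α β (p - σ p) * lf (-β) α (q - σ q) - lf (-β) α (p - σ p) * lf α β (q - σ q) := by
      simp only [ht]; field_simp
    rw [this]
    simp [lf, cr]; ring
  have htinj : Set.InjOn t L := by
    intro p hp q hq hpq
    by_contra hc
    have h := hcr p hp q hq
    rw [hpq, sub_self, mul_zero] at h
    have h := (mul_eq_zero.mp h).resolve_left hαβ.ne'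
    have hqs : q ≠ σ p := by
      rintro rfl
      have e1 := (Finset.mem_filter.mp hp).2
      have e2 := (Finset.mem_filter.mp hq).2
      rw [h3 p (hLp p hp).1] at e2
      linarith
    rcases side_cr hn hgp hcard h1 h2 h3 p q (hLp p hp).1 (hLp q hq).1 (Ne.symm hc) hqs with g | g
    · linarith [g.1]
    · linarith [g.1]
  have hT : (L.image t).card = n := by rw [Finset.card_image_of_injOn htinj, hLc]
  have hex : ∀ i : Fin n, ∃ p ∈ L, t p = (L.image t).orderEmbOfFin hT i := by
    intro i
    exact Finset.mem_image.mp (Finset.orderEmbOfFin_mem _ hT i)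
  choose u hu htu using hex
  refine ⟨u, fun i => (hLp _ (hu i)).1, ?_, ?_⟩
  · intro i j hij
    have hlt : t (u i) < t (u j) := by
      rw [htu, htu]; exact (OrderEmbedding.lt_iff_lt _).mpr hij
    have h := hcr _ (hu i) _ (hu j)
    have : 0 < (α^2+β^2) * cr (u i) (σ (u i)) (u j) (σ (u j)) := by
      rw [h]
      exact mul_pos (mul_pos (hLp _ (hu i)).2 (hLp _ (hu j)).2) (by linarith)
    exact (pos_iff_pos_of_mul_pos this).mp hαβ
  · have hsurj : ∀ p ∈ L, ∃ i, p = u i := by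
      intro p hp
      have : t p ∈ Set.range ((L.image t).orderEmbOfFin hT) := by
        rw [Finset.range_orderEmbOfFin]
        exact Finset.mem_coe.mpr (Finset.mem_image_of_mem t hp)
      obtain ⟨i, hi⟩ := this
      exact ⟨i, htinj hp (hu i) (by rw [htu, hi])⟩
    intro p hp
    rcases lt_or_gt_of_ne (hinj p hp _ (h1 p hp).1 (hne p hp)) with h | h
    · obtain ⟨i, hi⟩ := hsurj (σ p) (Finset.mem_filter.mpr ⟨(h1 p hp).1, by rw [h3 p hp]; exact h⟩)
      exact ⟨i, Or.inr (by rw [← hi, h3 p hp])⟩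
    · obtain ⟨i, hi⟩ := hsurj p (Finset.mem_filter.mpr ⟨hp, h⟩)
      exact ⟨i, Or.inl hi⟩

/-- There is a periodic sequence of labels. -/
lemma exists_seq (P : Finset (ℝ × ℝ)) (n : ℕ) (hn : 2 ≤ n)
    (hgp : GenPos P) (hcard : P.card = 2*n) (σ : ℝ × ℝ → ℝ × ℝ)
    (h1 : ∀ p ∈ P, σ p ∈ P ∧ IsHalving P n p (σ p))
    (h2 : ∀ p ∈ P, ∀ q ∈ P, IsHalving P n p q → q = σ p)
    (h3 : ∀ p ∈ P, σ (σ p) = p) :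
    ∃ V : ℕ → ℝ × ℝ, (∀ k, V k ∈ P) ∧ (∀ k, V (k + n) = σ (V k)) ∧
      (∀ i s, 1 ≤ s → s ≤ n - 1 → 0 < cr (V i) (σ (V i)) (V (i+s)) (σ (V (i+s)))) ∧
      (∀ p ∈ P, ∃ k < 2*n, p = V k) := by
  obtain ⟨u, hu, hcr, hsurj⟩ := exists_labeling P n hn hgp hcard σ h1 h2 h3
  have hn0 : 0 < n := by omega
  let V : ℕ → ℝ × ℝ := fun k =>
    if (k / n) % 2 = 0 then u ⟨k % n, Nat.mod_lt _ hn0⟩ else σ (u ⟨k % n, Nat.mod_lt _ hn0⟩)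
  have hVP : ∀ k, V k ∈ P := by
    intro k
    simp only [V]
    split_ifs
    · exact hu _
    · exact (h1 _ (hu _)).1
  have hVn : ∀ k, V (k + n) = σ (V k) := by
    intro k
    simp only [V, Nat.add_mod_right, Nat.add_div_right k hn0]
    by_cases h : (k / n) % 2 = 0
    · rw [if_pos h, if_neg (by omega)]
    · rw [if_neg h, if_pos (by omega), h3 _ (hu _)]
  have hVlt : ∀ k (hk : k < n), V k = u ⟨k, hk⟩ := by
    intro k hk
    simp [V, Nat.div_eq_of_lt hk, Nat.mod_eq_of_lt hk]
  refine ⟨V, hVP, hVn, ?_, ?_⟩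
  · intro i
    induction i using Nat.strong_induction_on with
    | _ i ih =>
      intro s hs1 hs2
      by_cases hi : i < n
      · by_cases his : i + s < n
        · rw [hVlt i hi, hVlt _ his]
          exact hcr _ _ (by simp [Fin.lt_def]; omega)
        · have e : i + s = (i + s - n) + n := by omega
          have := hcr ⟨i + s - n, by omega⟩ ⟨i, hi⟩ (by simp [Fin.lt_def]; omega)
          rw [← hVlt, ← hVlt] at this
          rw [e, hVn, h3 _ (hVP _)]
          unfold cr at *
          linarith
      · have := ih (i - n) (by omega) s hs1 hs2
        have e1 : i = (i - n) + n := by omega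
        have e2 : i + s = (i - n + s) + n := by omega
        rw [e2, hVn]
        have e3 : V i = σ (V (i - n)) := by
          conv_lhs => rw [e1]
          exact hVn _
        rw [e3, h3 _ (hVP _), h3 _ (hVP _)]
        unfold cr at *
        linarith
  · intro p hp
    obtain ⟨i, hi | hi⟩ := hsurj p hp
    · exact ⟨i, by omega, by rw [hVlt i i.2, hi]⟩
    · exact ⟨i + n, by omega, by rw [hVn, hVlt i i.2, hi]⟩

end Halving
open Halving in
/-- A `2n`-point set in general position in which every point lies on exactly one halving
line has exactly `n` halving lines and admits an `h`-labeling `v_0, …, v_{2n-1}` such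
that the halving line through `v_i` and `v_{i+n}` splits the remaining points into
`{v_{i+1}, …, v_{i+n-1}}` and `{v_{i+n+1}, …, v_{i+2n-1}}`. -/
theorem stmt12 (P : Finset (ℝ × ℝ)) (n : ℕ) (hn : 2 ≤ n)
    (hgp : GenPos P) (hcard : P.card = 2*n)
    (hone : ∀ p ∈ P, Set.ncard {q : ℝ × ℝ | q ∈ P ∧ IsHalving P n p q} = 1) :
    halvingCount P n = n ∧
    ∃ v : Fin (2*n) → ℝ × ℝ, IsHLabeling P n v ∧
      ∀ i : Fin (2*n),
        ((↑(negSide P (v i) (v (i + ⟨n % (2*n), Nat.mod_lt _ (by omega)⟩))) : Set (ℝ × ℝ)) =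
            v '' {t | ∃ s : ℕ, 1 ≤ s ∧ s ≤ n - 1 ∧ t = i + ⟨s % (2*n), Nat.mod_lt _ (by omega)⟩} ∧
          (↑(posSide P (v i) (v (i + ⟨n % (2*n), Nat.mod_lt _ (by omega)⟩))) : Set (ℝ × ℝ)) =
            v '' {t | ∃ s : ℕ, n + 1 ≤ s ∧ s ≤ 2*n - 1 ∧ t = i + ⟨s % (2*n), Nat.mod_lt _ (by omega)⟩}) ∨
        ((↑(negSide P (v i) (v (i + ⟨n % (2*n), Nat.mod_lt _ (by omega)⟩))) : Set (ℝ × ℝ)) =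
            v '' {t | ∃ s : ℕ, n + 1 ≤ s ∧ s ≤ 2*n - 1 ∧ t = i + ⟨s % (2*n), Nat.mod_lt _ (by omega)⟩} ∧
          (↑(posSide P (v i) (v (i + ⟨n % (2*n), Nat.mod_lt _ (by omega)⟩))) : Set (ℝ × ℝ)) =
            v '' {t | ∃ s : ℕ, 1 ≤ s ∧ s ≤ n - 1 ∧ t = i + ⟨s % (2*n), Nat.mod_lt _ (by omega)⟩}) := by
  classical
  have hex : ∀ p ∈ P, ∃ q, {q : ℝ × ℝ | q ∈ P ∧ IsHalving P n p q} = {q} :=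
    fun p hp => Set.ncard_eq_one.mp (hone p hp)
  choose! σ hσ using hex
  have h1 : ∀ p ∈ P, σ p ∈ P ∧ IsHalving P n p (σ p) := by
    intro p hp
    have : σ p ∈ {q : ℝ × ℝ | q ∈ P ∧ IsHalving P n p q} := by rw [hσ p hp]; rfl
    exact this
  have h2 : ∀ p ∈ P, ∀ q ∈ P, IsHalving P n p q → q = σ p := by
    intro p hp q hq h
    have : q ∈ {q : ℝ × ℝ | q ∈ P ∧ IsHalving P n p q} := ⟨hq, h⟩
    rw [hσ p hp] at this
    exact this
  have h3 : ∀ p ∈ P, σ (σ p) = p := by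
    intro p hp
    exact (h2 (σ p) (h1 p hp).1 p hp (isHalving_symm _ _ _ _ (h1 p hp).2)).symm
  obtain ⟨V, hVP, hVn, hVcr, hVs⟩ := exists_seq P n hn hgp hcard σ h1 h2 h3
  have hV2n : ∀ k, V (k + 2*n) = V k := by
    intro k
    rw [two_mul, ← add_assoc, hVn, hVn, h3 _ (hVP k)]
  have hVmod : ∀ k, V (k % (2*n)) = V k := by
    intro k
    have hp : Function.Periodic V (2*n) := hV2n
    exact hp.map_mod_nat k
  -- distinctness
  have hVne : ∀ i s, 1 ≤ s → s ≤ n - 1 → V (i+s) ≠ V i ∧ V (i+s) ≠ σ (V i) := by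
    intro i s hs1 hs2
    have := hVcr i s hs1 hs2
    constructor
    · intro h; rw [h] at this; unfold cr at this; linarith
    · intro h; rw [h, h3 _ (hVP i)] at this; unfold cr at this; linarith
  have hside1 : ∀ i s, 1 ≤ s → s ≤ n - 1 → sideVal (V i) (V (i+n)) (V (i+s)) < 0 := by
    intro i s hs1 hs2
    rw [hVn]
    obtain ⟨g1, g2⟩ := hVne i s hs1 hs2
    rcases side_cr hn hgp hcard h1 h2 h3 (V i) (V (i+s)) (hVP _) (hVP _) g1 g2 with g | g
    · exact g.2
    · linarith [g.1, hVcr i s hs1 hs2]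
  have hside2 : ∀ i s, n + 1 ≤ s → s ≤ 2*n - 1 → 0 < sideVal (V i) (V (i+n)) (V (i+s)) := by
    intro i s hs1 hs2
    have h := hside1 (i+n) (s - n) (by omega) (by omega)
    have e : i + n + (s - n) = i + s := by omega
    rw [e, hVn (i+n), hVn i, h3 _ (hVP i), sideVal_swap] at h
    rw [hVn]
    linarith
  have hVinj : ∀ i j, i < j → j < 2*n → V i ≠ V j := by
    intro i j hij hj h
    obtain ⟨s, rfl⟩ : ∃ s, j = i + s := ⟨j - i, by omega⟩
    rcases lt_trichotomy s n with hs | hs | hs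
    · have := hside1 i s (by omega) (by omega)
      rw [← h, sideVal_left] at this
      exact lt_irrefl _ this
    · rw [hs, hVn] at h
      exact (h1 _ (hVP i)).2.2.2.1 h
    · have := hside2 i s (by omega) (by omega)
      rw [← h, sideVal_left] at this
      exact lt_irrefl _ this
  have hrep : ∀ (i : Fin (2*n)), ∀ p ∈ P, ∃ s < 2*n, p = V (i.val + s) := by
    intro i p hp
    obtain ⟨k, hk, rfl⟩ := hVs p hp
    by_cases h : i.val ≤ k
    · exact ⟨k - i.val, by omega, by congr 1; omega⟩
    · refine ⟨k + 2*n - i.val, by omega, ?_⟩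
      rw [← hV2n k]; congr 1; omega
  have hvadd : ∀ (i : Fin (2*n)) (s : ℕ) (h : s % (2*n) < 2*n),
      V (i + (⟨s % (2*n), h⟩ : Fin (2*n))).val = V (i.val + s) := by
    intro i s h
    rw [Fin.val_add]
    simp only [Nat.add_mod_mod]
    exact hVmod _
  refine ⟨?_, fun i => V i.val, ⟨?_, ?_, ?_⟩, ?_⟩
  · -- counting
    have hset : {e : Sym2 (ℝ × ℝ) | ∃ u v, e = s(u,v) ∧ IsHalving P n u v} =
        ((Finset.range n).image (fun k => s(V k, V (k+n))) : Finset (Sym2 (ℝ × ℝ))) := by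
      ext e
      simp only [Set.mem_setOf_eq, Finset.coe_image, Set.mem_image, Finset.coe_range, Set.mem_Iio]
      constructor
      · rintro ⟨p, q, rfl, hpq⟩
        have hq := h2 p hpq.1 q hpq.2.1 hpq
        obtain ⟨k, hk, rfl⟩ := hVs p hpq.1
        by_cases hkn : k < n
        · exact ⟨k, hkn, by rw [hVn, hq]⟩
        · refine ⟨k - n, by omega, ?_⟩
          have e : k - n + n = k := by omega
          have e2 : V k = σ (V (k - n)) := by rw [← hVn, e]
          rw [e, hq, e2, h3 _ (hVP _)]
          exact Sym2.eq_swap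
      · rintro ⟨k, hk, rfl⟩
        exact ⟨_, _, rfl, by rw [hVn]; exact (h1 _ (hVP k)).2⟩
    unfold halvingCount
    rw [hset, Set.ncard_coe_finset, Finset.card_image_of_injOn, Finset.card_range]
    intro i hi j hj hij
    simp only [Finset.coe_range, Set.mem_Iio] at hi hj
    simp only [Sym2.eq_iff] at hij
    by_contra hne
    rcases hij with h | h
    · rcases lt_or_gt_of_ne hne with g | g
      · exact hVinj i j g (by omega) h.1
      · exact hVinj j i g (by omega) h.1.symm
    · exact hVinj i (j+n) (by omega) (by omega) h.1
  · intro i j hij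
    by_contra hne
    have hne' : i.val ≠ j.val := fun h => hne (Fin.ext h)
    rcases lt_or_gt_of_ne hne' with g | g
    · exact hVinj i j g j.2 hij
    · exact hVinj j i g i.2 hij.symm
  · ext p
    constructor
    · rintro ⟨i, rfl⟩; exact hVP _
    · intro hp
      obtain ⟨k, hk, rfl⟩ := hVs p hp
      exact ⟨⟨k, hk⟩, rfl⟩
  · intro i
    simp only [hvadd, hVn]
    exact (h1 _ (hVP _)).2
  · intro i
    left
    simp only [hvadd]
    constructor
    · ext p
      simp only [negSide, Finset.coe_filter, Set.mem_setOf_eq, Set.mem_image]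
      constructor
      · rintro ⟨hp, hlt⟩
        obtain ⟨s, hs, rfl⟩ := hrep i p hp
        refine ⟨i + ⟨s % (2*n), Nat.mod_lt _ (by omega)⟩, ⟨s, ?_, ?_, rfl⟩, hvadd _ _ _⟩
        · by_contra hc
          have : s = 0 := by omega
          rw [this, add_zero, sideVal_left] at hlt
          exact lt_irrefl _ hlt
        · by_contra hc
          by_cases hsn : s = n
          · rw [hsn, sideVal_right] at hlt
            exact lt_irrefl _ hlt
          · have := hside2 i.val s (by omega) (by omega)
            linarith
      · rintro ⟨t, ⟨s, hs1, hs2, rfl⟩, rfl⟩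
        rw [hvadd]
        exact ⟨hVP _, hside1 _ _ hs1 hs2⟩
    · ext p
      simp only [posSide, Finset.coe_filter, Set.mem_setOf_eq, Set.mem_image]
      constructor
      · rintro ⟨hp, hlt⟩
        obtain ⟨s, hs, rfl⟩ := hrep i p hp
        refine ⟨i + ⟨s % (2*n), Nat.mod_lt _ (by omega)⟩, ⟨s, ?_, by omega, rfl⟩, hvadd _ _ _⟩
        by_contra hc
        by_cases hs0 : s = 0
        · rw [hs0, add_zero, sideVal_left] at hlt
          exact lt_irrefl _ hlt
        by_cases hsn : s = n
        · rw [hsn, sideVal_right] at hlt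
          exact lt_irrefl _ hlt
        have := hside1 i.val s (by omega) (by omega)
        linarith
      · rintro ⟨t, ⟨s, hs1, hs2, rfl⟩, rfl⟩
        rw [hvadd]
        exact ⟨hVP _, hside2 _ _ hs1 hs2⟩
end
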